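/- Let b ∈ L¹_loc(ℝⁿ) be non-negative. Then for every measurable f and every x ∈ ℝⁿ one has the pointwise bound |[M_α, b]f(x)| ≤ M_{b,α} f(x). Consequently, if the Fractional assumptions hold and 0 ≤ b ∈ BMO(ℝⁿ), the commutator [M_α, b] is bounded from L^φ(ℝⁿ) to L^ψ(ℝⁿ). -/

import Mathlib

open MeasureTheory NNReal ENNReal Filter Set

noncomputable section

/-- `ℝⁿ` with the Euclidean structure. -/
abbrev RSp (n : ℕ) := EuclideanSpace ℝ (Fin n)

variable {n : ℕ}

/-- A cube in `ℝⁿ` with sides parallel to the coordinate axes,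
with center `c` and side length `2r`. -/
structure Cube (n : ℕ) where
  c : RSp n
  r : ℝ
  r_pos : 0 < r

/-- The underlying set of a cube. -/
def Cube.set (Q : Cube n) : Set (RSp n) := {y | ∀ i, |y i - Q.c i| ≤ Q.r}

/-- A weak Φ-function on `Ω` (the class `Φ_w(Ω)`). -/
structure IsWeakPhi (Ω : Set (RSp n)) (φ : RSp n → ℝ≥0 → ℝ≥0∞) : Prop where
  meas : ∀ f : RSp n → ℝ≥0, Measurable f →
    AEMeasurable (fun x => φ x (f x)) (volume.restrict Ω)
  mono : ∀ x ∈ Ω, Monotone (φ x)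
  zero : ∀ x ∈ Ω, φ x 0 = 0
  lim_zero : ∀ x ∈ Ω, Tendsto (fun t : ℝ≥0 => φ x t) (nhdsWithin 0 (Set.Ioi 0)) (nhds 0)
  lim_top : ∀ x ∈ Ω, Tendsto (fun t : ℝ≥0 => φ x t) atTop (nhds ∞)
  almost_inc : ∃ L : ℝ≥0, 1 ≤ L ∧ ∀ x ∈ Ω, ∀ s t : ℝ≥0, 0 < s → s < t →
    φ x s / (s : ℝ≥0∞) ≤ (L : ℝ≥0∞) * (φ x t / (t : ℝ≥0∞))

/-- A convex Φ-function on `Ω` (the class `Φ_c(Ω)`): a weak Φ-function which is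
additionally convex and left-continuous in `t` for a.e. `x ∈ Ω`. -/
structure IsConvexPhi (Ω : Set (RSp n)) (φ : RSp n → ℝ≥0 → ℝ≥0∞)
    extends IsWeakPhi Ω φ : Prop where
  convex : ∀ᵐ x ∂(volume.restrict Ω), ∀ s t a b : ℝ≥0, a + b = 1 →
    φ x (a * s + b * t) ≤ (a : ℝ≥0∞) * φ x s + (b : ℝ≥0∞) * φ x t
  left_cont : ∀ᵐ x ∂(volume.restrict Ω), ∀ t : ℝ≥0,
    Tendsto (φ x) (nhdsWithin t (Set.Iio t)) (nhds (φ x t))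

/-- A strong Φ-function on `Ω` (the class `Φ_s(Ω)`): a weak Φ-function which is
additionally convex and continuous into `[0,∞]` for a.e. `x ∈ Ω`. -/
structure IsStrongPhi (Ω : Set (RSp n)) (φ : RSp n → ℝ≥0 → ℝ≥0∞)
    extends IsWeakPhi Ω φ : Prop where
  convex : ∀ᵐ x ∂(volume.restrict Ω), ∀ s t a b : ℝ≥0, a + b = 1 →
    φ x (a * s + b * t) ≤ (a : ℝ≥0∞) * φ x s + (b : ℝ≥0∞) * φ x t
  cont : ∀ᵐ x ∂(volume.restrict Ω), Continuous (φ x)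

/-- The generalized (left-)inverse `φ⁻¹(x,t) = inf {τ ≥ 0 : φ(x,τ) ≥ t}`. -/
def phiInv (φ : RSp n → ℝ≥0 → ℝ≥0∞) (x : RSp n) (t : ℝ≥0∞) : ℝ≥0∞ :=
  sInf ((fun s : ℝ≥0 => (s : ℝ≥0∞)) '' {s : ℝ≥0 | t ≤ φ x s})

/-- The condition `(aInc)_p` on `Ω`: `t ↦ φ(x,t)/t^p` is almost increasing, uniformly in `x`. -/
def AInc (p : ℝ) (Ω : Set (RSp n)) (φ : RSp n → ℝ≥0 → ℝ≥0∞) : Prop :=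
  ∃ L : ℝ≥0, 1 ≤ L ∧ ∀ x ∈ Ω, ∀ s t : ℝ≥0, 0 < s → s < t →
    φ x s / (s : ℝ≥0∞) ^ p ≤ (L : ℝ≥0∞) * (φ x t / (t : ℝ≥0∞) ^ p)

/-- The condition `(aDec)_q` on `Ω`: `t ↦ φ(x,t)/t^q` is almost decreasing, uniformly in `x`. -/
def ADec (q : ℝ) (Ω : Set (RSp n)) (φ : RSp n → ℝ≥0 → ℝ≥0∞) : Prop :=
  ∃ L : ℝ≥0, 1 ≤ L ∧ ∀ x ∈ Ω, ∀ s t : ℝ≥0, 0 < s → s < t →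
    φ x t / (t : ℝ≥0∞) ^ q ≤ (L : ℝ≥0∞) * (φ x s / (s : ℝ≥0∞) ^ q)

/-- The condition `(A0)` on `Ω`: `β ≤ φ⁻¹(x,1) ≤ 1/β` for a.e. `x ∈ Ω`. -/
def A0 (Ω : Set (RSp n)) (φ : RSp n → ℝ≥0 → ℝ≥0∞) : Prop :=
  ∃ β : ℝ≥0, 0 < β ∧ β ≤ 1 ∧ ∀ᵐ x ∂(volume.restrict Ω),
    (β : ℝ≥0∞) ≤ phiInv φ x 1 ∧ phiInv φ x 1 ≤ (β : ℝ≥0∞)⁻¹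

/-- The condition `(A1)` (on all of `ℝⁿ`). -/
def A1 (φ : RSp n → ℝ≥0 → ℝ≥0∞) : Prop :=
  ∃ β : ℝ≥0, 0 < β ∧ β < 1 ∧ ∀ Q : Cube n, volume Q.set ≤ 1 →
    ∀ᵐ x ∂(volume.restrict Q.set), ∀ᵐ y ∂(volume.restrict Q.set),
      ∀ t : ℝ≥0∞, 1 ≤ t → t ≤ (volume Q.set)⁻¹ →
        (β : ℝ≥0∞) * phiInv φ x t ≤ phiInv φ y t

/-- The condition `(A2)` (on all of `ℝⁿ`). -/
def A2 (φ : RSp n → ℝ≥0 → ℝ≥0∞) : Prop :=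
  ∃ φi : ℝ≥0 → ℝ≥0∞, IsWeakPhi Set.univ (fun _ : RSp n => φi) ∧
  ∃ h : RSp n → ℝ≥0∞, (∫⁻ x, h x) < ∞ ∧ (∃ M : ℝ≥0, ∀ᵐ x ∂(volume : Measure (RSp n)), h x ≤ M) ∧
  ∃ β : ℝ≥0, 0 < β ∧ β ≤ 1 ∧ ∃ s : ℝ≥0, 0 < s ∧
    ∀ᵐ x ∂(volume : Measure (RSp n)), ∀ t : ℝ≥0,
      (φi t ≤ (s : ℝ≥0∞) → φ x (β * t) ≤ φi t + h x) ∧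
      (φ x t ≤ (s : ℝ≥0∞) → φi (β * t) ≤ φ x t + h x)

/-- Membership in the generalized Orlicz space `L^φ(Ω)`. -/
def MemOrlicz (φ : RSp n → ℝ≥0 → ℝ≥0∞) (Ω : Set (RSp n)) (f : RSp n → ℝ) : Prop :=
  AEMeasurable f (volume.restrict Ω) ∧
  ∃ lam : ℝ≥0, 0 < lam ∧ (∫⁻ x in Ω, φ x (lam * ‖f x‖₊) ∂volume) < ∞

/-- The Luxemburg (quasi)norm of `L^φ(Ω)`. -/
def orliczNorm (φ : RSp n → ℝ≥0 → ℝ≥0∞) (Ω : Set (RSp n)) (f : RSp n → ℝ) : ℝ≥0∞ :=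
  sInf ((fun lam : ℝ≥0 => (lam : ℝ≥0∞)) ''
    {lam : ℝ≥0 | 0 < lam ∧ (∫⁻ x in Ω, φ x (‖f x‖₊ / lam) ∂volume) ≤ 1})

/-- The canonical extension of `φ(x,·)` to `[0,∞]`. -/
def phiE (φ : RSp n → ℝ≥0 → ℝ≥0∞) (x : RSp n) (t : ℝ≥0∞) : ℝ≥0∞ :=
  ⨆ (s : ℝ≥0) (_ : (s : ℝ≥0∞) ≤ t), φ x s

/-- The Luxemburg (quasi)norm for `[0,∞]`-valued functions. -/
def orliczNormE (φ : RSp n → ℝ≥0 → ℝ≥0∞) (Ω : Set (RSp n)) (g : RSp n → ℝ≥0∞) : ℝ≥0∞ :=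
  sInf ((fun lam : ℝ≥0 => (lam : ℝ≥0∞)) ''
    {lam : ℝ≥0 | 0 < lam ∧ (∫⁻ x in Ω, phiE φ x (g x / (lam : ℝ≥0∞)) ∂volume) ≤ 1})

/-- The average `b_Q` of `b` over the cube `Q`. -/
def cubeAvg (Q : Cube n) (b : RSp n → ℝ) : ℝ := ⨍ x in Q.set, b x

/-- The BMO seminorm `‖b‖_*`. -/
def bmoNorm (b : RSp n → ℝ) : ℝ≥0∞ :=
  ⨆ Q : Cube n, (volume Q.set)⁻¹ * ∫⁻ x in Q.set, ‖b x - cubeAvg Q b‖₊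

/-- `b ∈ BMO(ℝⁿ)`. -/
def IsBMO (b : RSp n → ℝ) : Prop := LocallyIntegrable b volume ∧ bmoNorm b < ∞

/-- The non-centred Hardy–Littlewood maximal function (over axes-parallel cubes). -/
def maximal (f : RSp n → ℝ) (x : RSp n) : ℝ≥0∞ :=
  ⨆ (Q : Cube n) (_ : x ∈ Q.set), (volume Q.set)⁻¹ * ∫⁻ y in Q.set, (‖f y‖₊ : ℝ≥0∞) ∂volume

/-- The fractional maximal function `M_α`. -/
def fracMaximal (α : ℝ) (f : RSp n → ℝ) (x : RSp n) : ℝ≥0∞ :=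
  ⨆ (Q : Cube n) (_ : x ∈ Q.set),
    volume Q.set ^ (α / (n : ℝ) - 1) * ∫⁻ y in Q.set, (‖f y‖₊ : ℝ≥0∞) ∂volume

/-- The maximal function restricted to subcubes of `Q₀`. -/
def restMaximal (Q₀ : Cube n) (f : RSp n → ℝ) (x : RSp n) : ℝ≥0∞ :=
  ⨆ (Q : Cube n) (_ : x ∈ Q.set) (_ : Q.set ⊆ Q₀.set),
    (volume Q.set)⁻¹ * ∫⁻ y in Q.set, (‖f y‖₊ : ℝ≥0∞) ∂volume

/-- The fractional maximal function restricted to subcubes of `Q₀`. -/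
def restFracMaximal (α : ℝ) (Q₀ : Cube n) (f : RSp n → ℝ) (x : RSp n) : ℝ≥0∞ :=
  ⨆ (Q : Cube n) (_ : x ∈ Q.set) (_ : Q.set ⊆ Q₀.set),
    volume Q.set ^ (α / (n : ℝ) - 1) * ∫⁻ y in Q.set, (‖f y‖₊ : ℝ≥0∞) ∂volume

/-- The sharp maximal function `M♯`. -/
def sharpMaximal (f : RSp n → ℝ) (x : RSp n) : ℝ≥0∞ :=
  ⨆ (Q : Cube n) (_ : x ∈ Q.set),
    (volume Q.set)⁻¹ * ∫⁻ y in Q.set, (‖f y - ⨍ z in Q.set, f z‖₊ : ℝ≥0∞) ∂volume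

/-- The maximal commutator `M_b`. -/
def maximalComm (b f : RSp n → ℝ) (x : RSp n) : ℝ≥0∞ :=
  ⨆ (Q : Cube n) (_ : x ∈ Q.set),
    (volume Q.set)⁻¹ * ∫⁻ y in Q.set, (‖b x - b y‖₊ : ℝ≥0∞) * (‖f y‖₊ : ℝ≥0∞) ∂volume

/-- The fractional maximal commutator `M_{b,α}`. -/
def fracMaximalComm (α : ℝ) (b f : RSp n → ℝ) (x : RSp n) : ℝ≥0∞ :=
  ⨆ (Q : Cube n) (_ : x ∈ Q.set),
    volume Q.set ^ (α / (n : ℝ) - 1) *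
      ∫⁻ y in Q.set, (‖b x - b y‖₊ : ℝ≥0∞) * (‖f y‖₊ : ℝ≥0∞) ∂volume

/-- The commutator `[M,b]f = M(bf) − b·Mf` of the maximal operator. -/
def maximalCommutator (b f : RSp n → ℝ) (x : RSp n) : ℝ :=
  (maximal (fun y => b y * f y) x).toReal - b x * (maximal f x).toReal

/-- The commutator `[M_α,b]f = M_α(bf) − b·M_α f` of the fractional maximal operator. -/
def fracMaximalCommutator (α : ℝ) (b f : RSp n → ℝ) (x : RSp n) : ℝ :=
  (fracMaximal α (fun y => b y * f y) x).toReal - b x * (fracMaximal α f x).toReal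

/-- The Riesz potential `I_α f`. -/
def riesz (α : ℝ) (f : RSp n → ℝ) (x : RSp n) : ℝ :=
  ∫ y, f y / dist x y ^ ((n : ℝ) - α)

/-- The commutator `[I_α, b]f = I_α(bf) − b·I_α f` of the Riesz potential. -/
def rieszCommutator (α : ℝ) (b f : RSp n → ℝ) (x : RSp n) : ℝ :=
  riesz α (fun y => b y * f y) x - b x * riesz α f x

/-- The operator `I_{b,α} f(x) = ∫ |b(x)−b(y)|·|x−y|^{α−n} f(y) dy`. -/
def rieszAbs (α : ℝ) (b f : RSp n → ℝ) (x : RSp n) : ℝ :=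
  ∫ y, |b x - b y| / dist x y ^ ((n : ℝ) - α) * f y

/-- Equivalence `φ ≃ ψ` of Φ-functions. -/
def PhiEquiv (φ ψ : RSp n → ℝ≥0 → ℝ≥0∞) : Prop :=
  ∃ L : ℝ≥0, 1 ≤ L ∧ ∀ x : RSp n, ∀ t : ℝ≥0, ψ x (t / L) ≤ φ x t ∧ φ x t ≤ ψ x (L * t)

/-- Weak equivalence `φ ∼ ψ` of Φ-functions. -/
def PhiWeakEquiv (φ ψ : RSp n → ℝ≥0 → ℝ≥0∞) : Prop :=
  ∃ L : ℝ≥0, 1 ≤ L ∧ ∃ h : RSp n → ℝ≥0∞, (∫⁻ x, h x) < ∞ ∧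
    ∀ᵐ x ∂(volume : Measure (RSp n)), ∀ t : ℝ≥0,
      ψ x t ≤ φ x (L * t) + h x ∧ φ x t ≤ ψ x (L * t) + h x

/-- The relation `φ⁻¹(x,t) ≈ t^{α/n}·ψ⁻¹(x,t)` with constants independent of `x` and `t > 0`. -/
def FracInvRel (α : ℝ) (φ ψ : RSp n → ℝ≥0 → ℝ≥0∞) : Prop :=
  ∃ c₁ c₂ : ℝ≥0, 0 < c₁ ∧ ∀ x : RSp n, ∀ t : ℝ≥0, 0 < t →
    (c₁ : ℝ≥0∞) * ((t : ℝ≥0∞) ^ (α / (n : ℝ)) * phiInv ψ x t) ≤ phiInv φ x t ∧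
    phiInv φ x t ≤ (c₂ : ℝ≥0∞) * ((t : ℝ≥0∞) ^ (α / (n : ℝ)) * phiInv ψ x t)

/-- The characteristic function of a cube, as a real-valued function. -/
def cubeIndicator (Q : Cube n) : RSp n → ℝ := Q.set.indicator 1

end

/-!
Since `b ≥ 0`, the difference `M_α(bf)(x) - b(x) M_α f(x)` is a difference of suprema whose
entries for a common cube differ by at most the fractional average of `|b(x) - b(y)| |f(y)|`; so
everything reduces to bounding `M_{b,α}`.

On a cube `Q ∋ x`, `|b(x) - b(y)|` is at most `ε⁻¹ exp(ε |b(x) - b_Q|) exp(ε |b(y) - b_Q|)`. The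
John–Nirenberg inequality and Hölder's inequality absorb the factor in `y`. If `∫ φ(y, |f|) ≤ 1`,
the relation `φ⁻¹ ≈ t^{α/n} ψ⁻¹`, with (A0)–(A2) to compare the inverses at different points of
`Q`, turns what remains into `ψ⁻¹(x, S(x))`: the gap `α/n < r` leaves room for the factor in `x`
inside `S`. Here `S` is, up to an integrable error, a power `P > 1` of averages carrying the weight
`exp(δ |b(x) - b_Q|)`. As `exp(η b)` is a doubling weight for small `|η|`, the corresponding
weighted maximal functions are bounded on `L^P`, so `∫ S` is bounded uniformly in `f`, which is a
modular bound for `M_{b,α} f` with respect to `ψ`.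
-/

open Metric

/-! ### Maximal functions of doubling measures -/

section Doubling

variable {E ι : Type*} [PseudoMetricSpace E]

theorem exists_countable_disjoint_subfamily_covering_five_mul
    [TopologicalSpace.SeparableSpace E] {c : ι → E} {r : ι → ℝ} {t : Set ι}
    (hr : ∀ i ∈ t, 0 < r i) {R : ℝ} (hR : ∀ i ∈ t, r i ≤ R) :
    ∃ u ⊆ t, u.Countable ∧ (u.PairwiseDisjoint fun i => closedBall (c i) (r i)) ∧
      ⋃ i ∈ t, closedBall (c i) (r i) ⊆ ⋃ i ∈ u, closedBall (c i) (5 * r i) := by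
  obtain ⟨u, hut, hdisj, hcover⟩ :=
    Vitali.exists_disjoint_subfamily_covering_enlargement_closedBall t c r R hR 5 (by norm_num)
  refine ⟨u, hut, ?_, hdisj, iUnion₂_subset fun i hi => ?_⟩
  · refine hdisj.countable_of_nonempty_interior fun i hi => ⟨c i, ?_⟩
    exact ball_subset_interior_closedBall (mem_ball_self (hr i (hut hi)))
  · obtain ⟨j, hj, hij⟩ := hcover i hi
    exact hij.trans (subset_biUnion_of_mem (u := fun i => closedBall (c i) (5 * r i)) hj)

variable [MeasurableSpace E]

/-- A measure which is finite on closed balls and doubling with constant `D`. The radius is enlarged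
by the factor `5` of the Vitali covering lemma instead of the customary `2`. -/
structure IsDoublingWith (D : ℝ≥0) (μ : Measure E) : Prop where
  measure_closedBall_ne_top (x : E) (r : ℝ) : μ (closedBall x r) ≠ ∞
  measure_closedBall_five_mul_le (x : E) {r : ℝ} (hr : 0 < r) :
    μ (closedBall x (5 * r)) ≤ D * μ (closedBall x r)

/-- The maximal function of `F` over the balls `closedBall (c i) (r i)`. -/
noncomputable def ballMaximal (μ : Measure E) (c : ι → E) (r : ι → ℝ) (F : E → ℝ≥0∞) (x : E) :
    ℝ≥0∞ :=
  ⨆ i, (closedBall (c i) (r i)).indicator (fun _ => ⨍⁻ y in closedBall (c i) (r i), F y ∂μ) x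

variable {D : ℝ≥0} {μ : Measure E} {c : ι → E} {r : ι → ℝ} {F : E → ℝ≥0∞}

theorem laverage_le_ballMaximal {i : ι} {x : E} (hx : x ∈ closedBall (c i) (r i)) :
    ⨍⁻ y in closedBall (c i) (r i), F y ∂μ ≤ ballMaximal μ c r F x :=
  le_iSup_of_le i (by rw [indicator_of_mem hx])

namespace IsDoublingWith

theorem isLocallyFiniteMeasure (hμ : IsDoublingWith D μ) : IsLocallyFiniteMeasure μ :=
  ⟨fun x => ⟨closedBall x 1, closedBall_mem_nhds x one_pos,
    (hμ.measure_closedBall_ne_top x 1).lt_top⟩⟩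

theorem isUnifLocDoublingMeasure (hμ : IsDoublingWith D μ) : IsUnifLocDoublingMeasure μ := by
  refine ⟨⟨D, ?_⟩⟩
  filter_upwards [self_mem_nhdsWithin] with ε (hε : 0 < ε) x
  exact (measure_mono (closedBall_subset_closedBall (by linarith))).trans
    (hμ.measure_closedBall_five_mul_le x hε)

variable [BorelSpace E] [TopologicalSpace.SeparableSpace E]

theorem mul_measure_biUnion_closedBall_le_of_radius_le (hμ : IsDoublingWith D μ) {t : Set ι}
    (hr : ∀ i ∈ t, 0 < r i) {R : ℝ} (hR : ∀ i ∈ t, r i ≤ R) {l : ℝ≥0∞}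
    (hl : ∀ i ∈ t, l * μ (closedBall (c i) (r i)) ≤ ∫⁻ y in closedBall (c i) (r i), F y ∂μ) :
    l * μ (⋃ i ∈ t, closedBall (c i) (r i)) ≤ D * ∫⁻ y, F y ∂μ := by
  obtain ⟨u, hut, hu, hdisj, hcover⟩ :=
    exists_countable_disjoint_subfamily_covering_five_mul (c := c) hr hR
  calc l * μ (⋃ i ∈ t, closedBall (c i) (r i))
      ≤ l * ∑' i : u, μ (closedBall (c i) (5 * r i)) := by
        gcongr
        exact (measure_mono hcover).trans (measure_biUnion_le μ hu _)
    _ ≤ l * ∑' i : u, D * μ (closedBall (c i) (r i)) := by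
        gcongr with i
        exact hμ.measure_closedBall_five_mul_le _ (hr i (hut i.2))
    _ = D * ∑' i : u, l * μ (closedBall (c i) (r i)) := by
        rw [ENNReal.tsum_mul_left, ENNReal.tsum_mul_left, mul_left_comm]
    _ ≤ D * ∑' i : u, ∫⁻ y in closedBall (c i) (r i), F y ∂μ := by
        gcongr with i
        exact hl i (hut i.2)
    _ = D * ∫⁻ y in ⋃ i ∈ u, closedBall (c i) (r i), F y ∂μ := by
        rw [lintegral_biUnion hu (fun i _ => isClosed_closedBall.measurableSet) hdisj]
    _ ≤ D * ∫⁻ y, F y ∂μ := by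
        exact mul_le_mul_right (setLIntegral_le_lintegral _ _) _

theorem mul_measure_biUnion_closedBall_le (hμ : IsDoublingWith D μ) {t : Set ι}
    (hr : ∀ i ∈ t, 0 < r i) {l : ℝ≥0∞}
    (hl : ∀ i ∈ t, l * μ (closedBall (c i) (r i)) ≤ ∫⁻ y in closedBall (c i) (r i), F y ∂μ) :
    l * μ (⋃ i ∈ t, closedBall (c i) (r i)) ≤ D * ∫⁻ y, F y ∂μ := by
  have hunion : ⋃ i ∈ t, closedBall (c i) (r i) =
      ⋃ N : ℕ, ⋃ i ∈ {i ∈ t | r i ≤ N}, closedBall (c i) (r i) := by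
    refine Subset.antisymm (iUnion₂_subset fun i hi => ?_) (iUnion_subset fun N =>
      biUnion_subset_biUnion_left fun i hi => hi.1)
    obtain ⟨N, hN⟩ := exists_nat_ge (r i)
    exact subset_iUnion_of_subset N (subset_iUnion₂_of_subset i ⟨hi, hN⟩ Subset.rfl)
  have hmono : Monotone fun N : ℕ => ⋃ i ∈ {i ∈ t | r i ≤ N}, closedBall (c i) (r i) :=
    fun N M hNM => biUnion_subset_biUnion_left fun i hi =>
      ⟨hi.1, hi.2.trans (by exact_mod_cast hNM)⟩
  rw [hunion, hmono.measure_iUnion, ENNReal.mul_iSup]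
  exact iSup_le fun N => hμ.mul_measure_biUnion_closedBall_le_of_radius_le
    (fun i hi => hr i hi.1) (fun i hi => hi.2) (fun i hi => hl i hi.1)

/-- The part of `F` below the level `l` contributes at most `l` to every average, so it can be
removed at the cost of the factor `2`. -/
theorem mul_measure_lt_ballMaximal_le (hμ : IsDoublingWith D μ) (hr : ∀ i, 0 < r i)
    (hF : Measurable F) {l : ℝ≥0∞} (hl : l ≠ ∞) :
    l * μ {x | 2 * l < ballMaximal μ c r F x} ≤ D * ∫⁻ y in {y | l < F y}, F y ∂μ := by
  have hlevel : MeasurableSet {y | l < F y} := measurableSet_lt measurable_const hF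
  set G : E → ℝ≥0∞ := {y | l < F y}.indicator F
  have hFG (y : E) : F y ≤ G y + l := by
    by_cases hy : l < F y
    · exact (indicator_of_mem (s := {y | l < F y}) hy F).ge.trans le_self_add
    · exact (not_lt.1 hy).trans le_add_self
  set t : Set ι :=
    {i | l * μ (closedBall (c i) (r i)) ≤ ∫⁻ y in closedBall (c i) (r i), G y ∂μ}
  rw [← lintegral_indicator hlevel]
  refine le_trans (mul_le_mul_right (measure_mono fun x hx => ?_) l)
    (hμ.mul_measure_biUnion_closedBall_le (t := t) (fun i _ => hr i) fun i hi => hi)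
  simp only [mem_ofPred_eq, ballMaximal, lt_iSup_iff] at hx
  obtain ⟨i, hi⟩ := hx
  have hxi : x ∈ closedBall (c i) (r i) := by
    by_contra hxi
    simp [hxi] at hi
  refine mem_iUnion₂.2 ⟨i, ?_, hxi⟩
  rw [indicator_of_mem hxi, setLAverage_eq] at hi
  have hball : l * μ (closedBall (c i) (r i)) ≠ ∞ :=
    ENNReal.mul_ne_top hl (hμ.measure_closedBall_ne_top _ _)
  refine (ENNReal.add_le_add_iff_right hball).1 ?_
  calc l * μ (closedBall (c i) (r i)) + l * μ (closedBall (c i) (r i))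
      = 2 * l * μ (closedBall (c i) (r i)) := by ring
    _ ≤ ∫⁻ y in closedBall (c i) (r i), F y ∂μ :=
        (mul_le_mul_left hi.le _).trans ((mul_comm _ _).trans_le ENNReal.mul_div_le)
    _ ≤ ∫⁻ y in closedBall (c i) (r i), (G y + l) ∂μ := lintegral_mono hFG
    _ = _ := by rw [lintegral_add_right _ measurable_const, setLIntegral_const]

end IsDoublingWith

end Doubling

section StrongType

theorem lintegral_Ioi_rpow_eq_top (s : ℝ) :
    ∫⁻ t in Ioi (0 : ℝ), ENNReal.ofReal (t ^ s) = ∞ := by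
  by_contra h
  refine not_integrableOn_Ioi_rpow s ⟨by fun_prop, ?_⟩
  rw [hasFiniteIntegral_iff_norm]
  refine (lt_of_le_of_lt (le_of_eq ?_) (Ne.lt_top h))
  refine setLIntegral_congr_fun measurableSet_Ioi fun t (ht : 0 < t) => ?_
  simp [Real.abs_rpow_of_nonneg ht.le, abs_of_pos ht]

theorem lintegral_rpow_eq_lintegral_measure_lt {X : Type*} [MeasurableSpace X] (μ : Measure X)
    {g : X → ℝ≥0∞} (hg : Measurable g) {p : ℝ} (hp : 0 < p) :
    ∫⁻ x, g x ^ p ∂μ = ENNReal.ofReal p *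
      ∫⁻ t in Ioi (0 : ℝ), μ {x | ENNReal.ofReal t < g x} * ENNReal.ofReal (t ^ (p - 1)) := by
  by_cases hfin : μ {x | g x = ∞} = 0
  · have hfin' : ∀ᵐ x ∂μ, g x ≠ ∞ := by simpa [ae_iff] using hfin
    have hcake := lintegral_rpow_eq_lintegral_meas_lt_mul μ
      (Eventually.of_forall fun x => ENNReal.toReal_nonneg) hg.ennreal_toReal.aemeasurable hp
    rw [← setLIntegral_congr_fun (f := fun t => μ {x | t < (g x).toReal} * _) measurableSet_Ioi,
      ← hcake]
    · refine lintegral_congr_ae ?_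
      filter_upwards [hfin'] with x hx
      rw [← ENNReal.ofReal_rpow_of_nonneg ENNReal.toReal_nonneg hp.le, ENNReal.ofReal_toReal hx]
    · intro t ht
      refine congrArg (· * ENNReal.ofReal (t ^ (p - 1))) (measure_congr ?_)
      filter_upwards [hfin'] with x hx
      exact propext (ENNReal.ofReal_lt_iff_lt_toReal (le_of_lt ht) hx).symm
  · have hlhs : ∫⁻ x, g x ^ p ∂μ = ∞ := by
      refine lintegral_eq_top_of_measure_eq_top_ne_zero (hg.pow_const p).aemeasurable ?_
      simpa [ENNReal.rpow_eq_top_iff, hp, hp.not_gt] using hfin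
    have hrhs : ∫⁻ t in Ioi (0 : ℝ), μ {x | g x = ∞} * ENNReal.ofReal (t ^ (p - 1)) = ∞ := by
      rw [lintegral_const_mul _ (by fun_prop), lintegral_Ioi_rpow_eq_top,
        ENNReal.mul_top hfin]
    rw [hlhs, eq_comm, ENNReal.mul_eq_top]
    refine Or.inl ⟨by simpa using hp, top_le_iff.1 (hrhs.ge.trans (lintegral_mono fun t => ?_))⟩
    gcongr with x
    rintro hx
    simp [hx]

variable {E ι : Type*} [PseudoMetricSpace E] [MeasurableSpace E] [BorelSpace E]
  {D : ℝ≥0} {μ : Measure E} {c : ι → E} {r : ι → ℝ} {F : E → ℝ≥0∞}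

theorem measurable_ballMaximal [Countable ι] : Measurable (ballMaximal μ c r F) :=
  Measurable.iSup fun _ => measurable_const.indicator isClosed_closedBall.measurableSet

variable [TopologicalSpace.SeparableSpace E]

theorem IsDoublingWith.measure_lt_ballMaximal_div_two_mul_rpow_le (hμ : IsDoublingWith D μ)
    (hr : ∀ i, 0 < r i) (hF : Measurable F) {l : ℝ} (hl : 0 < l) (s : ℝ) :
    μ {x | ENNReal.ofReal l < ballMaximal μ c r F x / 2} * ENNReal.ofReal (l ^ s) ≤
      D * (μ.withDensity F {x | ENNReal.ofReal l < F x} * ENNReal.ofReal (l ^ (s - 1))) := by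
  have hsplit : ENNReal.ofReal (l ^ s) = ENNReal.ofReal l * ENNReal.ofReal (l ^ (s - 1)) := by
    rw [← ENNReal.ofReal_mul hl.le, Real.rpow_sub_one hl.ne', mul_div_cancel₀ _ hl.ne']
  have hset : {x | ENNReal.ofReal l < ballMaximal μ c r F x / 2} =
      {x | 2 * ENNReal.ofReal l < ballMaximal μ c r F x} := by
    ext x
    simp [ENNReal.lt_div_iff_mul_lt, mul_comm]
  rw [withDensity_apply _ (measurableSet_lt measurable_const hF), hsplit, hset, ← mul_assoc,
    ← mul_assoc, mul_comm (μ _)]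
  exact mul_le_mul_left (hμ.mul_measure_lt_ballMaximal_le hr hF ENNReal.ofReal_ne_top) _

/-- Both sides are layer-cake integrals: the left one of `ballMaximal / 2` for `μ`, the right one of
`F` for the measure `F dμ`. -/
theorem IsDoublingWith.lintegral_ballMaximal_rpow_le [Countable ι] (hμ : IsDoublingWith D μ)
    (hr : ∀ i, 0 < r i) {P : ℝ} (hP : 1 < P) (hF : Measurable F) :
    ∫⁻ x, ballMaximal μ c r F x ^ P ∂μ ≤
      2 ^ P * (ENNReal.ofReal (P / (P - 1)) * (D * ∫⁻ x, F x ^ P ∂μ)) := by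
  have hP1 : 0 < P - 1 := by linarith
  set N : E → ℝ≥0∞ := fun x => ballMaximal μ c r F x / 2
  have hN : Measurable N := measurable_ballMaximal.div_const 2
  have hMN (x : E) : ballMaximal μ c r F x ^ P = 2 ^ P * N x ^ P := by
    rw [← ENNReal.mul_rpow_of_nonneg _ _ (by linarith), ENNReal.mul_div_cancel (by simp) (by simp)]
  simp only [hMN]
  rw [lintegral_const_mul _ (hN.pow_const P)]
  gcongr
  calc ∫⁻ x, N x ^ P ∂μ
      ≤ ENNReal.ofReal P * ∫⁻ l in Ioi (0 : ℝ),
          D * (μ.withDensity F {x | ENNReal.ofReal l < F x} *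
            ENNReal.ofReal (l ^ (P - 1 - 1))) := by
        rw [lintegral_rpow_eq_lintegral_measure_lt μ hN (by linarith)]
        gcongr ENNReal.ofReal P * ?_
        exact setLIntegral_mono' measurableSet_Ioi fun l hl =>
          hμ.measure_lt_ballMaximal_div_two_mul_rpow_le hr hF hl _
    _ = ENNReal.ofReal (P / (P - 1)) * (D * ∫⁻ x, F x ^ (P - 1) ∂μ.withDensity F) := by
        rw [lintegral_rpow_eq_lintegral_measure_lt _ hF hP1,
          lintegral_const_mul' _ _ ENNReal.coe_ne_top, mul_left_comm (D : ℝ≥0∞),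
          ← mul_assoc (ENNReal.ofReal (P / (P - 1))), ← ENNReal.ofReal_mul (by positivity),
          div_mul_cancel₀ _ hP1.ne']
    _ = _ := by
        rw [lintegral_withDensity_eq_lintegral_mul _ hF (hF.pow_const _)]
        simp only [Pi.mul_apply]
        congr! 4 with x
        nth_rw 1 [← ENNReal.rpow_one (F x)]
        rw [← ENNReal.rpow_add_of_nonneg _ _ zero_le_one hP1.le, add_sub_cancel]

end StrongType

/-! ### The John–Nirenberg inequality -/

section Exponential

/-- The exponential of a real number as an element of `[0, ∞]`: the form in which exponential
weights enter Lebesgue integrals. -/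
noncomputable def eexp (u : ℝ) : ℝ≥0∞ := ENNReal.ofReal (Real.exp u)

@[fun_prop]
theorem measurable_eexp : Measurable eexp := by unfold eexp; fun_prop

theorem eexp_zero : eexp 0 = 1 := by simp [eexp]

theorem eexp_ne_zero (u : ℝ) : eexp u ≠ 0 := by simp [eexp, Real.exp_pos]

theorem eexp_ne_top (u : ℝ) : eexp u ≠ ∞ := ENNReal.ofReal_ne_top

theorem eexp_add (u v : ℝ) : eexp (u + v) = eexp u * eexp v := by
  rw [eexp, Real.exp_add, ENNReal.ofReal_mul (Real.exp_nonneg u), eexp, eexp]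

theorem eexp_le_eexp {u v : ℝ} (h : u ≤ v) : eexp u ≤ eexp v :=
  ENNReal.ofReal_le_ofReal (Real.exp_le_exp.2 h)

theorem eexp_rpow (u s : ℝ) : eexp u ^ s = eexp (u * s) := by
  rw [eexp, ENNReal.ofReal_rpow_of_pos (Real.exp_pos u), ← Real.exp_mul, eexp]

theorem eexp_mul_abs_sub_le {ε : ℝ} (hε : 0 ≤ ε) {M : ℝ≥0} (hεM : Real.exp (ε * M) ≤ 2)
    {v w : ℝ} (hvw : ‖v - w‖ₑ ≤ M) (u : ℝ) :
    eexp (ε * |u - w|) ≤ 2 * eexp (ε * |u - v|) := by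
  have hvw' : |v - w| ≤ M := by
    have : ‖v - w‖₊ ≤ M := by exact_mod_cast hvw
    exact_mod_cast this
  have hexp : eexp (ε * M) ≤ 2 := by simpa [eexp] using ENNReal.ofReal_le_ofReal hεM
  calc eexp (ε * |u - w|) ≤ eexp (ε * M + ε * |u - v|) := by
        rw [← mul_add]
        refine eexp_le_eexp (mul_le_mul_of_nonneg_left ?_ hε)
        linarith [abs_sub_le u v w]
    _ = eexp (ε * M) * eexp (ε * |u - v|) := eexp_add _ _
    _ ≤ 2 * eexp (ε * |u - v|) := by gcongr

end Exponential

section JohnNirenberg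

variable {E : Type*} [PseudoMetricSpace E] [MeasurableSpace E]

/-- The mean oscillation of `b` about the numbers `a c r` is at most `K` on every ball
`closedBall c r`. Any choice of `a` works in the John–Nirenberg inequality; the averages of `b` are
the usual one. -/
def MeanOscLE (μ : Measure E) (b : E → ℝ) (a : E → ℝ → ℝ) (K : ℝ≥0) : Prop :=
  ∀ c r, 0 < r → ∫⁻ y in closedBall c r, ‖b y - a c r‖ₑ ∂μ ≤ K * μ (closedBall c r)

/-- The exponential integrability of the oscillation of `b` about the numbers `a c r`, with
exponent `ε` and constant `X`. -/
def ExpOscLE (μ : Measure E) (b : E → ℝ) (a : E → ℝ → ℝ) (ε : ℝ) (X : ℝ≥0∞) : Prop :=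
  ∀ c r, 0 < r → ∫⁻ y in closedBall c r, eexp (ε * |b y - a c r|) ∂μ ≤ X * μ (closedBall c r)

/-- `ρ` is the radius of a Calderón–Zygmund stopping ball for `g` at the height `l`: the average of
`g` over `closedBall x ρ` is at least `l`, and over the five times larger ball it is at most `l`. -/
structure IsStoppingRadius (μ : Measure E) (g : E → ℝ≥0∞) (l : ℝ≥0∞) (x : E) (ρ : ℝ) : Prop where
  pos : 0 < ρ
  mul_measure_le : l * μ (closedBall x ρ) ≤ ∫⁻ y in closedBall x ρ, g y ∂μ
  lintegral_five_mul_le :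
    ∫⁻ y in closedBall x (5 * ρ), g y ∂μ ≤ l * μ (closedBall x (5 * ρ))

/-- The height at which the stopping balls of an oscillation are selected. It is so large that these
balls have small total measure. -/
def stoppingHeight (D K : ℝ≥0) : ℝ≥0 := 4 * D * ((2 + D) * D * K + 1)

variable {D K : ℝ≥0} {μ : Measure E} {b : E → ℝ} {a : E → ℝ → ℝ} {g : E → ℝ≥0∞}

theorem mul_le_stoppingHeight (D K : ℝ≥0) : D * ((2 + D) * D * K) ≤ stoppingHeight D K := by
  calc D * ((2 + D) * D * K) ≤ 4 * (D * ((2 + D) * D * K)) + 4 * D :=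
        (le_mul_of_one_le_left' (by norm_num)).trans le_self_add
    _ = stoppingHeight D K := by rw [stoppingHeight]; ring

theorem four_mul_mul_le_of_stoppingHeight_mul_le {S M : ℝ≥0∞}
    (h : stoppingHeight D K * S ≤ ((2 + D) * D * K : ℝ≥0) * M) : 4 * D * S ≤ M := by
  refine (ENNReal.mul_le_mul_iff_right (a := ((2 + D) * D * K + 1 : ℝ≥0)) (by simp)
    ENNReal.coe_ne_top).1 ?_
  calc _ = stoppingHeight D K * S := by rw [stoppingHeight]; push_cast; ring
    _ ≤ ((2 + D) * D * K + 1 : ℝ≥0) * M := h.trans (by gcongr; exact le_self_add)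

theorem IsDoublingWith.measure_closedBall_le_of_mem (hμ : IsDoublingWith D μ) {c x : E} {r : ℝ}
    (hr : 0 < r) (hx : x ∈ closedBall c r) : μ (closedBall c r) ≤ D * μ (closedBall x r) := by
  refine (measure_mono (closedBall_subset_closedBall' ?_)).trans
    (hμ.measure_closedBall_five_mul_le x hr)
  have := mem_closedBall'.1 hx
  linarith

section

variable [μ.IsOpenPosMeasure]

theorem MeanOscLE.enorm_center_sub_le (h : MeanOscLE μ b a K) (hμ : IsDoublingWith D μ)
    (hb : Measurable b) {c : E} {r : ℝ} (hr : 0 < r) {v : ℝ} {A : ℝ≥0∞}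
    (hA : ∫⁻ y in closedBall c r, ‖b y - v‖ₑ ∂μ ≤ A * μ (closedBall c r)) :
    ‖a c r - v‖ₑ ≤ K + A := by
  refine (ENNReal.mul_le_mul_iff_left (measure_closedBall_pos μ c hr).ne'
    (hμ.measure_closedBall_ne_top c r)).1 ?_
  calc ‖a c r - v‖ₑ * μ (closedBall c r) = ∫⁻ _ in closedBall c r, ‖a c r - v‖ₑ ∂μ :=
        (setLIntegral_const _ _).symm
    _ ≤ ∫⁻ y in closedBall c r, (‖b y - a c r‖ₑ + ‖b y - v‖ₑ) ∂μ := lintegral_mono fun y => by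
        simpa [add_comm] using enorm_sub_le (a := b y - v) (b := b y - a c r)
    _ ≤ (K + A) * μ (closedBall c r) := by
        rw [lintegral_add_left (by fun_prop), add_mul]
        exact add_le_add (h c r hr) hA

theorem MeanOscLE.enorm_center_sub_center_five_mul_le (h : MeanOscLE μ b a K)
    (hμ : IsDoublingWith D μ) (hb : Measurable b) (c : E) {r : ℝ} (hr : 0 < r) :
    ‖a c r - a c (5 * r)‖ₑ ≤ K + D * K := by
  refine h.enorm_center_sub_le hμ hb hr ?_
  calc ∫⁻ y in closedBall c r, ‖b y - a c (5 * r)‖ₑ ∂μ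
      ≤ ∫⁻ y in closedBall c (5 * r), ‖b y - a c (5 * r)‖ₑ ∂μ :=
        lintegral_mono_set (closedBall_subset_closedBall (by linarith))
    _ ≤ K * (D * μ (closedBall c r)) :=
        (h c (5 * r) (by positivity)).trans
          (mul_le_mul_right (hμ.measure_closedBall_five_mul_le c hr) _)
    _ = D * K * μ (closedBall c r) := by ring

theorem MeanOscLE.lintegral_closedBall_five_mul_le (h : MeanOscLE μ b a K)
    (hμ : IsDoublingWith D μ) (hb : Measurable b) (c : E) {r : ℝ} (hr : 0 < r) :
    ∫⁻ y in closedBall c (5 * r), ‖b y - a c r‖ₑ ∂μ ≤ (2 + D) * D * K * μ (closedBall c r) := by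
  have hshift := h.enorm_center_sub_center_five_mul_le hμ hb c hr
  calc ∫⁻ y in closedBall c (5 * r), ‖b y - a c r‖ₑ ∂μ
      ≤ ∫⁻ y in closedBall c (5 * r), (‖b y - a c (5 * r)‖ₑ + (K + D * K)) ∂μ := by
        refine lintegral_mono fun y => le_trans ?_ (add_le_add_right hshift _)
        simpa using enorm_sub_le (a := b y - a c (5 * r)) (b := a c r - a c (5 * r))
    _ ≤ (2 + D) * K * μ (closedBall c (5 * r)) := by
        rw [lintegral_add_right _ measurable_const, setLIntegral_const]
        exact (add_le_add_left (h c (5 * r) (by positivity)) _).trans_eq (by ring)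
    _ ≤ (2 + D) * K * (D * μ (closedBall c r)) :=
        mul_le_mul_right (hμ.measure_closedBall_five_mul_le c hr) _
    _ = (2 + D) * D * K * μ (closedBall c r) := by ring

theorem MeanOscLE.lintegral_closedBall_stopping_le (h : MeanOscLE μ b a K)
    (hμ : IsDoublingWith D μ) (hb : Measurable b) {ε : ℝ} (hε : 0 ≤ ε) {l : ℝ≥0}
    (hεK : Real.exp (ε * (K + l : ℝ≥0)) ≤ 2) {X : ℝ≥0∞} (hX : ExpOscLE μ b a ε X)
    {v : ℝ} {x : E} {ρ : ℝ} (hρ : IsStoppingRadius μ (fun y => ‖b y - v‖ₑ) l x ρ) :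
    ∫⁻ y in closedBall x (5 * ρ), eexp (ε * |b y - v|) ∂μ ≤
      2 * (X * (D * μ (closedBall x ρ))) := by
  have h5ρ : 0 < 5 * ρ := by linarith [hρ.pos]
  have hshift : ‖a x (5 * ρ) - v‖ₑ ≤ (K + l : ℝ≥0) := by
    exact_mod_cast h.enorm_center_sub_le hμ hb h5ρ hρ.lintegral_five_mul_le
  calc ∫⁻ y in closedBall x (5 * ρ), eexp (ε * |b y - v|) ∂μ
      ≤ ∫⁻ y in closedBall x (5 * ρ), 2 * eexp (ε * |b y - a x (5 * ρ)|) ∂μ :=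
        lintegral_mono fun y => eexp_mul_abs_sub_le hε hεK hshift (b y)
    _ ≤ 2 * (X * (D * μ (closedBall x ρ))) := by
        rw [lintegral_const_mul _ (by fun_prop)]
        gcongr
        exact (hX x (5 * ρ) h5ρ).trans
          (mul_le_mul_right (hμ.measure_closedBall_five_mul_le x hρ.pos) _)

end

variable [SecondCountableTopology E] [BorelSpace E] [μ.IsOpenPosMeasure]

theorem IsDoublingWith.ae_exists_mul_measure_lt_lintegral (hμ : IsDoublingWith D μ)
    (hg : Measurable g) (hg_fin : ∫⁻ y, g y ∂μ ≠ ∞) {r : ℝ} (hr : 0 < r) (l : ℝ≥0∞) :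
    ∀ᵐ x ∂μ, l < g x → ∃ k : ℕ, l * μ (closedBall x (r * (1 / 5) ^ k)) <
      ∫⁻ y in closedBall x (r * (1 / 5) ^ k), g y ∂μ := by
  have := hμ.isUnifLocDoublingMeasure
  have := hμ.isLocallyFiniteMeasure
  have hscale : Tendsto (fun k : ℕ => r * (1 / 5 : ℝ) ^ k) atTop (nhdsWithin 0 (Ioi 0)) := by
    refine tendsto_nhdsWithin_iff.2 ⟨?_, Eventually.of_forall fun k => mem_Ioi.2 (by positivity)⟩
    simpa using (tendsto_pow_atTop_nhds_zero_of_lt_one (r := (1 / 5 : ℝ)) (by norm_num)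
      (by norm_num)).const_mul r
  filter_upwards [(IsUnifLocDoublingMeasure.vitaliFamily μ 1).ae_tendsto_lintegral_div
    hg.aemeasurable hg_fin] with x hx hlx
  have hlim := hx.comp (IsUnifLocDoublingMeasure.tendsto_closedBall_filterAt μ (K := 1) (x := x)
    (fun _ : ℕ => x) _ hscale (Eventually.of_forall fun k => mem_closedBall_self (by positivity)))
  obtain ⟨k, hk⟩ := (hlim.eventually_const_lt hlx).exists
  refine ⟨k, ?_⟩
  rwa [Function.comp_apply, ENNReal.lt_div_iff_mul_lt
    (Or.inl (measure_closedBall_pos μ x (by positivity)).ne')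
    (Or.inl (hμ.measure_closedBall_ne_top _ _))] at hk

theorem IsDoublingWith.ae_exists_isStoppingRadius (hμ : IsDoublingWith D μ) (hg : Measurable g)
    {c : E} {r : ℝ} (hr : 0 < r) {l m : ℝ≥0} (hml : D * m ≤ l)
    (hm : ∫⁻ y in closedBall c (5 * r), g y ∂μ ≤ m * μ (closedBall c r)) :
    ∀ᵐ x ∂μ, x ∈ closedBall c r → l < g x → ∃ ρ, 5 * ρ ≤ r ∧ IsStoppingRadius μ g l x ρ := by
  have hmeas : MeasurableSet (closedBall c (5 * r)) := isClosed_closedBall.measurableSet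
  have hfin : ∫⁻ y, (closedBall c (5 * r)).indicator g y ∂μ ≠ ∞ := by
    rw [lintegral_indicator hmeas]
    exact ne_top_of_le_ne_top
      (ENNReal.mul_ne_top ENNReal.coe_ne_top (hμ.measure_closedBall_ne_top c r)) hm
  filter_upwards [hμ.ae_exists_mul_measure_lt_lintegral (hg.indicator hmeas) hfin hr l] with x hx
    hxc hlx
  have hfirst : ∫⁻ y in closedBall x r, g y ∂μ ≤ l * μ (closedBall x r) := by
    have hsub : closedBall x r ⊆ closedBall c (5 * r) :=
      closedBall_subset_closedBall' (by linarith [mem_closedBall.1 hxc])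
    calc ∫⁻ y in closedBall x r, g y ∂μ ≤ m * μ (closedBall c r) :=
          (lintegral_mono_set hsub).trans hm
      _ ≤ m * (D * μ (closedBall x r)) :=
          mul_le_mul_right (hμ.measure_closedBall_le_of_mem hr hxc) _
      _ = (D * m : ℝ≥0) * μ (closedBall x r) := by push_cast; ring
      _ ≤ l * μ (closedBall x r) := by gcongr
  have hlast : ∃ k : ℕ, l * μ (closedBall x (r * (1 / 5) ^ k)) <
      ∫⁻ y in closedBall x (r * (1 / 5) ^ k), g y ∂μ := by
    have hx_mem : x ∈ closedBall c (5 * r) := closedBall_subset_closedBall (by linarith) hxc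
    obtain ⟨k, hk⟩ := hx (by rwa [indicator_of_mem hx_mem])
    exact ⟨k, hk.trans_le (lintegral_mono fun y => indicator_le_self _ _ y)⟩
  obtain ⟨k, hk, hk'⟩ :=
    Nat.exists_not_and_succ_of_not_zero_of_exists (by simpa using hfirst) hlast
  have h5 : 5 * (r * (1 / 5 : ℝ) ^ (k + 1)) = r * (1 / 5) ^ k := by ring
  refine ⟨r * (1 / 5) ^ (k + 1), ?_, by positivity, hk'.le, by rw [h5]; exact not_lt.1 hk⟩
  rw [h5]
  exact mul_le_of_le_one_right hr.le (pow_le_one₀ (by norm_num) (by norm_num))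

theorem IsDoublingWith.exists_stopping_closedBall_covering (hμ : IsDoublingWith D μ)
    (hg : Measurable g) {c : E} {r : ℝ} (hr : 0 < r) {l m : ℝ≥0} (hml : D * m ≤ l)
    (hm : ∫⁻ y in closedBall c (5 * r), g y ∂μ ≤ m * μ (closedBall c r)) :
    ∃ (u : Set E) (ρ : E → ℝ), u.Countable ∧ (∀ x ∈ u, IsStoppingRadius μ g l x (ρ x)) ∧
      (∀ᵐ y ∂μ, y ∈ closedBall c r \ ⋃ x ∈ u, closedBall x (5 * ρ x) → g y ≤ l) ∧
      l * ∑' x : u, μ (closedBall (x : E) (ρ x)) ≤ m * μ (closedBall c r) := by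
  set t : Set E := {x | x ∈ closedBall c r ∧ ∃ ρ, 5 * ρ ≤ r ∧ IsStoppingRadius μ g l x ρ}
  have hchoice (x : E) : ∃ ρ, x ∈ t → 5 * ρ ≤ r ∧ IsStoppingRadius μ g l x ρ := by
    by_cases hx : x ∈ t
    · exact hx.2.imp fun ρ hρ _ => hρ
    · exact ⟨0, fun h => absurd h hx⟩
  choose ρ hρ using hchoice
  obtain ⟨u, hut, hu, hdisj, hcover⟩ := exists_countable_disjoint_subfamily_covering_five_mul
    (t := t) (c := id) (r := ρ) (R := r) (fun x hx => (hρ x hx).2.pos)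
    (fun x hx => by linarith [(hρ x hx).1, (hρ x hx).2.pos])
  refine ⟨u, ρ, hu, fun x hx => (hρ x (hut hx)).2, ?_, ?_⟩
  · filter_upwards [hμ.ae_exists_isStoppingRadius hg hr hml hm] with y hy hyu
    by_contra! hly
    have hyt : y ∈ t := ⟨hyu.1, hy hyu.1 hly⟩
    exact hyu.2 (hcover (mem_biUnion hyt (mem_closedBall_self (hρ y hyt).2.pos.le)))
  · calc l * ∑' x : u, μ (closedBall (x : E) (ρ x))
        ≤ ∑' x : u, ∫⁻ y in closedBall (x : E) (ρ x), g y ∂μ := by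
          rw [← ENNReal.tsum_mul_left]
          exact ENNReal.tsum_le_tsum fun x => (hρ x (hut x.2)).2.mul_measure_le
      _ = ∫⁻ y in ⋃ x ∈ u, closedBall x (ρ x), g y ∂μ :=
          (lintegral_biUnion hu (fun _ _ => isClosed_closedBall.measurableSet) hdisj _).symm
      _ ≤ ∫⁻ y in closedBall c (5 * r), g y ∂μ := by
          refine lintegral_mono_set (iUnion₂_subset fun x hx => closedBall_subset_closedBall' ?_)
          linarith [(hρ x (hut hx)).1, (hρ x (hut hx)).2.pos, mem_closedBall.1 (hut hx).1]
      _ ≤ m * μ (closedBall c r) := hm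

/-- Outside the stopping balls the oscillation is bounded; inside each of them the hypothesis
applies, and their total measure is small. -/
theorem ExpOscLE.two_add_div_two {ε : ℝ} {X : ℝ≥0∞} (hX : ExpOscLE μ b a ε X)
    (h : MeanOscLE μ b a K) (hμ : IsDoublingWith D μ) (hb : Measurable b) (hε : 0 ≤ ε)
    (hεK : Real.exp (ε * (K + stoppingHeight D K : ℝ≥0)) ≤ 2) :
    ExpOscLE μ b a ε (2 + X / 2) := by
  intro c r hr
  obtain ⟨u, ρ, hu, hρ, hout, hsum⟩ := hμ.exists_stopping_closedBall_covering
    (g := fun y => ‖b y - a c r‖ₑ) (by fun_prop) hr (mul_le_stoppingHeight D K)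
    (by push_cast; exact h.lintegral_closedBall_five_mul_le hμ hb c hr)
  set B := closedBall c r
  set U : Set E := ⋃ x ∈ u, closedBall x (5 * ρ x)
  have hUm : MeasurableSet U :=
    MeasurableSet.biUnion hu fun _ _ => isClosed_closedBall.measurableSet
  have hmeas : 4 * D * ∑' x : u, μ (closedBall (x : E) (ρ x)) ≤ μ B :=
    four_mul_mul_le_of_stoppingHeight_mul_le hsum
  have hdiff : ∫⁻ y in B \ U, eexp (ε * |b y - a c r|) ∂μ ≤ 2 * μ B := by
    calc ∫⁻ y in B \ U, eexp (ε * |b y - a c r|) ∂μ ≤ ∫⁻ _ in B \ U, 2 ∂μ := by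
          refine setLIntegral_mono_ae' (isClosed_closedBall.measurableSet.diff hUm) ?_
          filter_upwards [hout] with y hy hyU
          have hle : ‖b y - a c r‖ₑ ≤ (K + stoppingHeight D K : ℝ≥0) :=
            (hy hyU).trans (by exact_mod_cast le_add_self)
          simpa [eexp_zero] using eexp_mul_abs_sub_le hε hεK hle (b y)
      _ ≤ 2 * μ B := by rw [setLIntegral_const]; gcongr; exact sdiff_subset
  have hU : ∫⁻ y in U, eexp (ε * |b y - a c r|) ∂μ ≤ X / 2 * μ B := by
    have := hu.to_subtype
    calc ∫⁻ y in U, eexp (ε * |b y - a c r|) ∂μ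
        ≤ ∑' x : u, ∫⁻ y in closedBall (x : E) (5 * ρ x), eexp (ε * |b y - a c r|) ∂μ := by
          simp only [U, biUnion_eq_iUnion]
          exact lintegral_iUnion_le _ _
      _ ≤ ∑' x : u, 2 * (X * (D * μ (closedBall (x : E) (ρ x)))) := ENNReal.tsum_le_tsum fun x =>
          h.lintegral_closedBall_stopping_le hμ hb hε hεK hX (hρ x x.2)
      _ = X / 2 * (4 * D * ∑' x : u, μ (closedBall (x : E) (ρ x))) := by
          have hX4 : X / 2 * 4 = 2 * X := by
            rw [show (4 : ℝ≥0∞) = 2 * 2 by norm_num, ← mul_assoc,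
              ENNReal.div_mul_cancel (by simp) (by simp), mul_comm]
          simp only [ENNReal.tsum_mul_left, ← mul_assoc, hX4]
      _ ≤ X / 2 * μ B := by gcongr
  calc ∫⁻ y in B, eexp (ε * |b y - a c r|) ∂μ
      ≤ ∫⁻ y in B \ U ∪ U, eexp (ε * |b y - a c r|) ∂μ :=
        lintegral_mono_set (by rw [sdiff_union_self]; exact subset_union_left)
    _ ≤ 2 * μ B + X / 2 * μ B := (lintegral_union_le _ _ _).trans (add_le_add hdiff hU)
    _ = (2 + X / 2) * μ B := by ring

theorem ExpOscLE.four_of_ne_top {ε : ℝ} {X : ℝ≥0∞} (hX : ExpOscLE μ b a ε X) (hXtop : X ≠ ∞)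
    (h : MeanOscLE μ b a K) (hμ : IsDoublingWith D μ) (hb : Measurable b) (hε : 0 ≤ ε)
    (hεK : Real.exp (ε * (K + stoppingHeight D K : ℝ≥0)) ≤ 2) :
    ExpOscLE μ b a ε 4 := by
  have hiter (k : ℕ) : ExpOscLE μ b a ε (4 + X * 2⁻¹ ^ k) := by
    induction k with
    | zero => exact fun c r hr => (hX c r hr).trans (by gcongr; simp)
    | succ k ih =>
      convert ih.two_add_div_two h hμ hb hε hεK using 1
      have h42 : (4 : ℝ≥0∞) / 2 = 2 := by
        rw [show (4 : ℝ≥0∞) = 2 * 2 by norm_num, ENNReal.mul_div_cancel_right (by simp) (by simp)]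
      rw [ENNReal.add_div, h42, ← add_assoc, pow_succ, ← mul_assoc, div_eq_mul_inv (X * _)]
      norm_num
  intro c r hr
  have hlim : Tendsto (fun k : ℕ => (4 + X * 2⁻¹ ^ k) * μ (closedBall c r)) atTop
      (nhds ((4 + X * 0) * μ (closedBall c r))) := by
    refine ENNReal.Tendsto.mul_const (tendsto_const_nhds.add (ENNReal.Tendsto.const_mul
      (ENNReal.tendsto_pow_atTop_nhds_zero_of_lt_one (by norm_num)) (Or.inr hXtop)))
      (Or.inr (hμ.measure_closedBall_ne_top c r))
  simpa using ge_of_tendsto' hlim fun k => hiter k c r hr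

theorem ExpOscLE.four_of_abs_le {N : ℝ} (hbN : ∀ x, |b x| ≤ N) (haN : ∀ c r, |a c r| ≤ N)
    (h : MeanOscLE μ b a K) (hμ : IsDoublingWith D μ) (hb : Measurable b) {ε : ℝ} (hε : 0 ≤ ε)
    (hεK : Real.exp (ε * (K + stoppingHeight D K : ℝ≥0)) ≤ 2) :
    ExpOscLE μ b a ε 4 := by
  refine ExpOscLE.four_of_ne_top (X := eexp (ε * (N + N))) (fun c r _ => ?_) (eexp_ne_top _)
    h hμ hb hε hεK
  rw [← setLIntegral_const]
  exact lintegral_mono fun y => eexp_le_eexp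
    (mul_le_mul_of_nonneg_left ((abs_sub _ _).trans (add_le_add (hbN y) (haN c r))) hε)

/-- The truncations of `b` and `a` at height `N` have the same mean oscillation bound, and Fatou's
lemma removes the truncation. -/
theorem MeanOscLE.exists_expOscLE (h : MeanOscLE μ b a K) (hμ : IsDoublingWith D μ)
    (hb : Measurable b) : ∃ ε > 0, ExpOscLE μ b a ε 4 := by
  set C : ℝ≥0 := K + stoppingHeight D K
  refine ⟨Real.log 2 / (C + 1), by positivity, fun c r hr => ?_⟩
  set ε := Real.log 2 / (C + 1 : ℝ)
  have hε : 0 ≤ ε := by positivity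
  have hεC : Real.exp (ε * C) ≤ 2 := by
    rw [← Real.le_log_iff_exp_le two_pos, div_mul_eq_mul_div, div_le_iff₀ (by positivity)]
    gcongr
    simp
  let T (N : ℕ) (s : ℝ) : ℝ := projIcc (-(N : ℝ)) N (neg_le_self N.cast_nonneg) s
  have hT_meas (N : ℕ) : Measurable (T N) :=
    measurable_subtype_coe.comp (continuous_projIcc (h := neg_le_self N.cast_nonneg)).measurable
  have hT_abs (N : ℕ) (s : ℝ) : |T N s| ≤ N := abs_le.2 (projIcc _ _ _ s).2
  have hT_eventually (s : ℝ) : ∀ᶠ N in atTop, T N s = s := by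
    filter_upwards [eventually_ge_atTop ⌈|s|⌉₊] with N hN
    exact congrArg Subtype.val (projIcc_of_mem _ (abs_le.1 (Nat.ceil_le.1 hN)))
  have htrunc (N : ℕ) : ExpOscLE μ (fun y => T N (b y)) (fun c r => T N (a c r)) ε 4 := by
    refine ExpOscLE.four_of_abs_le (fun x => hT_abs N _) (fun c r => hT_abs N _)
      (fun c r hr => le_trans (lintegral_mono fun y => ?_) (h c r hr)) hμ ((hT_meas N).comp hb)
      hε hεC
    exact enorm_le_iff_norm_le.2 (abs_projIcc_sub_projIcc _)
  calc ∫⁻ y in closedBall c r, eexp (ε * |b y - a c r|) ∂μ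
      ≤ ∫⁻ y in closedBall c r, liminf (fun N : ℕ => eexp (ε * |T N (b y) - T N (a c r)|)) atTop
          ∂μ := by
        refine lintegral_mono fun y => (Tendsto.liminf_eq ?_).ge
        refine tendsto_const_nhds.congr' ?_
        filter_upwards [hT_eventually (b y), hT_eventually (a c r)] with N h1 h2
        rw [h1, h2]
    _ ≤ liminf (fun N : ℕ => ∫⁻ y in closedBall c r, eexp (ε * |T N (b y) - T N (a c r)|) ∂μ)
          atTop := lintegral_liminf_le fun N => by
        have := (hT_meas N).comp hb
        fun_prop
    _ ≤ 4 * μ (closedBall c r) := liminf_le_of_le (by isBoundedDefault) fun v hv => by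
        obtain ⟨N, hN⟩ := hv.exists
        exact hN.trans (htrunc N c r hr)

end JohnNirenberg

/-! ### Exponential weights -/

section ExponentialWeight

theorem two_le_four_mul_eexp_add (u : ℝ) : 2 ≤ 4 * eexp u + 4⁻¹ * eexp (-u) := by
  have hreal : 2 ≤ 4 * Real.exp u + 4⁻¹ * Real.exp (-u) := by
    have hone : Real.exp u * Real.exp (-u) = 1 := by
      rw [← Real.exp_add, add_neg_cancel, Real.exp_zero]
    nlinarith [sq_nonneg (4 * Real.exp u - 4⁻¹ * Real.exp (-u)), Real.exp_pos u,
      Real.exp_pos (-u)]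
  have h := ENNReal.ofReal_le_ofReal hreal
  rwa [ENNReal.ofReal_add (by positivity) (by positivity), ENNReal.ofReal_mul (by norm_num),
    ENNReal.ofReal_mul (by norm_num), ENNReal.ofReal_inv_of_pos (by norm_num),
    ENNReal.ofReal_ofNat, ENNReal.ofReal_ofNat] at h

section

variable {X : Type*} [MeasurableSpace X] {ν : Measure X}

theorem measure_univ_le_four_mul_lintegral_eexp [IsFiniteMeasure ν] {u : X → ℝ} (hu : Measurable u)
    (hneg : ∫⁻ x, eexp (-u x) ∂ν ≤ 4 * ν univ) : ν univ ≤ 4 * ∫⁻ x, eexp (u x) ∂ν := by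
  refine (ENNReal.add_le_add_iff_right (measure_ne_top ν univ)).1 ?_
  calc ν univ + ν univ = ∫⁻ _, 2 ∂ν := by rw [lintegral_const]; ring
    _ ≤ ∫⁻ x, (4 * eexp (u x) + 4⁻¹ * eexp (-u x)) ∂ν :=
        lintegral_mono fun x => two_le_four_mul_eexp_add (u x)
    _ = 4 * ∫⁻ x, eexp (u x) ∂ν + 4⁻¹ * ∫⁻ x, eexp (-u x) ∂ν := by
        rw [lintegral_add_left (by fun_prop), lintegral_const_mul _ (by fun_prop),
          lintegral_const_mul _ (by fun_prop)]
    _ ≤ 4 * ∫⁻ x, eexp (u x) ∂ν + 4⁻¹ * (4 * ν univ) := by gcongr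
    _ = 4 * ∫⁻ x, eexp (u x) ∂ν + ν univ := by
        rw [← mul_assoc, ENNReal.inv_mul_cancel (by simp) (by simp), one_mul]

/-- The exponents `(1 + P) / 2` and `(1 + P) / (P - 1)` are conjugate, and with them Hölder's
inequality produces exactly the weight `eexp (-u)`. -/
theorem lintegral_le_rpow_mul_rpow_of_lintegral_eexp_neg_le {P : ℝ} (hP : 1 < P) {u : X → ℝ}
    (hu : Measurable u) (hneg : ∫⁻ x, eexp (-u x) ∂ν ≤ 4 * ν univ) {G : X → ℝ≥0∞}
    (hG : Measurable G) :
    ∫⁻ x, G x ∂ν ≤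
      (∫⁻ x, (G x * eexp (-u x)) ^ ((1 + P) / 2) * eexp (P * u x) ∂ν) ^ (1 / ((1 + P) / 2)) *
        (4 * ν univ) ^ (1 / ((1 + P) / (P - 1))) := by
  have hP1 : 0 < P - 1 := by linarith
  have hconj : ((1 + P) / 2).HolderConjugate ((1 + P) / (P - 1)) := by
    refine Real.holderConjugate_iff.2 ⟨by linarith, ?_⟩
    field_simp
    ring
  set σ := (1 + P) / 2
  have hσ : 0 < σ := by positivity
  have hfactor (x : X) : G x * eexp (-u x + P * u x / σ) * eexp (u x - P * u x / σ) = G x := by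
    rw [mul_assoc, ← eexp_add, show -u x + P * u x / σ + (u x - P * u x / σ) = 0 by ring, eexp_zero,
      mul_one]
  have hfirst (x : X) : (G x * eexp (-u x + P * u x / σ)) ^ σ =
      (G x * eexp (-u x)) ^ σ * eexp (P * u x) := by
    rw [eexp_add, ← mul_assoc, ENNReal.mul_rpow_of_nonneg _ _ hσ.le, eexp_rpow (_ / σ),
      div_mul_cancel₀ _ hσ.ne']
  have hsecond (x : X) : eexp (u x - P * u x / σ) ^ ((1 + P) / (P - 1)) = eexp (-u x) := by
    rw [eexp_rpow]
    congr 1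
    simp only [σ]
    field_simp
    ring
  calc ∫⁻ x, G x ∂ν
      = ∫⁻ x, G x * eexp (-u x + P * u x / σ) * eexp (u x - P * u x / σ) ∂ν := by
        simp only [hfactor]
    _ ≤ (∫⁻ x, (G x * eexp (-u x + P * u x / σ)) ^ σ ∂ν) ^ (1 / σ) *
        (∫⁻ x, eexp (u x - P * u x / σ) ^ ((1 + P) / (P - 1)) ∂ν) ^ (1 / ((1 + P) / (P - 1))) :=
        ENNReal.lintegral_mul_le_Lp_mul_Lq ν hconj (by fun_prop) (by fun_prop)
    _ ≤ _ := by
        simp only [hfirst, hsecond]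
        gcongr

theorem laverage_rpow_le_of_lintegral_eexp_le [IsFiniteMeasure ν] [NeZero ν] {P : ℝ}
    (hP : 1 < P) {u : X → ℝ} (hu : Measurable u)
    (hneg : ∫⁻ x, eexp (-u x) ∂ν ≤ 4 * ν univ)
    (hpos : ∫⁻ x, eexp (P * u x) ∂ν ≤ 4 * ν univ) {G : X → ℝ≥0∞} (hG : Measurable G) :
    (⨍⁻ x, G x ∂ν) ^ ((1 + P) / 2) ≤ 4 ^ ((1 + P) / 2) *
      ((∫⁻ x, (G x * eexp (-u x)) ^ ((1 + P) / 2) * eexp (P * u x) ∂ν) /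
        ∫⁻ x, eexp (P * u x) ∂ν) := by
  have hholder := lintegral_le_rpow_mul_rpow_of_lintegral_eexp_neg_le hP hu hneg hG
  have : 0 < P - 1 := by linarith
  set σ := (1 + P) / 2
  set I := ∫⁻ x, (G x * eexp (-u x)) ^ σ * eexp (P * u x) ∂ν
  have hσ : 0 < σ := by positivity
  have hτ : 1 / ((1 + P) / (P - 1)) * σ = σ - 1 := by simp only [σ]; field_simp; ring
  have hν0 : ν univ ≠ 0 := NeZero.ne _
  have hν : ν univ ≠ ∞ := measure_ne_top ν univ
  have hvol : (4 * ν univ) ^ (σ - 1) = (4 * ν univ) ^ σ * (4 * ν univ)⁻¹ := by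
    rw [← ENNReal.rpow_neg_one, ← ENNReal.rpow_add _ _ (by simp [hν0]) (by finiteness),
      sub_eq_add_neg]
  calc (⨍⁻ x, G x ∂ν) ^ σ ≤ (I ^ (1 / σ) * (4 * ν univ) ^ (1 / ((1 + P) / (P - 1))) /
        ν univ) ^ σ := by
        rw [laverage_eq]
        gcongr
    _ = I * ((4 * ν univ) ^ σ * (4 * ν univ)⁻¹) / ν univ ^ σ := by
        rw [ENNReal.div_rpow_of_nonneg _ _ hσ.le, ENNReal.mul_rpow_of_nonneg _ _ hσ.le,
          ← ENNReal.rpow_mul, ← ENNReal.rpow_mul, hτ, one_div, inv_mul_cancel₀ hσ.ne',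
          ENNReal.rpow_one, hvol]
    _ = 4 ^ σ * (I / (4 * ν univ)) := by
        have hcancel : ν univ ^ σ * (ν univ ^ σ)⁻¹ = 1 :=
          ENNReal.mul_inv_cancel (by simp [hν0, hν]) (by finiteness)
        rw [ENNReal.mul_rpow_of_nonneg 4 _ hσ.le, div_eq_mul_inv, div_eq_mul_inv,
          ← mul_one (4 ^ σ * (I * (4 * ν univ)⁻¹)), ← hcancel]
        ring
    _ ≤ 4 ^ σ * (I / ∫⁻ x, eexp (P * u x) ∂ν) := by gcongr

end

section ExpWeight

variable {E : Type*} [MeasurableSpace E] {μ : Measure E} {b : E → ℝ}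

/-- The measure with density `exp (η * b)`. For `b` of bounded mean oscillation and `η` small it is
doubling, which replaces the Muckenhoupt theory of weights. -/
noncomputable def expWeight (μ : Measure E) (η : ℝ) (b : E → ℝ) : Measure E :=
  μ.withDensity fun y => eexp (η * b y)

theorem lintegral_expWeight (hb : Measurable b) (η : ℝ) {F : E → ℝ≥0∞} (hF : Measurable F) :
    ∫⁻ y, F y ∂expWeight μ η b = ∫⁻ y, F y * eexp (η * b y) ∂μ := by
  rw [expWeight, lintegral_withDensity_eq_lintegral_mul _ (by fun_prop) hF]
  simp only [Pi.mul_apply, mul_comm]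

variable [PseudoMetricSpace E] {D K : ℝ≥0} {a : E → ℝ → ℝ} {ε : ℝ} {X : ℝ≥0∞}

theorem ExpOscLE.lintegral_eexp_mul_sub_le (h : ExpOscLE μ b a ε X) {η : ℝ} (hη : |η| ≤ ε) (c : E)
    {r : ℝ} (hr : 0 < r) :
    ∫⁻ y in closedBall c r, eexp (η * (b y - a c r)) ∂μ ≤ X * μ (closedBall c r) := by
  refine (lintegral_mono fun y => eexp_le_eexp ?_).trans (h c r hr)
  calc η * (b y - a c r) ≤ |η| * |b y - a c r| := (le_abs_self _).trans (abs_mul _ _).le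
    _ ≤ ε * |b y - a c r| := by gcongr

/-- The maximal operator that dominates the oscillation `exp (δ * |b x - a c r|)` times the average
of `G` over the balls containing `x`, for one sign of `b x - a c r`. -/
noncomputable def oscMaximal {ι : Type*} (μ : Measure E) (b : E → ℝ) (a : E → ℝ → ℝ) (δ : ℝ)
    (c : ι → E) (r : ι → ℝ) (G : E → ℝ≥0∞) (x : E) : ℝ≥0∞ :=
  ⨆ i, (closedBall (c i) (r i)).indicator
    (fun x => eexp (δ * (b x - a (c i) (r i))) * ⨍⁻ y in closedBall (c i) (r i), G y ∂μ) x

variable {ι : Type*} {c : ι → E} {r : ι → ℝ} {G : E → ℝ≥0∞}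

theorem eexp_mul_abs_sub_mul_laverage_le (δ : ℝ) {i : ι} {x : E}
    (hx : x ∈ closedBall (c i) (r i)) :
    eexp (δ * |b x - a (c i) (r i)|) * ⨍⁻ y in closedBall (c i) (r i), G y ∂μ ≤
      oscMaximal μ b a δ c r G x + oscMaximal μ b a (-δ) c r G x := by
  have hle (η : ℝ) : eexp (η * (b x - a (c i) (r i))) * ⨍⁻ y in closedBall (c i) (r i), G y ∂μ ≤
      oscMaximal μ b a η c r G x := by
    refine le_iSup_of_le i ?_
    rw [indicator_of_mem hx]
  rcases abs_cases (b x - a (c i) (r i)) with ⟨habs, -⟩ | ⟨habs, -⟩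
  · rw [habs]
    exact (hle δ).trans le_self_add
  · rw [habs, ← neg_mul_comm]
    exact (hle (-δ)).trans le_add_self

variable [BorelSpace E]

theorem setLIntegral_closedBall_expWeight (hb : Measurable b) (η v : ℝ) (c : E) (r : ℝ)
    {F : E → ℝ≥0∞} (hF : Measurable F) :
    ∫⁻ y in closedBall c r, F y ∂expWeight μ η b =
      eexp (η * v) * ∫⁻ y in closedBall c r, F y * eexp (η * (b y - v)) ∂μ := by
  rw [expWeight, setLIntegral_withDensity_eq_setLIntegral_mul _ (by fun_prop) hF
    isClosed_closedBall.measurableSet, ← lintegral_const_mul _ (by fun_prop)]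
  refine lintegral_congr fun y => ?_
  rw [Pi.mul_apply, mul_left_comm, ← eexp_add, mul_comm]
  ring_nf

theorem expWeight_closedBall (hb : Measurable b) (η v : ℝ) (c : E) (r : ℝ) :
    expWeight μ η b (closedBall c r) =
      eexp (η * v) * ∫⁻ y in closedBall c r, eexp (η * (b y - v)) ∂μ := by
  simpa using setLIntegral_closedBall_expWeight (μ := μ) hb η v c r (F := fun _ => 1)
    measurable_const

theorem laverage_closedBall_expWeight (hb : Measurable b) (η v : ℝ) (c : E) (r : ℝ)
    {F : E → ℝ≥0∞} (hF : Measurable F) :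
    ⨍⁻ y in closedBall c r, F y ∂expWeight μ η b =
      (∫⁻ y in closedBall c r, F y * eexp (η * (b y - v)) ∂μ) /
        ∫⁻ y in closedBall c r, eexp (η * (b y - v)) ∂μ := by
  rw [setLAverage_eq, setLIntegral_closedBall_expWeight hb η v c r hF,
    expWeight_closedBall hb η v, ENNReal.mul_div_mul_left _ _ (eexp_ne_zero _) (eexp_ne_top _)]

theorem ExpOscLE.expWeight_closedBall_le (h : ExpOscLE μ b a ε X) (hb : Measurable b) {η : ℝ}
    (hη : |η| ≤ ε) (c : E) {r : ℝ} (hr : 0 < r) :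
    expWeight μ η b (closedBall c r) ≤ eexp (η * a c r) * (X * μ (closedBall c r)) := by
  rw [expWeight_closedBall hb η (a c r)]
  exact mul_le_mul_right (h.lintegral_eexp_mul_sub_le hη c hr) _

theorem ExpOscLE.mul_measure_closedBall_le (h : ExpOscLE μ b a ε 4) (hμ : IsDoublingWith D μ)
    (hb : Measurable b) {η : ℝ} (hη : |η| ≤ ε) (c : E) {r : ℝ} (hr : 0 < r) :
    eexp (η * a c r) * μ (closedBall c r) ≤ 4 * expWeight μ η b (closedBall c r) := by
  have : IsFiniteMeasure (μ.restrict (closedBall c r)) :=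
    isFiniteMeasure_restrict.2 (hμ.measure_closedBall_ne_top c r)
  rw [expWeight_closedBall hb η (a c r), mul_left_comm]
  refine mul_le_mul_right ?_ _
  have hneg : ∫⁻ y in closedBall c r, eexp (-(η * (b y - a c r))) ∂μ ≤ 4 * μ (closedBall c r) := by
    simpa only [neg_mul] using
      h.lintegral_eexp_mul_sub_le (η := -η) (by rwa [abs_neg]) c hr
  simpa only [Measure.restrict_apply_univ] using measure_univ_le_four_mul_lintegral_eexp
    (ν := μ.restrict (closedBall c r)) (u := fun y => η * (b y - a c r)) (by fun_prop)
    (by rwa [Measure.restrict_apply_univ])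

theorem ExpOscLE.isDoublingWith_expWeight [μ.IsOpenPosMeasure] (h : ExpOscLE μ b a ε 4)
    (hosc : MeanOscLE μ b a K) (hμ : IsDoublingWith D μ) (hb : Measurable b) {η : ℝ}
    (hη : |η| ≤ ε) :
    ∃ D' : ℝ≥0, IsDoublingWith D' (expWeight μ η b) := by
  refine ⟨16 * D * (eexp (ε * (K + D * K : ℝ≥0))).toNNReal, fun c r => ?_, fun c r hr => ?_⟩
  · refine ne_top_of_le_ne_top ?_
      (measure_mono (closedBall_subset_closedBall (le_max_left r 1)))
    refine ne_top_of_le_ne_top ?_ (h.expWeight_closedBall_le hb hη c (r := max r 1) (by positivity))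
    have := hμ.measure_closedBall_ne_top c (max r 1)
    have := eexp_ne_top (η * a c (max r 1))
    finiteness
  · have hshift : eexp (η * a c (5 * r)) ≤ eexp (ε * (K + D * K : ℝ≥0)) * eexp (η * a c r) := by
      have habs : |a c r - a c (5 * r)| ≤ (K + D * K : ℝ≥0) := by
        have : ‖a c r - a c (5 * r)‖₊ ≤ K + D * K := by
          exact_mod_cast hosc.enorm_center_sub_center_five_mul_le hμ hb c hr
        exact_mod_cast this
      rw [← eexp_add]
      refine eexp_le_eexp ?_
      have hprod := mul_le_mul hη habs (abs_nonneg _) ((abs_nonneg _).trans hη)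
      rw [← abs_mul] at hprod
      linarith [neg_abs_le (η * (a c r - a c (5 * r)))]
    rw [ENNReal.coe_mul, ENNReal.coe_toNNReal (eexp_ne_top _)]
    calc expWeight μ η b (closedBall c (5 * r))
        ≤ eexp (η * a c (5 * r)) * (4 * μ (closedBall c (5 * r))) :=
          h.expWeight_closedBall_le hb hη c (by positivity)
      _ ≤ eexp (ε * (K + D * K : ℝ≥0)) * eexp (η * a c r) * (4 * (D * μ (closedBall c r))) := by
          gcongr
          exact hμ.measure_closedBall_five_mul_le c hr
      _ = 4 * D * eexp (ε * (K + D * K : ℝ≥0)) * (eexp (η * a c r) * μ (closedBall c r)) := by ring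
      _ ≤ 4 * D * eexp (ε * (K + D * K : ℝ≥0)) * (4 * expWeight μ η b (closedBall c r)) :=
          mul_le_mul_right (h.mul_measure_closedBall_le hμ hb hη c hr) _
      _ = _ := by push_cast; ring

theorem ExpOscLE.eexp_mul_laverage_rpow_le [μ.IsOpenPosMeasure] (h : ExpOscLE μ b a ε 4)
    (hμ : IsDoublingWith D μ) (hb : Measurable b) {P δ : ℝ} (hP : 1 < P) (hδ : |δ * P| ≤ ε)
    {G : E → ℝ≥0∞} (hG : Measurable G) (c : E) {r : ℝ} (hr : 0 < r) :
    (eexp (-(δ * a c r)) * ⨍⁻ y in closedBall c r, G y ∂μ) ^ ((1 + P) / 2) ≤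
      4 ^ ((1 + P) / 2) * ⨍⁻ y in closedBall c r, (G y * eexp (-(δ * b y))) ^ ((1 + P) / 2)
        ∂expWeight μ (δ * P) b := by
  have hfin : IsFiniteMeasure (μ.restrict (closedBall c r)) :=
    isFiniteMeasure_restrict.2 (hμ.measure_closedBall_ne_top c r)
  have hne : NeZero (μ.restrict (closedBall c r)) :=
    ⟨by simpa using (measure_closedBall_pos μ c hr).ne'⟩
  have hδε : |-δ| ≤ ε := by
    rw [abs_neg]
    refine le_trans ?_ hδ
    rw [abs_mul, abs_of_pos (by linarith : 0 < P)]
    exact le_mul_of_one_le_right (abs_nonneg δ) hP.le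
  have hneg := h.lintegral_eexp_mul_sub_le hδε c hr
  have hpos := h.lintegral_eexp_mul_sub_le hδ c hr
  have havg := laverage_rpow_le_of_lintegral_eexp_le (ν := μ.restrict (closedBall c r))
    (u := fun y => δ * (b y - a c r)) hP (by fun_prop)
    (by simpa only [neg_mul, Measure.restrict_apply_univ] using hneg)
    (by simpa only [← mul_assoc, mul_comm P δ, Measure.restrict_apply_univ] using hpos) hG
  simp only [← mul_assoc, mul_comm P δ] at havg
  set σ := (1 + P) / 2
  have hσ : 0 < σ := by simp only [σ]; linarith
  have hshift (y : E) : (G y * eexp (-(δ * b y))) ^ σ =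
      eexp (-(δ * a c r)) ^ σ * (G y * eexp (-(δ * (b y - a c r)))) ^ σ := by
    rw [← ENNReal.mul_rpow_of_nonneg _ _ hσ.le, mul_left_comm, ← eexp_add]
    ring_nf
  rw [laverage_closedBall_expWeight hb _ (a c r) c r (by fun_prop),
    ENNReal.mul_rpow_of_nonneg _ _ hσ.le]
  simp only [hshift, mul_assoc]
  rw [lintegral_const_mul _ (by fun_prop), mul_div_assoc, mul_left_comm]
  simp only [mul_assoc] at havg
  exact mul_le_mul_right havg _

theorem measurable_oscMaximal [Countable ι] (hb : Measurable b) (δ : ℝ) :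
    Measurable (oscMaximal μ b a δ c r G) :=
  Measurable.iSup fun _ => Measurable.indicator (by fun_prop) isClosed_closedBall.measurableSet

theorem ExpOscLE.oscMaximal_rpow_le [μ.IsOpenPosMeasure] (h : ExpOscLE μ b a ε 4)
    (hμ : IsDoublingWith D μ) (hb : Measurable b) {P δ : ℝ} (hP : 1 < P) (hδ : |δ * P| ≤ ε)
    (hr : ∀ i, 0 < r i) (hG : Measurable G) (x : E) :
    oscMaximal μ b a δ c r G x ^ P ≤ 4 ^ P *
      (ballMaximal (expWeight μ (δ * P) b) c r
        (fun y => (G y * eexp (-(δ * b y))) ^ ((1 + P) / 2)) x ^ (P / ((1 + P) / 2)) *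
          eexp (δ * P * b x)) := by
  have hbase := fun i => h.eexp_mul_laverage_rpow_le hμ hb hP hδ hG (c i) (hr i)
  set σ := (1 + P) / 2
  have hσ : 0 < σ := by simp only [σ]; linarith
  have hP0 : 0 < P := by linarith
  set T := ballMaximal (expWeight μ (δ * P) b) c r (fun y => (G y * eexp (-(δ * b y))) ^ σ) x
  have hroot : oscMaximal μ b a δ c r G x ≤ 4 * T ^ (1 / σ) * eexp (δ * b x) := by
    refine iSup_le fun i => ?_
    by_cases hx : x ∈ closedBall (c i) (r i)
    · rw [indicator_of_mem hx, mul_sub, sub_eq_add_neg, eexp_add, mul_assoc, mul_comm]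
      refine mul_le_mul_left ?_ _
      rw [← ENNReal.rpow_le_rpow_iff hσ, ENNReal.mul_rpow_of_nonneg 4 _ hσ.le, ← ENNReal.rpow_mul,
        one_div_mul_cancel hσ.ne', ENNReal.rpow_one]
      exact (hbase i).trans (mul_le_mul_right (laverage_le_ballMaximal hx) _)
    · simp only [indicator_of_notMem hx, zero_le]
  calc oscMaximal μ b a δ c r G x ^ P ≤ (4 * T ^ (1 / σ) * eexp (δ * b x)) ^ P := by gcongr
    _ = 4 ^ P * (T ^ (P / σ) * eexp (δ * P * b x)) := by
      rw [ENNReal.mul_rpow_of_nonneg _ _ hP0.le, ENNReal.mul_rpow_of_nonneg _ _ hP0.le,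
        ← ENNReal.rpow_mul, eexp_rpow, mul_assoc]
      ring_nf

theorem ExpOscLE.exists_lintegral_oscMaximal_rpow_le [Countable ι]
    [TopologicalSpace.SeparableSpace E] [μ.IsOpenPosMeasure] (hr : ∀ i, 0 < r i)
    (h : ExpOscLE μ b a ε 4) (hosc : MeanOscLE μ b a K)
    (hμ : IsDoublingWith D μ) (hb : Measurable b) {P δ : ℝ} (hP : 1 < P) (hδ : |δ * P| ≤ ε) :
    ∃ C : ℝ≥0, ∀ {G : E → ℝ≥0∞}, Measurable G →
      ∫⁻ x, oscMaximal μ b a δ c r G x ^ P ∂μ ≤ C * ∫⁻ x, G x ^ P ∂μ := by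
  obtain ⟨D', hw⟩ := h.isDoublingWith_expWeight hosc hμ hb hδ
  have hP0 : 0 < P := by linarith
  set σ := (1 + P) / 2
  have hσ : 0 < σ := by simp only [σ]; linarith
  have hPσ : 1 < P / σ := by rw [one_lt_div hσ]; simp only [σ]; linarith
  refine ⟨(4 ^ P * (2 ^ (P / σ) * (ENNReal.ofReal (P / σ / (P / σ - 1)) * D'))).toNNReal,
    fun {G} hG => ?_⟩
  have hF : Measurable fun y => (G y * eexp (-(δ * b y))) ^ σ := by fun_prop
  have hcancel (x : E) : ((G x * eexp (-(δ * b x))) ^ σ) ^ (P / σ) * eexp (δ * P * b x) =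
      G x ^ P := by
    rw [← ENNReal.rpow_mul, mul_div_cancel₀ _ hσ.ne', ENNReal.mul_rpow_of_nonneg _ _ hP0.le,
      eexp_rpow, mul_assoc, ← eexp_add, show -(δ * b x) * P + δ * P * b x = 0 by ring, eexp_zero,
      mul_one]
  calc ∫⁻ x, oscMaximal μ b a δ c r G x ^ P ∂μ
      ≤ 4 ^ P * ∫⁻ x, ballMaximal (expWeight μ (δ * P) b) c r
          (fun y => (G y * eexp (-(δ * b y))) ^ σ) x ^ (P / σ) ∂expWeight μ (δ * P) b := by
        rw [lintegral_expWeight hb _ (measurable_ballMaximal.pow_const _),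
          ← lintegral_const_mul' _ _ (by finiteness)]
        exact lintegral_mono fun x => h.oscMaximal_rpow_le hμ hb hP hδ hr hG x
    _ ≤ 4 ^ P * (2 ^ (P / σ) * (ENNReal.ofReal (P / σ / (P / σ - 1)) * (D' * ∫⁻ x,
          ((G x * eexp (-(δ * b x))) ^ σ) ^ (P / σ) ∂expWeight μ (δ * P) b))) :=
        mul_le_mul_right (hw.lintegral_ballMaximal_rpow_le hr hPσ hF) _
    _ = _ := by
        rw [lintegral_expWeight hb _ (hF.pow_const _), lintegral_congr hcancel,
          ENNReal.coe_toNNReal (by finiteness)]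
        ring

theorem ExpOscLE.exists_lintegral_oscMaximal_add_rpow_le [Countable ι]
    [TopologicalSpace.SeparableSpace E] [μ.IsOpenPosMeasure] (hr : ∀ i, 0 < r i)
    (h : ExpOscLE μ b a ε 4) (hosc : MeanOscLE μ b a K)
    (hμ : IsDoublingWith D μ) (hb : Measurable b) {P δ : ℝ} (hP : 1 < P) (hδ : |δ * P| ≤ ε) :
    ∃ C : ℝ≥0, ∀ {G : E → ℝ≥0∞}, Measurable G →
      ∫⁻ x, (oscMaximal μ b a δ c r G x + oscMaximal μ b a (-δ) c r G x) ^ P ∂μ ≤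
        C * ∫⁻ x, G x ^ P ∂μ := by
  obtain ⟨C₁, h₁⟩ := h.exists_lintegral_oscMaximal_rpow_le hr hosc hμ hb hP hδ
  obtain ⟨C₂, h₂⟩ := h.exists_lintegral_oscMaximal_rpow_le hr hosc hμ hb hP (δ := -δ)
    (by rwa [neg_mul, abs_neg])
  have htwo : (2 : ℝ≥0∞) ^ (P - 1) ≠ ∞ := by
    have : 0 ≤ P - 1 := by linarith
    finiteness
  refine ⟨((2 : ℝ≥0∞) ^ (P - 1)).toNNReal * (C₁ + C₂), fun {G} hG => ?_⟩
  calc ∫⁻ x, (oscMaximal μ b a δ c r G x + oscMaximal μ b a (-δ) c r G x) ^ P ∂μ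
      ≤ ∫⁻ x, 2 ^ (P - 1) *
          (oscMaximal μ b a δ c r G x ^ P + oscMaximal μ b a (-δ) c r G x ^ P) ∂μ :=
        lintegral_mono fun x => ENNReal.rpow_add_le_mul_rpow_add_rpow _ _ hP.le
    _ ≤ 2 ^ (P - 1) * (C₁ * ∫⁻ x, G x ^ P ∂μ + C₂ * ∫⁻ x, G x ^ P ∂μ) := by
        rw [lintegral_const_mul' _ _ htwo,
          lintegral_add_left ((measurable_oscMaximal hb δ).pow_const P)]
        exact mul_le_mul_right (add_le_add (h₁ hG) (h₂ hG)) _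
    _ = _ := by
        push_cast
        rw [ENNReal.coe_toNNReal htwo]
        ring

end ExpWeight

end ExponentialWeight

/-! ### Cubes and bounded mean oscillation -/

variable {n : ℕ}

section Cubes

namespace Cube

theorem set_eq_preimage (Q : Cube n) :
    Q.set = (WithLp.ofLp : RSp n → Fin n → ℝ) ⁻¹' closedBall (WithLp.ofLp Q.c) Q.r := by
  ext y
  rw [mem_preimage, mem_closedBall, dist_pi_le_iff Q.r_pos.le]
  simp only [Cube.set, mem_ofPred_eq, Real.dist_eq]

theorem measurableSet (Q : Cube n) : MeasurableSet Q.set := by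
  rw [Q.set_eq_preimage]
  exact (PiLp.volume_preserving_ofLp (Fin n)).measurable isClosed_closedBall.measurableSet

theorem volume_set_eq_volume_closedBall (Q : Cube n) :
    volume Q.set = volume (closedBall (WithLp.ofLp Q.c) Q.r) := by
  rw [Q.set_eq_preimage]
  exact (PiLp.volume_preserving_ofLp (Fin n)).measure_preimage
    isClosed_closedBall.nullMeasurableSet

theorem volume_set (Q : Cube n) : volume Q.set = ENNReal.ofReal ((2 * Q.r) ^ n) := by
  rw [Q.volume_set_eq_volume_closedBall, Real.volume_pi_closedBall _ Q.r_pos.le, Fintype.card_fin]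

theorem volume_set_ne_zero (Q : Cube n) : volume Q.set ≠ 0 := by
  have := Q.r_pos
  rw [Q.volume_set]
  exact (ENNReal.ofReal_pos.2 (by positivity)).ne'

theorem volume_set_ne_top (Q : Cube n) : volume Q.set ≠ ∞ := by
  rw [Q.volume_set]
  exact ENNReal.ofReal_ne_top

theorem setLIntegral_eq (Q : Cube n) (g : RSp n → ℝ≥0∞) :
    ∫⁻ y in Q.set, g y = ∫⁻ y in closedBall (WithLp.ofLp Q.c) Q.r, g (WithLp.toLp 2 y) := by
  rw [Q.set_eq_preimage, ← (PiLp.volume_preserving_ofLp (Fin n)).setLIntegral_comp_preimage_emb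
    (MeasurableEquiv.toLp 2 (Fin n → ℝ)).symm.measurableEmbedding]

theorem setLAverage_eq (Q : Cube n) (g : RSp n → ℝ≥0∞) :
    ⨍⁻ y in Q.set, g y ∂volume =
      ⨍⁻ y in closedBall (WithLp.ofLp Q.c) Q.r, g (WithLp.toLp 2 y) ∂volume := by
  rw [MeasureTheory.setLAverage_eq, MeasureTheory.setLAverage_eq, Q.setLIntegral_eq,
    Q.volume_set_eq_volume_closedBall]

theorem cubeAvg_eq (Q : Cube n) (b : RSp n → ℝ) :
    cubeAvg Q b = ⨍ y in closedBall (WithLp.ofLp Q.c) Q.r, b (WithLp.toLp 2 y) := by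
  rw [cubeAvg, setAverage_eq, setAverage_eq, measureReal_def, measureReal_def,
    Q.volume_set_eq_volume_closedBall, Q.set_eq_preimage,
    ← (PiLp.volume_preserving_ofLp (Fin n)).setIntegral_preimage_emb
      (MeasurableEquiv.toLp 2 (Fin n → ℝ)).symm.measurableEmbedding]

end Cube

theorem lintegral_eq_lintegral_toLp (g : RSp n → ℝ≥0∞) :
    ∫⁻ y, g y = ∫⁻ y, g (WithLp.toLp 2 y) := by
  rw [← (PiLp.volume_preserving_ofLp (Fin n)).lintegral_comp_emb
    (MeasurableEquiv.toLp 2 (Fin n → ℝ)).symm.measurableEmbedding]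

theorem isDoublingWith_volume_pi (n : ℕ) :
    IsDoublingWith (5 ^ n) (volume : Measure (Fin n → ℝ)) := by
  refine ⟨fun x r => measure_closedBall_lt_top.ne, fun x r hr => ?_⟩
  rw [Real.volume_pi_closedBall _ hr.le, Real.volume_pi_closedBall _ (by positivity),
    Fintype.card_fin, show 2 * (5 * r) = 5 * (2 * r) by ring, mul_pow,
    ENNReal.ofReal_mul (by positivity), ENNReal.ofReal_pow (by norm_num)]
  simp

section BMO

variable {b b' : RSp n → ℝ}

theorem cubeAvg_congr_ae (h : b =ᵐ[volume] b') (Q : Cube n) : cubeAvg Q b = cubeAvg Q b' :=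
  average_congr (ae_restrict_of_ae h)

theorem IsBMO.congr_ae (hb : IsBMO b) (h : b =ᵐ[volume] b') : IsBMO b' := by
  refine ⟨hb.1.congr h, ?_⟩
  have hnorm : bmoNorm b' = bmoNorm b := by
    refine iSup_congr fun Q => ?_
    rw [cubeAvg_congr_ae h]
    congr 1
    refine lintegral_congr_ae (ae_restrict_of_ae ?_)
    filter_upwards [h] with x hx
    rw [hx]
  rw [hnorm]
  exact hb.2

theorem IsBMO.meanOscLE (hb : IsBMO b) :
    MeanOscLE volume (fun y : Fin n → ℝ => b (WithLp.toLp 2 y))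
      (fun c r => ⨍ y in closedBall c r, b (WithLp.toLp 2 y)) (bmoNorm b).toNNReal := by
  intro c r hr
  set Q : Cube n := ⟨WithLp.toLp 2 c, r, hr⟩
  have hle : (volume Q.set)⁻¹ * ∫⁻ x in Q.set, ‖b x - cubeAvg Q b‖ₑ ≤ bmoNorm b :=
    le_iSup (fun Q : Cube n => (volume Q.set)⁻¹ * ∫⁻ x in Q.set, ‖b x - cubeAvg Q b‖₊) Q
  rw [mul_comm, ← div_eq_mul_inv, ENNReal.div_le_iff Q.volume_set_ne_zero Q.volume_set_ne_top,
    Q.setLIntegral_eq, Q.volume_set_eq_volume_closedBall, Q.cubeAvg_eq] at hle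
  rwa [ENNReal.coe_toNNReal hb.2.ne]

/-- The conclusion of the John–Nirenberg inequality on cubes, with exponent `ε`. -/
def CubeExpOscLE (b : RSp n → ℝ) (ε : ℝ) : Prop :=
  ∀ Q : Cube n, ∫⁻ y in Q.set, eexp (ε * |b y - cubeAvg Q b|) ≤ 4 * volume Q.set

theorem cubeExpOscLE_iff {ε : ℝ} :
    CubeExpOscLE b ε ↔ ExpOscLE volume (fun y : Fin n → ℝ => b (WithLp.toLp 2 y))
      (fun c r => ⨍ y in closedBall c r, b (WithLp.toLp 2 y)) ε 4 := by
  refine ⟨fun h c r hr => ?_, fun h Q => ?_⟩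
  · have hQ := h ⟨WithLp.toLp 2 c, r, hr⟩
    rwa [Cube.setLIntegral_eq, Cube.volume_set_eq_volume_closedBall, Cube.cubeAvg_eq] at hQ
  · rw [Cube.setLIntegral_eq, Cube.volume_set_eq_volume_closedBall, Cube.cubeAvg_eq]
    exact h _ _ Q.r_pos

theorem IsBMO.exists_cubeExpOscLE (hb : IsBMO b) (hbm : Measurable b) :
    ∃ ε > 0, CubeExpOscLE b ε := by
  simp only [cubeExpOscLE_iff]
  exact hb.meanOscLE.exists_expOscLE (isDoublingWith_volume_pi n)
    (hbm.comp (MeasurableEquiv.toLp 2 (Fin n → ℝ)).measurable)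

theorem CubeExpOscLE.exists_majorant {ε : ℝ} (h : CubeExpOscLE b ε) (hb : IsBMO b)
    (hbm : Measurable b) {P δ : ℝ} (hP : 1 < P) (hδ : |δ * P| ≤ ε) {ι : Type*} [Countable ι]
    (Q : ι → Cube n) :
    ∃ C : ℝ≥0, ∀ {G : RSp n → ℝ≥0∞}, Measurable G → ∃ S : RSp n → ℝ≥0∞, Measurable S ∧
      ∫⁻ x, S x ^ P ≤ C * ∫⁻ x, G x ^ P ∧
      ∀ i, ∀ x ∈ (Q i).set,
        eexp (δ * |b x - cubeAvg (Q i) b|) * ⨍⁻ y in (Q i).set, G y ∂volume ≤ S x := by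
  have htoLp : Measurable (WithLp.toLp 2 : (Fin n → ℝ) → RSp n) :=
    (MeasurableEquiv.toLp 2 (Fin n → ℝ)).measurable
  set b₀ : (Fin n → ℝ) → ℝ := fun y => b (WithLp.toLp 2 y)
  set a : (Fin n → ℝ) → ℝ → ℝ := fun c r => ⨍ y in closedBall c r, b₀ y
  have hb₀ : Measurable b₀ := hbm.comp htoLp
  set M := fun (η : ℝ) (G : RSp n → ℝ≥0∞) => oscMaximal volume b₀ a η
    (fun i => WithLp.ofLp (Q i).c) (fun i => (Q i).r) (fun y => G (WithLp.toLp 2 y))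
  obtain ⟨C, hC⟩ := (cubeExpOscLE_iff.1 h).exists_lintegral_oscMaximal_add_rpow_le
    (c := fun i => WithLp.ofLp (Q i).c) (fun i => (Q i).r_pos) hb.meanOscLE
    (isDoublingWith_volume_pi n) hb₀ hP hδ
  refine ⟨C, fun {G} hG =>
    ⟨fun x => M δ G (WithLp.ofLp x) + M (-δ) G (WithLp.ofLp x), ?_, ?_, fun i x hx => ?_⟩⟩
  · exact ((measurable_oscMaximal hb₀ δ).add (measurable_oscMaximal hb₀ (-δ))).comp
      (PiLp.volume_preserving_ofLp (Fin n)).measurable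
  · rw [lintegral_eq_lintegral_toLp, lintegral_eq_lintegral_toLp fun x => G x ^ P]
    exact hC (hG.comp htoLp)
  · rw [Cube.setLAverage_eq, Cube.cubeAvg_eq]
    rw [Cube.set_eq_preimage] at hx
    exact eexp_mul_abs_sub_mul_laverage_le δ hx

end BMO

section RatCube

/-- A countable family of cubes which, up to a dilation of the volume by `2 ^ n`, contains every
cube; suprema over it are measurable. -/
noncomputable def ratCube (i : (Fin n → ℚ) × {q : ℚ // 0 < q}) : Cube n where
  c := WithLp.toLp 2 fun j => (i.1 j : ℝ)
  r := ((i.2 : ℚ) : ℝ)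
  r_pos := by exact_mod_cast i.2.2

theorem exists_subset_ratCube (Q : Cube n) :
    ∃ i, Q.set ⊆ (ratCube i).set ∧ volume (ratCube i).set ≤ 2 ^ n * volume Q.set := by
  have hr := Q.r_pos
  have hcenter (j : Fin n) : ∃ q : ℚ, Q.c j - Q.r / 4 < q ∧ (q : ℝ) < Q.c j + Q.r / 4 :=
    exists_rat_btwn (by linarith)
  choose c hc_gt hc_lt using hcenter
  obtain ⟨ρ, hρ_gt, hρ_lt⟩ : ∃ q : ℚ, 5 / 4 * Q.r < q ∧ (q : ℝ) < 2 * Q.r :=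
    exists_rat_btwn (by linarith)
  have hρ : (0 : ℝ) < ρ := by linarith
  refine ⟨⟨c, ⟨ρ, by exact_mod_cast hρ⟩⟩, fun y hy j => ?_, ?_⟩
  · have hyj := abs_le.1 (hy j)
    have hgt := hc_gt j
    have hlt := hc_lt j
    simp only [ratCube]
    rw [abs_le]
    constructor <;> linarith
  · simp only [Cube.volume_set, ratCube]
    rw [← ENNReal.ofReal_ofNat, ← ENNReal.ofReal_pow (by norm_num),
      ← ENNReal.ofReal_mul (by positivity), ← mul_pow]
    gcongr

theorem fracMaximalComm_le_of_forall_ratCube {α : ℝ} (hα : α / n ≤ 1) {b f : RSp n → ℝ} {x : RSp n}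
    {B : ℝ≥0∞}
    (hB : ∀ i, x ∈ (ratCube i).set → volume (ratCube i).set ^ (α / (n : ℝ) - 1) *
      ∫⁻ y in (ratCube i).set, ‖b x - b y‖ₑ * ‖f y‖ₑ ≤ B) :
    fracMaximalComm α b f x ≤ (2 ^ n) ^ (1 - α / n) * B := by
  refine iSup₂_le fun Q hx => ?_
  obtain ⟨i, hsub, hvol⟩ := exists_subset_ratCube Q
  have hpow : volume Q.set ^ (α / (n : ℝ) - 1) ≤
      (2 ^ n) ^ (1 - α / n) * volume (ratCube i).set ^ (α / (n : ℝ) - 1) := by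
    have hexp : 0 ≤ 1 - α / n := by linarith
    rw [← neg_sub 1 (α / (n : ℝ)), ENNReal.rpow_neg, ENNReal.rpow_neg, ← div_eq_mul_inv,
      ENNReal.le_div_iff_mul_le (by simp [(ratCube i).volume_set_ne_zero,
        (ratCube i).volume_set_ne_top]) (by simp [(ratCube i).volume_set_ne_zero,
        (ratCube i).volume_set_ne_top]), mul_comm, ← div_eq_mul_inv]
    refine ENNReal.div_le_of_le_mul ?_
    rw [← ENNReal.mul_rpow_of_nonneg _ _ hexp]
    gcongr
  calc volume Q.set ^ (α / (n : ℝ) - 1) * ∫⁻ y in Q.set, ‖b x - b y‖ₑ * ‖f y‖ₑ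
      ≤ (2 ^ n) ^ (1 - α / n) * volume (ratCube i).set ^ (α / (n : ℝ) - 1) *
          ∫⁻ y in (ratCube i).set, ‖b x - b y‖ₑ * ‖f y‖ₑ :=
        mul_le_mul' hpow (lintegral_mono_set hsub)
    _ ≤ (2 ^ n) ^ (1 - α / n) * B := by
        rw [mul_assoc]
        exact mul_le_mul_right (hB i (hsub hx)) _

end RatCube

end Cubes

section PointwiseBound

theorem ofReal_abs_toReal_sub_toReal_le {u v w : ℝ≥0∞} (huv : u ≤ w + v) (hvu : v ≤ w + u) :
    ENNReal.ofReal |u.toReal - v.toReal| ≤ w := by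
  rcases eq_or_ne w ∞ with rfl | hw
  · exact le_top
  have hiff : u = ∞ ↔ v = ∞ := by
    constructor <;> rintro rfl
    · exact (ENNReal.add_eq_top.1 (top_le_iff.1 huv)).resolve_left hw
    · exact (ENNReal.add_eq_top.1 (top_le_iff.1 hvu)).resolve_left hw
  by_cases hu : u = ∞
  · simp [hu, hiff.1 hu]
  have hv : v ≠ ∞ := fun h => hu (hiff.2 h)
  rw [ENNReal.ofReal_le_iff_le_toReal hw, abs_sub_le_iff, sub_le_iff_le_add, sub_le_iff_le_add,
    ← ENNReal.toReal_add hw hv, ← ENNReal.toReal_add hw hu]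
  exact ⟨ENNReal.toReal_mono (by finiteness) huv, ENNReal.toReal_mono (by finiteness) hvu⟩

variable {b f : RSp n → ℝ}

theorem setLIntegral_enorm_mul_le (Q : Cube n) (hf : AEMeasurable f) (x : RSp n) :
    ∫⁻ y in Q.set, ‖b y * f y‖ₑ ≤
      (∫⁻ y in Q.set, ‖b x - b y‖ₑ * ‖f y‖ₑ) + ‖b x‖ₑ * ∫⁻ y in Q.set, ‖f y‖ₑ := by
  rw [← lintegral_const_mul'' _ hf.restrict.enorm,
    ← lintegral_add_right' _ (hf.restrict.enorm.const_mul _)]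
  refine lintegral_mono fun y => ?_
  rw [enorm_mul, ← add_mul, ← enorm_neg (b x - b y), neg_sub]
  gcongr
  simpa using enorm_add_le (b y - b x) (b x)

theorem enorm_mul_setLIntegral_le (Q : Cube n) (hb : AEMeasurable b) (hf : AEMeasurable f)
    (x : RSp n) :
    ‖b x‖ₑ * ∫⁻ y in Q.set, ‖f y‖ₑ ≤
      (∫⁻ y in Q.set, ‖b x - b y‖ₑ * ‖f y‖ₑ) + ∫⁻ y in Q.set, ‖b y * f y‖ₑ := by
  have hbf : AEMeasurable (fun y => ‖b y * f y‖ₑ) (volume.restrict Q.set) :=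
    (hb.mul hf).restrict.enorm
  rw [← lintegral_const_mul'' _ hf.restrict.enorm, ← lintegral_add_right' _ hbf]
  refine lintegral_mono fun y => ?_
  rw [enorm_mul, ← add_mul]
  gcongr
  simpa using enorm_add_le (b x - b y) (b y)

theorem fracMaximal_mul_le (α : ℝ) (hf : AEMeasurable f) (x : RSp n) :
    fracMaximal α (fun y => b y * f y) x ≤
      fracMaximalComm α b f x + ‖b x‖ₑ * fracMaximal α f x := by
  refine iSup₂_le fun Q hx => ?_
  refine (mul_le_mul_right (setLIntegral_enorm_mul_le Q hf x) _).trans ?_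
  rw [mul_add, mul_left_comm]
  refine add_le_add (le_iSup₂_of_le Q hx le_rfl) (mul_le_mul_right ?_ _)
  exact le_iSup₂_of_le Q hx le_rfl

theorem enorm_mul_fracMaximal_le (α : ℝ) (hb : AEMeasurable b) (hf : AEMeasurable f) (x : RSp n) :
    ‖b x‖ₑ * fracMaximal α f x ≤
      fracMaximalComm α b f x + fracMaximal α (fun y => b y * f y) x := by
  rw [fracMaximal]
  simp only [ENNReal.mul_iSup]
  refine iSup₂_le fun Q hx => ?_
  rw [mul_left_comm]
  refine (mul_le_mul_right (enorm_mul_setLIntegral_le Q hb hf x) _).trans ?_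
  rw [mul_add]
  exact add_le_add (le_iSup₂_of_le Q hx le_rfl) (le_iSup₂_of_le Q hx le_rfl)

theorem ofReal_abs_fracMaximalCommutator_le (α : ℝ) (hb : AEMeasurable b) (hf : AEMeasurable f)
    {x : RSp n} (hbx : 0 ≤ b x) :
    ENNReal.ofReal |fracMaximalCommutator α b f x| ≤ fracMaximalComm α b f x := by
  have hmul : b x * (fracMaximal α f x).toReal = (‖b x‖ₑ * fracMaximal α f x).toReal := by
    rw [ENNReal.toReal_mul, toReal_enorm, Real.norm_of_nonneg hbx]
  rw [fracMaximalCommutator, hmul]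
  exact ofReal_abs_toReal_sub_toReal_le (fracMaximal_mul_le α hf x)
    (enorm_mul_fracMaximal_le α hb hf x)

end PointwiseBound

/-! ### Generalized inverses of Φ-functions -/

section GeneralizedInverse

variable {φ : RSp n → ℝ≥0 → ℝ≥0∞} {x : RSp n}

theorem phiInv_mono (φ : RSp n → ℝ≥0 → ℝ≥0∞) (x : RSp n) : Monotone (phiInv φ x) :=
  fun _ _ h => sInf_le_sInf (image_mono fun _ hu => h.trans hu)

theorem lt_of_lt_phiInv {t : ℝ≥0∞} {u : ℝ≥0} (h : u < phiInv φ x t) : φ x u < t :=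
  not_le.1 fun hc => h.not_ge (sInf_le ⟨u, hc, rfl⟩)

theorem phiInv_le_mul {s t : ℝ≥0∞} {c : ℝ≥0} (hc : c ≠ 0)
    (h : ∀ u : ℝ≥0, t ≤ φ x u → s ≤ φ x (c * u)) : phiInv φ x s ≤ c * phiInv φ x t := by
  rw [mul_comm, ← ENNReal.div_le_iff (by simpa using hc) ENNReal.coe_ne_top]
  refine le_sInf ?_
  rintro _ ⟨u, hu, rfl⟩
  refine ENNReal.div_le_of_le_mul (sInf_le ⟨c * u, h u hu, ?_⟩)
  push_cast
  exact mul_comm _ _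

namespace IsWeakPhi

theorem le_phiInv (hφ : IsWeakPhi univ φ) {t : ℝ≥0∞} {u : ℝ≥0} (h : φ x u < t) :
    u ≤ phiInv φ x t := by
  refine le_sInf ?_
  rintro _ ⟨v, hv, rfl⟩
  by_contra! hvu
  exact h.not_ge (hv.trans (hφ.mono x (mem_univ x) (ENNReal.coe_lt_coe.1 hvu).le))

theorem phiInv_ne_top (hφ : IsWeakPhi univ φ) {t : ℝ≥0∞} (ht : t ≠ ∞) : phiInv φ x t ≠ ∞ := by
  obtain ⟨u, hu⟩ :=
    ((hφ.lim_top x (mem_univ x)).eventually (lt_mem_nhds (lt_top_iff_ne_top.2 ht))).exists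
  exact ne_top_of_le_ne_top ENNReal.coe_ne_top (sInf_le ⟨u, hu.le, rfl⟩)

theorem phiInv_pos (hφ : IsWeakPhi univ φ) {t : ℝ≥0∞} (ht : 0 < t) : 0 < phiInv φ x t := by
  obtain ⟨u, hut, hu⟩ := (((hφ.lim_zero x (mem_univ x)).eventually (gt_mem_nhds ht)).and
    self_mem_nhdsWithin).exists
  exact (ENNReal.coe_pos.2 hu).trans_le (hφ.le_phiInv hut)

end IsWeakPhi

/-- The generalized inverse `φ⁻¹(x, ·)` as a function on the reals, where the power estimates
for it are carried out. For a weak Φ-function no value is truncated by `ENNReal.toReal`. -/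
noncomputable def realInv (φ : RSp n → ℝ≥0 → ℝ≥0∞) (x : RSp n) (t : ℝ) : ℝ :=
  (phiInv φ x (ENNReal.ofReal t)).toReal

namespace IsWeakPhi

theorem ofReal_realInv (hφ : IsWeakPhi univ φ) (x : RSp n) (t : ℝ) :
    ENNReal.ofReal (realInv φ x t) = phiInv φ x (ENNReal.ofReal t) :=
  ENNReal.ofReal_toReal (hφ.phiInv_ne_top ENNReal.ofReal_ne_top)

theorem realInv_pos (hφ : IsWeakPhi univ φ) (x : RSp n) {t : ℝ} (ht : 0 < t) :
    0 < realInv φ x t :=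
  ENNReal.toReal_pos (hφ.phiInv_pos (ENNReal.ofReal_pos.2 ht)).ne'
    (hφ.phiInv_ne_top ENNReal.ofReal_ne_top)

theorem realInv_mono (hφ : IsWeakPhi univ φ) (x : RSp n) : Monotone (realInv φ x) :=
  fun _ _ h => ENNReal.toReal_mono (hφ.phiInv_ne_top ENNReal.ofReal_ne_top)
    (phiInv_mono φ x (ENNReal.ofReal_le_ofReal h))

theorem le_realInv (hφ : IsWeakPhi univ φ) {t : ℝ} {u : ℝ≥0} (h : φ x u < ENNReal.ofReal t) :
    u ≤ realInv φ x t := by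
  have := ENNReal.toReal_mono (hφ.phiInv_ne_top ENNReal.ofReal_ne_top) (hφ.le_phiInv h)
  rwa [ENNReal.coe_toReal] at this

theorem lt_of_lt_realInv (hφ : IsWeakPhi univ φ) {t : ℝ} {u : ℝ≥0} (h : u < realInv φ x t) :
    φ x u < ENNReal.ofReal t := by
  refine lt_of_lt_phiInv ?_
  rw [← hφ.ofReal_realInv, ← ENNReal.ofReal_coe_nnreal]
  exact (ENNReal.ofReal_lt_ofReal_iff_of_nonneg u.2).2 h

theorem realInv_le_mul (hφ : IsWeakPhi univ φ) {s t c : ℝ} (hc : 0 < c)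
    (h : ∀ u : ℝ≥0, ENNReal.ofReal t ≤ φ x u → ENNReal.ofReal s ≤ φ x (c.toNNReal * u)) :
    realInv φ x s ≤ c * realInv φ x t := by
  have := ENNReal.toReal_mono (ENNReal.mul_ne_top ENNReal.coe_ne_top
    (hφ.phiInv_ne_top ENNReal.ofReal_ne_top)) (phiInv_le_mul (Real.toNNReal_pos.2 hc).ne' h)
  rwa [ENNReal.toReal_mul, ENNReal.coe_toReal, Real.coe_toNNReal _ hc.le] at this

end IsWeakPhi

theorem mul_le_mul_of_div_le_mul_div {X Y a b L : ℝ≥0∞} (ha : a ≠ 0) (ha' : a ≠ ∞) (hb : b ≠ 0)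
    (hb' : b ≠ ∞) (h : X / a ≤ L * (Y / b)) : b * X ≤ L * (a * Y) :=
  calc b * X ≤ b * (L * (Y / b) * a) :=
        mul_le_mul_right ((ENNReal.div_le_iff ha ha').1 h) b
    _ = L * (a * (b * (Y / b))) := by ring
    _ = L * (a * Y) := by rw [ENNReal.mul_div_cancel hb hb']

theorem coe_rpow_ne_zero {u : ℝ≥0} (hu : 0 < u) (p : ℝ) : (u : ℝ≥0∞) ^ p ≠ 0 := by
  simp [ENNReal.rpow_eq_zero_iff, hu.ne']

theorem AInc.exists_rpow_mul_le {p : ℝ} (h : AInc p univ φ) (hφ : IsWeakPhi univ φ)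
    (hp : 0 < p) :
    ∃ L : ℝ≥0, 1 ≤ L ∧ ∀ x, ∀ u ρ : ℝ≥0, 1 ≤ ρ → (ρ : ℝ≥0∞) ^ p * φ x u ≤ L * φ x (ρ * u) := by
  obtain ⟨L, hL, h⟩ := h
  refine ⟨L, hL, fun x u ρ hρ => ?_⟩
  obtain rfl | hu := eq_zero_or_pos u
  · simp [hφ.zero x (mem_univ x)]
  obtain rfl | hρ := hρ.eq_or_lt
  · simpa using le_mul_of_one_le_left zero_le (by exact_mod_cast hL)
  have hu' : (u : ℝ≥0∞) ^ p ≠ ∞ := ENNReal.rpow_ne_top_of_nonneg hp.le ENNReal.coe_ne_top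
  have key := mul_le_mul_of_div_le_mul_div (coe_rpow_ne_zero hu p) hu'
    (coe_rpow_ne_zero (mul_pos (one_pos.trans hρ) hu) p)
    (ENNReal.rpow_ne_top_of_nonneg hp.le ENNReal.coe_ne_top)
    (h x (mem_univ x) u (ρ * u) hu (lt_mul_of_one_lt_left hu hρ))
  rw [ENNReal.coe_mul, ENNReal.mul_rpow_of_nonneg _ _ hp.le, mul_comm ((ρ : ℝ≥0∞) ^ p), mul_assoc,
    mul_left_comm (L : ℝ≥0∞)] at key
  exact (ENNReal.mul_le_mul_iff_right (coe_rpow_ne_zero hu p) hu').1 key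

theorem ADec.exists_le_rpow_mul {p : ℝ} (h : ADec p univ φ) (hφ : IsWeakPhi univ φ)
    (hp : 0 < p) :
    ∃ L : ℝ≥0, 1 ≤ L ∧ ∀ x, ∀ u ρ : ℝ≥0, 1 ≤ ρ → φ x (ρ * u) ≤ L * ((ρ : ℝ≥0∞) ^ p * φ x u) := by
  obtain ⟨L, hL, h⟩ := h
  refine ⟨L, hL, fun x u ρ hρ => ?_⟩
  obtain rfl | hu := eq_zero_or_pos u
  · simp [hφ.zero x (mem_univ x)]
  obtain rfl | hρ := hρ.eq_or_lt
  · simpa using le_mul_of_one_le_left zero_le (by exact_mod_cast hL)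
  have hu' : (u : ℝ≥0∞) ^ p ≠ ∞ := ENNReal.rpow_ne_top_of_nonneg hp.le ENNReal.coe_ne_top
  have key := mul_le_mul_of_div_le_mul_div
    (coe_rpow_ne_zero (mul_pos (one_pos.trans hρ) hu) p)
    (ENNReal.rpow_ne_top_of_nonneg hp.le ENNReal.coe_ne_top) (coe_rpow_ne_zero hu p) hu'
    (h x (mem_univ x) u (ρ * u) hu (lt_mul_of_one_lt_left hu hρ))
  rw [ENNReal.coe_mul, ENNReal.mul_rpow_of_nonneg _ _ hp.le, mul_comm ((ρ : ℝ≥0∞) ^ p), mul_assoc,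
    mul_left_comm (L : ℝ≥0∞)] at key
  exact (ENNReal.mul_le_mul_iff_right (coe_rpow_ne_zero hu p) hu').1 key

theorem IsWeakPhi.aInc_one (hφ : IsWeakPhi univ φ) : AInc 1 univ φ := by
  simpa only [AInc, ENNReal.rpow_one] using hφ.almost_inc

theorem AInc.exists_realInv_le {p : ℝ} (h : AInc p univ φ) (hφ : IsWeakPhi univ φ) (hp : 0 < p) :
    ∃ C, 0 < C ∧ ∀ x, ∀ s t : ℝ, 0 < t → t ≤ s →
      realInv φ x s ≤ C * (s / t) ^ (1 / p) * realInv φ x t := by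
  obtain ⟨L, hL, h⟩ := h.exists_rpow_mul_le hφ hp
  have : (1 : ℝ) ≤ L := mod_cast hL
  refine ⟨(L : ℝ) ^ (1 / p), by positivity, fun x s t ht hts => ?_⟩
  have hst : 1 ≤ s / t := (one_le_div ht).2 hts
  rw [← Real.mul_rpow (by positivity) (by positivity)]
  have hc : 1 ≤ (L * (s / t)) ^ (1 / p) := Real.one_le_rpow (by nlinarith) (by positivity)
  refine hφ.realInv_le_mul (by positivity) fun u hu => ?_
  have hmul : ((Real.toNNReal ((L * (s / t)) ^ (1 / p)) : ℝ≥0) : ℝ≥0∞) ^ p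
      = L * ENNReal.ofReal (s / t) := by
    change ENNReal.ofReal _ ^ p = _
    rw [ENNReal.ofReal_rpow_of_nonneg (by positivity) hp.le, ← Real.rpow_mul (by positivity),
      one_div_mul_cancel hp.ne', Real.rpow_one, ENNReal.ofReal_mul L.coe_nonneg,
      ENNReal.ofReal_coe_nnreal]
  have key := (mul_le_mul_right hu _).trans (h x u _ (Real.one_le_toNNReal.2 hc))
  rw [hmul, mul_assoc, ← ENNReal.ofReal_mul (by positivity), div_mul_cancel₀ _ ht.ne'] at key
  exact (ENNReal.mul_le_mul_iff_right (by simpa using (one_pos.trans_le hL).ne')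
    ENNReal.coe_ne_top).1 key

theorem ADec.exists_rpow_mul_realInv_le {r : ℝ} (h : ADec (1 / r) univ φ)
    (hφ : IsWeakPhi univ φ) (hr : 0 < r) :
    ∃ C, 0 < C ∧ ∀ x, ∀ s t : ℝ, 0 < t → t ≤ s →
      (s / t) ^ r * realInv φ x t ≤ C * realInv φ x s := by
  obtain ⟨L, hL, h⟩ := h.exists_le_rpow_mul hφ (one_div_pos.2 hr)
  have : (1 : ℝ) ≤ L := mod_cast hL
  refine ⟨(L : ℝ) ^ r, by positivity, fun x s t ht hts => ?_⟩
  have hs : 0 < s := ht.trans_le hts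
  obtain hst | hst := lt_or_ge (s / t) L
  · have := hφ.realInv_pos x ht
    gcongr
    exact hφ.realInv_mono x hts
  set ρ : ℝ := (s / t / L) ^ r with hρ
  have hρ₁ : 1 ≤ ρ := Real.one_le_rpow ((one_le_div (by positivity)).2 hst) hr.le
  have hpow : (L : ℝ≥0∞) * ((ρ.toNNReal : ℝ≥0) : ℝ≥0∞) ^ (1 / r) = ENNReal.ofReal (s / t) := by
    change (L : ℝ≥0∞) * ENNReal.ofReal ρ ^ (1 / r) = _
    rw [ENNReal.ofReal_rpow_of_nonneg (by positivity) (by positivity), hρ,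
      ← Real.rpow_mul (by positivity), mul_one_div_cancel hr.ne', Real.rpow_one,
      ← ENNReal.ofReal_coe_nnreal, ← ENNReal.ofReal_mul L.coe_nonneg,
      mul_div_cancel₀ _ (by positivity)]
  have key : realInv φ x t ≤ ρ⁻¹ * realInv φ x s := by
    refine hφ.realInv_le_mul (by positivity) fun u hu => ?_
    have hcancel : u = ρ.toNNReal * (ρ⁻¹.toNNReal * u) := by
      rw [← mul_assoc, ← Real.toNNReal_mul (by positivity), mul_inv_cancel₀ (by positivity),
        Real.toNNReal_one, one_mul]
    rw [hcancel] at hu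
    have hle := hu.trans (h x _ _ (Real.one_le_toNNReal.2 hρ₁))
    rw [← mul_assoc, hpow, ← div_mul_cancel₀ s ht.ne', ENNReal.ofReal_mul (by positivity),
      div_mul_cancel₀ _ ht.ne'] at hle
    exact (ENNReal.mul_le_mul_iff_right (ENNReal.ofReal_pos.2 (by positivity)).ne'
      ENNReal.ofReal_ne_top).1 hle
  calc (s / t) ^ r * realInv φ x t ≤ (s / t) ^ r * (ρ⁻¹ * realInv φ x s) := by gcongr
    _ = (L : ℝ) ^ r * realInv φ x s := by
        rw [hρ, Real.div_rpow (by positivity : 0 ≤ s / t) L.coe_nonneg]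
        field_simp

end GeneralizedInverse

/-! ### Power growth -/

section Growth

/-- `Φ` is positive and nondecreasing, and on `(0, ∞)` it grows, up to the constant `C`, at
least like `t ^ u` and at most like `t ^ v`. -/
structure HasGrowth (u v C : ℝ) (Φ : ℝ → ℝ) : Prop where
  pos : ∀ {t}, 0 < t → 0 < Φ t
  mono : Monotone Φ
  lower : ∀ {s t}, 0 < t → t ≤ s → (s / t) ^ u * Φ t ≤ C * Φ s
  upper : ∀ {s t}, 0 < t → t ≤ s → Φ s ≤ C * (s / t) ^ v * Φ t

namespace HasGrowth

variable {a u v C D s t e l : ℝ} {Φ Ψ Φ' Ψ' : ℝ → ℝ}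

theorem one_le (h : HasGrowth u v C Φ) : 1 ≤ C := by
  have h₁ := h.lower one_pos le_rfl
  rw [div_one, Real.one_rpow] at h₁
  exact (mul_le_mul_iff_left₀ (h.pos one_pos)).1 h₁

theorem of_rpow_mul (h : HasGrowth u v C Φ) (hpos : ∀ {t}, 0 < t → 0 < Ψ t) (hmono : Monotone Ψ)
    (hD : 0 < D) (hΨΦ : ∀ t, 0 < t → t ^ a * Ψ t ≤ D * Φ t)
    (hΦΨ : ∀ t, 0 < t → Φ t ≤ D * (t ^ a * Ψ t)) :
    HasGrowth (u - a) (v - a) (C * D ^ 2) Ψ := by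
  have hC := one_pos.trans_le h.one_le
  refine ⟨hpos, hmono, fun {s t} ht hts => ?_, fun {s t} ht hts => ?_⟩ <;>
    have hs := ht.trans_le hts <;>
    refine le_of_mul_le_mul_left ?_ (Real.rpow_pos_of_pos hs a)
  · calc s ^ a * ((s / t) ^ (u - a) * Ψ t) = (s / t) ^ u * (t ^ a * Ψ t) := by
          rw [Real.rpow_sub (by positivity), Real.div_rpow hs.le ht.le a]
          field_simp
      _ ≤ (s / t) ^ u * (D * Φ t) := mul_le_mul_of_nonneg_left (hΨΦ t ht) (by positivity)
      _ = D * ((s / t) ^ u * Φ t) := by ring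
      _ ≤ D * (C * (D * (s ^ a * Ψ s))) :=
          mul_le_mul_of_nonneg_left ((h.lower ht hts).trans (by gcongr; exact hΦΨ s hs)) hD.le
      _ = s ^ a * (C * D ^ 2 * Ψ s) := by ring
  · calc s ^ a * Ψ s ≤ D * Φ s := hΨΦ s hs
      _ ≤ D * (C * (s / t) ^ v * (D * (t ^ a * Ψ t))) := by
          gcongr
          exact (h.upper ht hts).trans (by gcongr; exact hΦΨ t ht)
      _ = s ^ a * (C * D ^ 2 * (s / t) ^ (v - a) * Ψ t) := by
          rw [Real.rpow_sub (by positivity), Real.div_rpow hs.le ht.le a]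
          field_simp

theorem mul_le (h : HasGrowth u v C Φ) (hu : 0 < u) (ht : 0 < t) (hl : 1 ≤ l) :
    l * Φ t ≤ C * Φ (l ^ (1 / u) * t) := by
  have hlu : 1 ≤ l ^ (1 / u) := Real.one_le_rpow hl (by positivity)
  have := h.lower ht (le_mul_of_one_le_left ht.le hlu)
  rwa [mul_div_cancel_right₀ _ ht.ne', ← Real.rpow_mul (by positivity),
    one_div_mul_cancel hu.ne', Real.rpow_one] at this

theorem mul_le_max (h : HasGrowth u v C Φ) (hu : 0 < u) (ht : 0 < t) :
    l * Φ t ≤ C * Φ (max (l ^ (1 / u) * t) t) := by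
  have hC := one_pos.trans_le h.one_le
  obtain hl | hl := le_total 1 l
  · exact (h.mul_le hu ht hl).trans (by gcongr; exact h.mono (le_max_left _ _))
  · have := h.pos ht
    calc l * Φ t ≤ C * Φ t := by gcongr; exact hl.trans h.one_le
      _ ≤ C * Φ (max (l ^ (1 / u) * t) t) := by gcongr; exact h.mono (le_max_right _ _)

theorem max_le (h : HasGrowth u v C Φ) (ht : 0 < t) (hts : t ≤ s) (hl : 0 < l) :
    Φ (max (l * s) e) ≤ C * (s / t) ^ v * Φ (max (l * t) e) := by
  have hpos : 0 < max (l * t) e := lt_max_of_lt_left (by positivity)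
  have hst : 1 ≤ s / t := (one_le_div ht).2 hts
  have hle : max (l * s) e ≤ s / t * max (l * t) e := by
    refine _root_.max_le ?_ ((le_max_right _ _).trans (le_mul_of_one_le_left hpos.le hst))
    calc l * s = s / t * (l * t) := by field_simp
      _ ≤ s / t * max (l * t) e := by gcongr; exact le_max_left _ _
  have := h.upper hpos (le_mul_of_one_le_left hpos.le hst)
  rw [mul_div_cancel_right₀ _ hpos.ne'] at this
  exact (h.mono hle).trans this

theorem le_of_le_of_mem_Icc (h : HasGrowth u v C Φ) (h' : HasGrowth u v C Φ') {τ : ℝ} (ht : 0 < t)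
    (htτ : t ≤ τ) (hτs : τ ≤ s) (hD : 0 ≤ D) (hle : Φ' τ ≤ D * Φ τ) :
    Φ' s ≤ C ^ 2 * D * (s / t) ^ v * Φ t := by
  have hC := one_pos.trans_le h.one_le
  have hτ := ht.trans_le htτ
  have hs := hτ.trans_le hτs
  calc Φ' s ≤ C * (s / τ) ^ v * (D * (C * (τ / t) ^ v * Φ t)) := by
        refine (h'.upper hτ hτs).trans ?_
        gcongr
        exact hle.trans (by gcongr; exact h.upper ht htτ)
    _ = C ^ 2 * D * ((s / τ) ^ v * (τ / t) ^ v) * Φ t := by ring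
    _ = C ^ 2 * D * (s / t) ^ v * Φ t := by
        rw [← Real.mul_rpow (by positivity) (by positivity), div_mul_div_cancel₀ hτ.ne']

theorem mul_le_of_le_max (h : HasGrowth u v C Φ) (h' : HasGrowth u v C Φ') (hu : 0 < u)
    (hs : 0 < s) (hl : 1 ≤ l) (hD : 0 ≤ D) (hle : Φ' (max s e) ≤ D * Φ (max s e)) :
    l * Φ' s ≤ C ^ 2 * D * Φ (max (l ^ (1 / u) * s) e) := by
  have hC := one_pos.trans_le h.one_le
  set τ := max s e with hτ
  have hsτ : s ≤ τ := le_max_left _ _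
  have hτ₀ : 0 < τ := hs.trans_le hsτ
  have hlower : Φ' s ≤ (s / τ) ^ u * (C * Φ' τ) := by
    rw [← inv_div, Real.inv_rpow (by positivity), ← div_eq_inv_mul, le_div_iff₀' (by positivity)]
    exact h'.lower hs hsτ
  have hpow : (l * (s / τ) ^ u) ^ (1 / u) * τ = l ^ (1 / u) * s := by
    rw [Real.mul_rpow (by positivity) (by positivity), ← Real.rpow_mul (by positivity),
      mul_one_div_cancel hu.ne', Real.rpow_one]
    field_simp
  have hlu : 1 ≤ l ^ (1 / u) := Real.one_le_rpow hl (by positivity)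
  calc l * Φ' s ≤ l * ((s / τ) ^ u * (C * (D * Φ τ))) := by
        gcongr
        exact hlower.trans (by gcongr)
    _ = C * D * (l * (s / τ) ^ u * Φ τ) := by ring
    _ ≤ C * D * (C * Φ (max (l ^ (1 / u) * s) τ)) :=
        mul_le_mul_of_nonneg_left ((h.mul_le_max hu hτ₀).trans_eq (by rw [hpow])) (by positivity)
    _ = C ^ 2 * D * Φ (max (l ^ (1 / u) * s) e) := by
        rw [hτ, ← max_assoc, max_eq_left (le_mul_of_one_le_left hs.le hlu)]
        ring

theorem mul_le_of_comparable (h : HasGrowth u v C Φ) (h' : HasGrowth u v C Φ') (hu : 0 < u)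
    (ht : 0 < t) (hts : t ≤ s) (hl : 1 ≤ l) (hD : 0 ≤ D)
    (hlarge : Φ' (max t 1) ≤ D * Φ (max t 1))
    (hsmall : s ≤ 1 → Φ' (max s e) ≤ D * Φ (max s e)) :
    l * Φ' s ≤ C ^ 3 * D * (s / t) ^ v * Φ (max (l ^ (1 / u) * t) e) := by
  have hC := one_pos.trans_le h.one_le
  have hs := ht.trans_le hts
  obtain hs₁ | hs₁ := le_total 1 s
  · calc l * Φ' s ≤ l * (C ^ 2 * D * (s / t) ^ v * Φ t) := by
          gcongr
          exact h.le_of_le_of_mem_Icc h' ht (le_max_left _ _) (_root_.max_le hts hs₁) hD hlarge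
      _ = C ^ 2 * D * (s / t) ^ v * (l * Φ t) := by ring
      _ ≤ C ^ 2 * D * (s / t) ^ v * (C * Φ (max (l ^ (1 / u) * t) e)) :=
          mul_le_mul_of_nonneg_left ((h.mul_le hu ht hl).trans
            (by gcongr; exact h.mono (le_max_left _ _))) (by positivity)
      _ = C ^ 3 * D * (s / t) ^ v * Φ (max (l ^ (1 / u) * t) e) := by ring
  · calc l * Φ' s ≤ C ^ 2 * D * Φ (max (l ^ (1 / u) * s) e) :=
          h.mul_le_of_le_max h' hu hs hl hD (hsmall hs₁)
      _ ≤ C ^ 2 * D * (C * (s / t) ^ v * Φ (max (l ^ (1 / u) * t) e)) := by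
          gcongr
          exact h.max_le ht hts (by positivity)
      _ = C ^ 3 * D * (s / t) ^ v * Φ (max (l ^ (1 / u) * t) e) := by ring

end HasGrowth

theorem le_of_rpow_mul_le {a D τ x x' y y' : ℝ} (hτ : 0 < τ) (hD : 0 ≤ D)
    (hy' : τ ^ a * y' ≤ D * x') (hx : x' ≤ D * x) (hy : x ≤ D * (τ ^ a * y)) :
    y' ≤ D ^ 3 * y := by
  refine le_of_mul_le_mul_left ?_ (Real.rpow_pos_of_pos hτ a)
  calc τ ^ a * y' ≤ D * (D * (D * (τ ^ a * y))) :=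
        hy'.trans (by gcongr; exact hx.trans (by gcongr))
    _ = τ ^ a * (D ^ 3 * y) := by ring

variable {φ ψ : RSp n → ℝ≥0 → ℝ≥0∞} {α p r : ℝ}

theorem IsWeakPhi.exists_hasGrowth_realInv (hφ : IsWeakPhi univ φ) (hp : 0 < p) (hr : 0 < r)
    (hinc : AInc p univ φ) (hdec : ADec (1 / r) univ φ) :
    ∃ C, ∀ x, HasGrowth r (1 / p) C (realInv φ x) := by
  obtain ⟨C, hC, hupper⟩ := hinc.exists_realInv_le hφ hp
  obtain ⟨D, hD, hlower⟩ := hdec.exists_rpow_mul_realInv_le hφ hr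
  refine ⟨C + D, fun x => ⟨hφ.realInv_pos x, hφ.realInv_mono x, fun {s t} ht hts => ?_,
    fun {s t} ht hts => ?_⟩⟩
  · have := hφ.realInv_pos x (ht.trans_le hts)
    exact (hlower x s t ht hts).trans (by gcongr; linarith)
  · have := hφ.realInv_pos x ht
    have := ht.trans_le hts
    exact (hupper x s t ht hts).trans (by gcongr; linarith)

theorem FracInvRel.exists_realInv (h : FracInvRel α φ ψ) (hφ : IsWeakPhi univ φ)
    (hψ : IsWeakPhi univ ψ) :
    ∃ D, 1 ≤ D ∧ ∀ x, ∀ t : ℝ, 0 < t →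
      t ^ (α / n) * realInv ψ x t ≤ D * realInv φ x t ∧
      realInv φ x t ≤ D * (t ^ (α / n) * realInv ψ x t) := by
  obtain ⟨c₁, c₂, hc₁, h⟩ := h
  have hc₁' : (0 : ℝ) < c₁ := hc₁
  refine ⟨1 + (c₁ : ℝ)⁻¹ + c₂, by linarith [c₂.coe_nonneg, inv_pos.2 hc₁'], fun x t ht => ?_⟩
  have hψx := hψ.realInv_pos x ht
  have hφx := hφ.realInv_pos x ht
  have key := h x t.toNNReal (Real.toNNReal_pos.2 ht)
  change (c₁ : ℝ≥0∞) * (ENNReal.ofReal t ^ (α / (n : ℝ)) * phiInv ψ x (ENNReal.ofReal t)) ≤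
    phiInv φ x (ENNReal.ofReal t) ∧ phiInv φ x (ENNReal.ofReal t) ≤
    (c₂ : ℝ≥0∞) * (ENNReal.ofReal t ^ (α / (n : ℝ)) * phiInv ψ x (ENNReal.ofReal t)) at key
  rw [ENNReal.ofReal_rpow_of_pos ht, ← hφ.ofReal_realInv, ← hψ.ofReal_realInv,
    ← ENNReal.ofReal_mul (by positivity), ← ENNReal.ofReal_coe_nnreal,
    ← ENNReal.ofReal_coe_nnreal (p := c₂), ← ENNReal.ofReal_mul (by positivity),
    ← ENNReal.ofReal_mul (by positivity), ENNReal.ofReal_le_ofReal_iff hφx.le,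
    ENNReal.ofReal_le_ofReal_iff (by positivity)] at key
  constructor
  · calc t ^ (α / n) * realInv ψ x t
        = (c₁ : ℝ)⁻¹ * (c₁ * (t ^ (α / n) * realInv ψ x t)) := by field_simp
      _ ≤ (c₁ : ℝ)⁻¹ * realInv φ x t := by gcongr; exact key.1
      _ ≤ (1 + (c₁ : ℝ)⁻¹ + c₂) * realInv φ x t := by gcongr; linarith [c₂.coe_nonneg]
  · exact key.2.trans (by gcongr; linarith [inv_pos.2 hc₁'])

end Growth

/-! ### Comparison of the inverses at different points -/

section Comparison

variable {φ ψ : RSp n → ℝ≥0 → ℝ≥0∞}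

theorem ae_ae_mul_le_swap {E : Type*} [MeasurableSpace E] {μ : Measure E} {F : E → ℝ≥0∞}
    {c : ℝ≥0∞} (h : ∀ᵐ x ∂μ, ∀ᵐ y ∂μ, c * F x ≤ F y) : ∀ᵐ x ∂μ, ∀ᵐ y ∂μ, c * F y ≤ F x := by
  have hle : ∀ᵐ y ∂μ, c * F y ≤ essInf F μ := h.mono fun y hy => le_essInf_of_ae_le _ hy
  filter_upwards [ae_essInf_le (f := F) (μ := μ)] with x hx
  exact hle.mono fun y hy => hy.trans hx

theorem A1.ae_ae_two_pow (h : A1 φ) : ∃ β : ℝ≥0, 0 < β ∧ ∀ Q : Cube n,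
    ∀ᵐ x ∂volume.restrict Q.set, ∀ᵐ y ∂volume.restrict Q.set, ∀ k : ℕ,
      (2 : ℝ≥0∞) ^ k ≤ (volume Q.set)⁻¹ → β * phiInv φ y (2 ^ k) ≤ phiInv φ x (2 ^ k) := by
  obtain ⟨β, hβ, -, h⟩ := h
  refine ⟨β, hβ, fun Q => ?_⟩
  simp_rw [ae_all_iff]
  intro k
  by_cases hk : (2 : ℝ≥0∞) ^ k ≤ (volume Q.set)⁻¹
  swap
  · simp [hk]
  have hk₁ : (1 : ℝ≥0∞) ≤ 2 ^ k := one_le_pow₀ one_le_two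
  have key := ae_ae_mul_le_swap ((h Q (ENNReal.one_le_inv.1 (hk₁.trans hk))).mono fun x hx =>
    hx.mono fun y hy => hy (2 ^ k) hk₁ hk)
  simpa only [hk, forall_const] using key

theorem A1.ae_ae_realInv_le (h : A1 φ) (hφ : IsWeakPhi univ φ) {u v D : ℝ} (hv : 0 ≤ v)
    (hgrowth : ∀ x, HasGrowth u v D (realInv φ x)) :
    ∃ C, 0 ≤ C ∧ ∀ Q : Cube n, ∀ᵐ x ∂volume.restrict Q.set, ∀ᵐ y ∂volume.restrict Q.set,
      ∀ t : ℝ, 1 ≤ t → ENNReal.ofReal t ≤ (volume Q.set)⁻¹ →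
        realInv φ y t ≤ C * realInv φ x t := by
  obtain ⟨β, hβ, h⟩ := h.ae_ae_two_pow
  have hβ' : (0 : ℝ) < β := hβ
  have hD := one_pos.trans_le (hgrowth 0).one_le
  refine ⟨D * 2 ^ v * (β : ℝ)⁻¹, by positivity, fun Q => (h Q).mono fun x hx => hx.mono ?_⟩
  intro y hxy t ht htQ
  obtain ⟨k, hkt, htk⟩ := exists_nat_pow_near ht one_lt_two
  have hofReal : (2 : ℝ≥0∞) ^ k = ENNReal.ofReal (2 ^ k) := by
    rw [ENNReal.ofReal_pow two_pos.le, ENNReal.ofReal_ofNat]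
  have hle : β * realInv φ y (2 ^ k) ≤ realInv φ x (2 ^ k) := by
    have := hxy k (hofReal ▸ (ENNReal.ofReal_le_ofReal hkt).trans htQ)
    rwa [hofReal, ← hφ.ofReal_realInv, ← hφ.ofReal_realInv, ← ENNReal.ofReal_coe_nnreal,
      ← ENNReal.ofReal_mul hβ'.le,
      ENNReal.ofReal_le_ofReal_iff (hφ.realInv_pos x (by positivity)).le] at this
  have := hφ.realInv_pos y (t := 2 ^ k) (by positivity)
  calc realInv φ y t ≤ D * (t / 2 ^ k) ^ v * realInv φ y (2 ^ k) :=
        (hgrowth y).upper (by positivity) hkt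
    _ ≤ D * 2 ^ v * ((β : ℝ)⁻¹ * (β * realInv φ y (2 ^ k))) := by
        rw [inv_mul_cancel_left₀ hβ'.ne']
        gcongr
        rw [div_le_iff₀ (by positivity), ← pow_succ']
        exact htk.le
    _ ≤ D * 2 ^ v * ((β : ℝ)⁻¹ * realInv φ x t) := by
        gcongr
        exact hle.trans (hφ.realInv_mono x hkt)
    _ = D * 2 ^ v * (β : ℝ)⁻¹ * realInv φ x t := by ring

theorem A0.ae_realInv_one (h : A0 univ φ) (hφ : IsWeakPhi univ φ) :
    ∃ C, 0 < C ∧ ∀ᵐ x, 1 ≤ C * realInv φ x 1 ∧ realInv φ x 1 ≤ C := by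
  obtain ⟨β, hβ, -, h⟩ := h
  have hβ' : (0 : ℝ) < β := hβ
  rw [Measure.restrict_univ] at h
  refine ⟨(β : ℝ)⁻¹, by positivity, h.mono fun x hx => ?_⟩
  rw [← ENNReal.ofReal_one, ← hφ.ofReal_realInv, ← ENNReal.coe_inv hβ.ne',
    ← ENNReal.ofReal_coe_nnreal, ← ENNReal.ofReal_coe_nnreal,
    ENNReal.ofReal_le_ofReal_iff (hφ.realInv_pos x one_pos).le,
    ENNReal.ofReal_le_ofReal_iff (by positivity), NNReal.coe_inv] at hx
  refine ⟨?_, hx.2⟩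
  rw [inv_mul_eq_div, one_le_div hβ']
  exact hx.1

theorem A1.ae_ae_realInv_max_one_le (h : A1 φ) (h₀ : A0 univ φ) (hφ : IsWeakPhi univ φ)
    {u v D : ℝ} (hv : 0 ≤ v) (hgrowth : ∀ x, HasGrowth u v D (realInv φ x)) :
    ∃ C, 0 ≤ C ∧ ∀ Q : Cube n, ∀ᵐ x ∂volume.restrict Q.set, ∀ᵐ y ∂volume.restrict Q.set,
      ∀ t : ℝ, ENNReal.ofReal t ≤ (volume Q.set)⁻¹ →
        realInv φ y (max t 1) ≤ C * realInv φ x (max t 1) := by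
  obtain ⟨C₀, hC₀, h₀⟩ := h₀.ae_realInv_one hφ
  obtain ⟨C₁, hC₁, h₁⟩ := h.ae_ae_realInv_le hφ hv hgrowth
  refine ⟨C₁ + C₀ * C₀, by positivity, fun Q => ?_⟩
  filter_upwards [h₁ Q, ae_restrict_of_ae h₀] with x hx₁ hx₀
  filter_upwards [hx₁, ae_restrict_of_ae h₀] with y hy₁ hy₀
  intro t ht
  obtain h1t | ht1 := le_total 1 t
  · rw [max_eq_left h1t]
    have := hφ.realInv_pos x (one_pos.trans_le h1t)
    exact (hy₁ t h1t ht).trans (by gcongr; linarith [mul_pos hC₀ hC₀])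
  · rw [max_eq_right ht1]
    have := hφ.realInv_pos x one_pos
    calc realInv φ y 1 ≤ C₀ * 1 := by rw [mul_one]; exact hy₀.2
      _ ≤ C₀ * (C₀ * realInv φ x 1) := by gcongr; exact hx₀.1
      _ = C₀ * C₀ * realInv φ x 1 := by ring
      _ ≤ (C₁ + C₀ * C₀) * realInv φ x 1 := by gcongr; linarith

/-- The least `d` with `χ' (β * u) ≤ χ u + d` for all rational `u` with `χ u ≤ s`. The function
`h` in condition (A2) is not assumed measurable; the sum of two such defects is a measurable
substitute for it, measurability being the reason for restricting `u` to the rationals. -/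
noncomputable def defect (β s : ℝ≥0) (χ χ' : ℝ≥0 → ℝ≥0∞) : ℝ≥0∞ :=
  ⨆ u : ℚ≥0, if χ u ≤ s then χ' (β * u) - χ u else 0

section Defect

variable {β s : ℝ≥0} {χ χ' : ℝ≥0 → ℝ≥0∞}

theorem le_add_defect {u : ℚ≥0} (h : χ u ≤ s) : χ' (β * u) ≤ χ u + defect β s χ χ' := by
  rw [← tsub_le_iff_left]
  refine le_iSup_of_le u ?_
  rw [if_pos h]

theorem defect_le {d : ℝ≥0∞} (h : ∀ u : ℝ≥0, χ u ≤ s → χ' (β * u) ≤ χ u + d) :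
    defect β s χ χ' ≤ d := by
  refine iSup_le fun u => ?_
  split_ifs with hu
  · exact tsub_le_iff_left.2 (h u hu)
  · exact zero_le

theorem IsWeakPhi.aemeasurable_const (hφ : IsWeakPhi univ φ) (c : ℝ≥0) :
    AEMeasurable (fun x => φ x c) := by
  simpa using hφ.meas (fun _ => c) measurable_const

theorem IsWeakPhi.aemeasurable_defect_add (hφ : IsWeakPhi univ φ) (β s : ℝ≥0)
    (χ : ℝ≥0 → ℝ≥0∞) :
    AEMeasurable fun x => defect β s χ (φ x) + defect β s (φ x) χ := by
  refine .add (.iSup fun u => ?_) (.iSup fun u => ?_)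
  · split_ifs
    · exact (hφ.aemeasurable_const _).sub_const _
    · exact _root_.aemeasurable_const
  · have : Measurable fun v : ℝ≥0∞ => if v ≤ s then χ (β * u) - v else 0 :=
      .ite measurableSet_Iic (measurable_const.sub measurable_id) measurable_const
    exact this.comp_aemeasurable (hφ.aemeasurable_const _)

variable {L M : ℝ≥0} {N : ℕ} {T : ℝ≥0∞}

theorem natCast_mul_apply_div_le (hN : N ≠ 0)
    (hχ : ∀ u ρ : ℝ≥0, 1 ≤ ρ → (ρ : ℝ≥0∞) * χ u ≤ L * χ (ρ * u)) (u : ℝ≥0) :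
    N * χ (u / N) ≤ L * χ u := by
  have h := hχ (u / N) N (mod_cast Nat.one_le_iff_ne_zero.2 hN)
  rwa [mul_div_cancel₀ _ (by simpa using hN), ENNReal.coe_natCast] at h

theorem apply_div_sq_le_of_defect_le (hβ : 1 ≤ β * N) (hL : L * (1 + M) < N)
    (hLs : L * (1 + M) ≤ N * s) (hχ : ∀ u ρ : ℝ≥0, 1 ≤ ρ → (ρ : ℝ≥0∞) * χ u ≤ L * χ (ρ * u))
    (hχ' : Monotone χ') (hT : T ≤ 1) (hd : defect β s χ χ' ≤ M * T) {u : ℚ≥0}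
    (hu : χ u ≤ (1 + M) * T) : χ' ((u / (N : ℚ≥0) ^ 2 : ℚ≥0)) ≤ (1 + M) * T := by
  have hN : N ≠ 0 := by rintro rfl; simp at hL
  have hN' : (N : ℝ≥0∞) ≠ 0 := by simpa using hN
  have hNtop : (N : ℝ≥0∞) ≠ ∞ := ENNReal.natCast_ne_top N
  have hw : N * χ (u / N) ≤ L * (1 + M) * T := by
    rw [mul_assoc]
    exact (natCast_mul_apply_div_le hN hχ u).trans (by gcongr)
  have hwT : χ (u / N) ≤ T := by
    refine (ENNReal.mul_le_mul_iff_right hN' hNtop).1 (hw.trans ?_)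
    gcongr
    exact_mod_cast hL.le
  have hws : χ (u / N) ≤ s := by
    refine (ENNReal.mul_le_mul_iff_right hN' hNtop).1 (hw.trans ?_)
    calc L * (1 + M) * T ≤ L * (1 + M) * 1 := by gcongr
      _ ≤ N * s := by rw [mul_one]; exact_mod_cast hLs
  have hcast : ((u / N : ℚ≥0) : ℝ≥0) = u / N := by push_cast; rfl
  have hdef := le_add_defect (χ' := χ') (β := β) (u := u / N) (hcast ▸ hws)
  calc χ' ((u / (N : ℚ≥0) ^ 2 : ℚ≥0)) ≤ χ' (β * (u / N : ℚ≥0)) := by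
        refine hχ' ?_
        push_cast
        calc (u : ℝ≥0) / N ^ 2 = 1 * (u / N ^ 2) := (one_mul _).symm
          _ ≤ β * N * (u / N ^ 2) := by gcongr
          _ = β * (u / N) := by field_simp
    _ ≤ T + M * T := hdef.trans (add_le_add (hcast ▸ hwT) hd)
    _ = (1 + M) * T := by ring

theorem apply_div_pow_five_lt_of_defect_le {χi : ℝ≥0 → ℝ≥0∞} (hβ : 1 ≤ β * N)
    (hL : L * (1 + M) < N) (hLs : L * (1 + M) ≤ N * s)
    (hχ : ∀ u ρ : ℝ≥0, 1 ≤ ρ → (ρ : ℝ≥0∞) * χ u ≤ L * χ (ρ * u))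
    (hχi : ∀ u ρ : ℝ≥0, 1 ≤ ρ → (ρ : ℝ≥0∞) * χi u ≤ L * χi (ρ * u))
    (hχ' : ∀ u ρ : ℝ≥0, 1 ≤ ρ → (ρ : ℝ≥0∞) * χ' u ≤ L * χ' (ρ * u))
    (hχi_mono : Monotone χi) (hχ'_mono : Monotone χ') (hT₀ : T ≠ 0) (hT : T ≤ 1)
    (hd : defect β s χ χi ≤ M * T) (hd' : defect β s χi χ' ≤ M * T) {u : ℚ≥0} (hu : χ u < T) :
    χ' (u / N ^ 5) < T := by
  have hN : N ≠ 0 := by rintro rfl; simp at hL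
  have hu' : χ u ≤ (1 + M) * T := hu.le.trans (le_mul_of_one_le_left' le_self_add)
  have h₂ := apply_div_sq_le_of_defect_le hβ hL hLs hχ hχi_mono hT hd hu'
  have h₄ := apply_div_sq_le_of_defect_le hβ hL hLs hχi hχ'_mono hT hd' h₂
  have hcast : ((u / (N : ℚ≥0) ^ 2 / (N : ℚ≥0) ^ 2 : ℚ≥0) : ℝ≥0) / N = u / N ^ 5 := by
    push_cast
    field_simp
  have h₅ := natCast_mul_apply_div_le hN hχ' (u / (N : ℚ≥0) ^ 2 / (N : ℚ≥0) ^ 2 : ℚ≥0)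
  rw [hcast] at h₅
  refine lt_of_mul_lt_mul_left' (a := (N : ℝ≥0∞)) ((h₅.trans (mul_le_mul_right h₄ _)).trans_lt ?_)
  rw [← mul_assoc]
  exact ENNReal.mul_lt_mul_left hT₀ (ne_top_of_le_ne_top one_ne_top hT) (mod_cast hL)

end Defect

theorem IsWeakPhi.exists_realInv_le_of_defect_le {φi : ℝ≥0 → ℝ≥0∞} (hφ : IsWeakPhi univ φ)
    (hφi : IsWeakPhi univ fun _ : RSp n => φi) {β s : ℝ≥0} (hβ : 0 < β) (hs : 0 < s) (M : ℝ≥0) :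
    ∃ C : ℝ, 0 ≤ C ∧ ∀ x y, ∀ τ : ℝ, 0 < τ → τ ≤ 1 →
      defect β s φi (φ x) ≤ M * ENNReal.ofReal τ → defect β s (φ y) φi ≤ M * ENNReal.ofReal τ →
      realInv φ y τ ≤ C * realInv φ x τ := by
  obtain ⟨L₁, -, hL₁⟩ := hφ.aInc_one.exists_rpow_mul_le hφ one_pos
  obtain ⟨L₂, -, hL₂⟩ := hφi.aInc_one.exists_rpow_mul_le hφi one_pos
  simp only [ENNReal.rpow_one] at hL₁ hL₂
  set L := max L₁ L₂
  have hLφ : ∀ x (u ρ : ℝ≥0), 1 ≤ ρ → (ρ : ℝ≥0∞) * φ x u ≤ L * φ x (ρ * u) := fun x u ρ hρ =>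
    (hL₁ x u ρ hρ).trans (mul_le_mul_left (mod_cast le_max_left _ _) _)
  have hLφi : ∀ u ρ : ℝ≥0, 1 ≤ ρ → (ρ : ℝ≥0∞) * φi u ≤ L * φi (ρ * u) := fun u ρ hρ =>
    (hL₂ 0 u ρ hρ).trans (mul_le_mul_left (mod_cast le_max_right _ _) _)
  obtain ⟨N, hN⟩ := exists_nat_gt (β⁻¹ + L * (1 + M) + L * (1 + M) * s⁻¹)
  have hβN : 1 ≤ β * N := by
    rw [← inv_le_iff_one_le_mul₀' hβ]
    exact (le_self_add.trans le_self_add).trans hN.le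
  have hLN : L * (1 + M) < N := (le_add_self.trans le_self_add).trans_lt hN
  have hLs : L * (1 + M) ≤ N * s := by
    rw [← mul_inv_le_iff₀ hs]
    exact le_add_self.trans hN.le
  have hN₀ : (0 : ℝ) < N := by exact_mod_cast zero_le.trans_lt hLN
  refine ⟨N ^ 5, by positivity, fun x y τ hτ₀ hτ hx hy => le_of_forall_rat_lt_imp_le fun q hq => ?_⟩
  obtain hq₀ | hq₀ := le_total q 0
  · exact (Rat.cast_nonpos.2 hq₀).trans (mul_nonneg (by positivity) (hφ.realInv_pos x hτ₀).le)
  lift q to ℚ≥0 using hq₀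
  have hlt := apply_div_pow_five_lt_of_defect_le hβN hLN hLs (hLφ y) hLφi (hLφ x)
    (hφi.mono 0 trivial) (hφ.mono x trivial) (ENNReal.ofReal_pos.2 hτ₀).ne'
    (ENNReal.ofReal_le_one.2 hτ) hy hx (hφ.lt_of_lt_realInv hq)
  have hle := hφ.le_realInv hlt
  push_cast at hle ⊢
  rwa [div_le_iff₀' (by positivity)] at hle

theorem exists_measurable_le_mul_ofReal {E : Type*} [MeasurableSpace E] {μ : Measure E}
    [SigmaFinite μ] {w : E → ℝ≥0∞} (hw : AEMeasurable w μ) (hint : ∫⁻ x, w x ∂μ ≠ ∞) {B : ℝ≥0}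
    (hB : ∀ᵐ x ∂μ, w x ≤ B) :
    ∃ h : E → ℝ, Measurable h ∧ (∀ x, 0 < h x ∧ h x ≤ 1) ∧ ∫⁻ x, ENNReal.ofReal (h x) ∂μ ≠ ∞ ∧
      ∀ᵐ x ∂μ, w x ≤ (1 + B : ℝ≥0) * ENNReal.ofReal (h x) := by
  obtain ⟨g, hg₀, hgm, hg⟩ := exists_pos_lintegral_lt_of_sigmaFinite μ one_ne_zero
  let m : E → ℝ≥0∞ := fun x => min 1 (hw.mk w x + g x)
  have hm : ∀ x, m x ≤ 1 := fun x => min_le_left _ _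
  have hm_top : ∀ x, m x ≠ ∞ := fun x => ne_top_of_le_ne_top one_ne_top (hm x)
  have hofReal : ∀ x, ENNReal.ofReal (m x).toReal = m x := fun x => ENNReal.ofReal_toReal (hm_top x)
  have hm_pos : ∀ x, 0 < m x := fun x =>
    lt_min one_pos ((ENNReal.coe_pos.2 (hg₀ x)).trans_le le_add_self)
  have hmeas : Measurable m := measurable_const.min (hw.measurable_mk.add hgm.coe_nnreal_ennreal)
  refine ⟨fun x => (m x).toReal, hmeas.ennreal_toReal, fun x => ⟨?_, ?_⟩, ?_, ?_⟩
  · exact ENNReal.toReal_pos (hm_pos x).ne' (hm_top x)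
  · exact ENNReal.toReal_mono one_ne_top (hm x)
  · simp only [hofReal]
    refine ne_top_of_le_ne_top (b := ∫⁻ x, hw.mk w x + g x ∂μ) ?_
      (lintegral_mono fun x => min_le_right _ _)
    rw [lintegral_add_left hw.measurable_mk, ← lintegral_congr_ae hw.ae_eq_mk]
    exact ENNReal.add_ne_top.2 ⟨hint, hg.ne_top⟩
  · filter_upwards [hw.ae_eq_mk, hB] with x hx hBx
    rw [hofReal, mul_min, mul_one]
    refine le_min (hBx.trans (mod_cast le_add_self)) ?_
    rw [← hx]
    exact le_self_add.trans (le_mul_of_one_le_left' (mod_cast le_self_add))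

theorem A2.exists_comparable (h : A2 φ) (hφ : IsWeakPhi univ φ) :
    ∃ C : ℝ, 0 ≤ C ∧ ∃ h : RSp n → ℝ, Measurable h ∧ (∀ x, 0 < h x ∧ h x ≤ 1) ∧
      ∫⁻ x, ENNReal.ofReal (h x) ≠ ∞ ∧ ∀ᵐ x, ∀ᵐ y, ∀ τ ≤ 1, h x ≤ τ → h y ≤ τ →
        realInv φ y τ ≤ C * realInv φ x τ := by
  obtain ⟨φi, hφi, h₀, hint, ⟨M, hM⟩, β, hβ, -, s, hs, h⟩ := h
  have hdefect : ∀ᵐ x, defect β s φi (φ x) + defect β s (φ x) φi ≤ 2 * h₀ x := h.mono fun x hx =>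
    two_mul (h₀ x) ▸ add_le_add (defect_le fun u => (hx u).1) (defect_le fun u => (hx u).2)
  have hbound : ∀ᵐ x, defect β s φi (φ x) + defect β s (φ x) φi ≤ (2 * M : ℝ≥0) := by
    filter_upwards [hdefect, hM] with x hx hMx
    push_cast
    exact hx.trans (by gcongr)
  have hint' : ∫⁻ x, defect β s φi (φ x) + defect β s (φ x) φi ≠ ∞ := by
    refine ne_top_of_le_ne_top ?_ (lintegral_mono_ae hdefect)
    rw [lintegral_const_mul' _ _ (by finiteness)]
    finiteness
  obtain ⟨h, hmeas, h01, hh, hle⟩ := exists_measurable_le_mul_ofReal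
    (hφ.aemeasurable_defect_add β s φi) hint' hbound
  obtain ⟨C, hC, hcomp⟩ := hφ.exists_realInv_le_of_defect_le hφi hβ hs (1 + 2 * M)
  refine ⟨C, hC, h, hmeas, h01, hh, hle.mono fun x hx => hle.mono fun y hy τ hτ hxτ hyτ => ?_⟩
  refine hcomp x y τ ((h01 x).1.trans_le hxτ) hτ (le_self_add.trans (hx.trans ?_))
    (le_add_self.trans (hy.trans ?_)) <;> gcongr

theorem HasGrowth.mul_le_of_rpow_mul_comparable {a u v C D s t e l : ℝ} {Φ Φ' Ψ Ψ' : ℝ → ℝ}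
    (h : HasGrowth (u - a) (v - a) C Ψ) (h' : HasGrowth (u - a) (v - a) C Ψ') (hau : a < u)
    (hD : 0 ≤ D) (hΦΨ : ∀ τ, 0 < τ → Φ τ ≤ D * (τ ^ a * Ψ τ))
    (hΨΦ' : ∀ τ, 0 < τ → τ ^ a * Ψ' τ ≤ D * Φ' τ) (hΦΨ' : ∀ τ, 0 < τ → Φ' τ ≤ D * (τ ^ a * Ψ' τ))
    (ht : 0 < t) (hts : t ≤ s) (hl : 1 ≤ l) (hlarge : Φ' (max t 1) ≤ D * Φ (max t 1))
    (hsmall : s ≤ 1 → Φ' (max s e) ≤ D * Φ (max s e)) :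
    l * Φ' s ≤ C ^ 3 * D ^ 4 * (t ^ a * (s / t) ^ v) * Ψ (max (l ^ (1 / (u - a)) * t) e) := by
  have hs := ht.trans_le hts
  have hcomparable : ∀ {τ}, 0 < τ → Φ' τ ≤ D * Φ τ → Ψ' τ ≤ D ^ 3 * Ψ τ := fun {τ} hτ hle =>
    le_of_rpow_mul_le hτ hD (hΨΦ' τ hτ) hle (hΦΨ τ hτ)
  have hle := h.mul_le_of_comparable h' (sub_pos.2 hau) ht hts hl (by positivity)
    (hcomparable (lt_max_of_lt_left ht) hlarge)
    (fun hs₁ => hcomparable (lt_max_of_lt_left hs) (hsmall hs₁))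
  calc l * Φ' s ≤ l * (D * (s ^ a * Ψ' s)) := by
        gcongr
        exact hΦΨ' s hs
    _ = D * s ^ a * (l * Ψ' s) := by ring
    _ ≤ D * s ^ a * (C ^ 3 * D ^ 3 * (s / t) ^ (v - a) * Ψ (max (l ^ (1 / (u - a)) * t) e)) := by
        gcongr
    _ = C ^ 3 * D ^ 4 * (t ^ a * (s / t) ^ v) * Ψ (max (l ^ (1 / (u - a)) * t) e) := by
        rw [Real.rpow_sub (by positivity), Real.div_rpow hs.le ht.le a]
        field_simp

theorem ae_forall_ae_restrict_of_forall {ι : Type*} [Countable ι] (Q : ι → Cube n)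
    {p : ι → RSp n → RSp n → Prop}
    (h : ∀ i, ∀ᵐ x ∂volume.restrict (Q i).set, ∀ᵐ y ∂volume.restrict (Q i).set, p i x y) :
    ∀ᵐ x, ∀ i, x ∈ (Q i).set → ∀ᵐ y ∂volume.restrict (Q i).set, p i x y :=
  ae_all_iff.2 fun i => (ae_restrict_iff' (Q i).measurableSet).1 (h i)

/-- For almost all `y` in the cube `Q`, multiples of `φ⁻¹(y, s)` are bounded by values of
`ψ⁻¹(x, ·)`: this is how (A0)–(A2) and the growth of `φ` and `ψ` enter the estimate of the
commutator on `Q`. The factor `l` moves into the argument of `ψ⁻¹` at the price of the power `k`. -/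
def ScaledInvLE (φ ψ : RSp n → ℝ≥0 → ℝ≥0∞) (a v k K : ℝ) (h : RSp n → ℝ) (x : RSp n)
    (Q : Cube n) : Prop :=
  ∀ᵐ y ∂volume.restrict Q.set, ∀ s t l : ℝ, 0 < t → ENNReal.ofReal t ≤ (volume Q.set)⁻¹ →
    t ≤ s → h y ≤ s → 1 ≤ l →
      l * realInv φ y s ≤ K * (t ^ a * (s / t) ^ v) * realInv ψ x (max (l ^ k * t) (h x))

theorem FracInvRel.exists_scaledInvLE {α p r : ℝ} (h : FracInvRel α φ ψ) (hφ : IsWeakPhi univ φ)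
    (hψ : IsWeakPhi univ ψ) (hp : 0 < p) (hr : 0 < r) (hαr : α / n < r) (h₀ : A0 univ φ)
    (h₁ : A1 φ) (h₂ : A2 φ) (hinc : AInc p univ φ) (hdec : ADec (1 / r) univ φ)
    {ι : Type*} [Countable ι] (Q : ι → Cube n) :
    ∃ K, 0 ≤ K ∧ ∃ h : RSp n → ℝ, Measurable h ∧ (∀ x, 0 < h x) ∧
      ∫⁻ x, ENNReal.ofReal (h x) ≠ ∞ ∧ ∀ᵐ x, ∀ i, x ∈ (Q i).set →
        ScaledInvLE φ ψ (α / n) (1 / p) (1 / (r - α / n)) K h x (Q i) := by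
  obtain ⟨C, hC⟩ := hφ.exists_hasGrowth_realInv hp hr hinc hdec
  obtain ⟨D₀, hD₀, hD⟩ := h.exists_realInv hφ hψ
  obtain ⟨D₁, hD₁, hA1⟩ := h₁.ae_ae_realInv_max_one_le h₀ hφ (by positivity) hC
  obtain ⟨D₂, hD₂, w, hw, hw01, hw_int, hA2⟩ := h₂.exists_comparable hφ
  set D := D₀ + D₁ + D₂
  have hΨ : ∀ x, HasGrowth (r - α / n) (1 / p - α / n) (C * D₀ ^ 2) (realInv ψ x) := fun x =>
    (hC x).of_rpow_mul (hψ.realInv_pos x) (hψ.realInv_mono x) (by positivity)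
      (fun t ht => (hD x t ht).1) (fun t ht => (hD x t ht).2)
  have hC₀ := one_pos.trans_le (hC 0).one_le
  refine ⟨(C * D₀ ^ 2) ^ 3 * D ^ 4, by positivity, w, hw, fun x => (hw01 x).1, hw_int, ?_⟩
  filter_upwards [ae_forall_ae_restrict_of_forall Q fun i => hA1 (Q i), hA2] with x hx₁ hx₂ i hi
  filter_upwards [hx₁ i hi, ae_restrict_of_ae hx₂] with y hy₁ hy₂
  intro s t l ht htQ hts hys hl
  have hs := ht.trans_le hts
  refine (hΨ x).mul_le_of_rpow_mul_comparable (hΨ y) (Φ := realInv φ x) (Φ' := realInv φ y) hαr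
    (by positivity) (fun τ hτ => ?_) (fun τ hτ => ?_) (fun τ hτ => ?_) ht hts hl ?_ fun hs₁ => ?_
  · have := hψ.realInv_pos x hτ
    exact (hD x τ hτ).2.trans (mul_le_mul_of_nonneg_right (by linarith) (by positivity))
  · have := hφ.realInv_pos y hτ
    exact (hD y τ hτ).1.trans (mul_le_mul_of_nonneg_right (by linarith) (by positivity))
  · have := hψ.realInv_pos y hτ
    exact (hD y τ hτ).2.trans (mul_le_mul_of_nonneg_right (by linarith) (by positivity))
  · have := hφ.realInv_pos x (lt_max_of_lt_left ht : 0 < max t 1)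
    exact (hy₁ t htQ).trans (mul_le_mul_of_nonneg_right (by linarith) (by positivity))
  · have := hφ.realInv_pos x (lt_max_of_lt_left hs : 0 < max s (w x))
    exact (hy₂ _ (max_le hs₁ (hw01 x).2) (le_max_right _ _) (hys.trans (le_max_left _ _))).trans
      (mul_le_mul_of_nonneg_right (by linarith) (by positivity))

end Comparison

/-! ### The estimate on one cube -/

section CubeEstimate

theorem setLAverage_ne_zero {X : Type*} [MeasurableSpace X] {μ : Measure X} {s : Set X}
    {g : X → ℝ≥0∞} (hs₀ : μ s ≠ 0) (hs : μ s ≠ ∞) (hg : AEMeasurable g (μ.restrict s))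
    (hg₀ : ∀ᵐ x ∂μ.restrict s, g x ≠ 0) : ⨍⁻ x in s, g x ∂μ ≠ 0 := by
  rw [setLAverage_eq]
  refine ENNReal.div_ne_zero.2 ⟨fun h => hs₀ ?_, hs⟩
  have hfalse : ∀ᵐ _ ∂μ.restrict s, False := by
    filter_upwards [(lintegral_eq_zero_iff' hg).1 h, hg₀] with x hx hx₀ using hx₀ hx
  simpa [eventually_false_iff_eq_bot, ae_eq_bot] using hfalse

section Probability

variable {X : Type*} [MeasurableSpace X] {ν : Measure X} [IsProbabilityMeasure ν]

theorem lintegral_rpow_rpow_le {q : ℝ} (hq₀ : 0 < q) (hq : q ≤ 1) {g : X → ℝ≥0∞}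
    (hg : AEMeasurable g ν) : (∫⁻ x, g x ^ q ∂ν) ^ (1 / q) ≤ ∫⁻ x, g x ∂ν := by
  simpa [eLpNorm'] using eLpNorm'_le_eLpNorm'_of_exponent_le hq₀ hq ν hg.aestronglyMeasurable

theorem lintegral_mul_max_rpow_le {p s s' : ℝ} (hp : 0 < p) (hs : s'.HolderConjugate s)
    {w g : X → ℝ≥0∞} (hw : AEMeasurable w ν) (hg : AEMeasurable g ν) {A B T : ℝ≥0∞}
    (hwB : ∫⁻ x, w x ^ s' ∂ν ≤ B) (hgA : ∫⁻ x, g x ^ (s / p) ∂ν ≤ A * T ^ (s / p)) :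
    ∫⁻ x, w x * max T (g x) ^ (1 / p) ∂ν ≤
      B ^ (1 / s') * (1 + A) ^ (1 / s) * T ^ (1 / p) := by
  have hs₀ := hs.symm.pos
  have hs'₀ := hs.pos
  have hmax : ∫⁻ x, (max T (g x) ^ (1 / p)) ^ s ∂ν ≤ (1 + A) * T ^ (s / p) := by
    calc ∫⁻ x, (max T (g x) ^ (1 / p)) ^ s ∂ν ≤ ∫⁻ x, T ^ (s / p) + g x ^ (s / p) ∂ν := by
          refine lintegral_mono fun x => ?_
          rw [← ENNReal.rpow_mul, one_div_mul_eq_div,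
            (ENNReal.monotone_rpow_of_nonneg (by positivity)).map_max]
          exact max_le_add_of_nonneg zero_le zero_le
      _ = T ^ (s / p) + ∫⁻ x, g x ^ (s / p) ∂ν := by
          rw [lintegral_add_left measurable_const, lintegral_const, measure_univ, mul_one]
      _ ≤ (1 + A) * T ^ (s / p) := by
          rw [add_mul, one_mul]
          gcongr
  calc ∫⁻ x, w x * max T (g x) ^ (1 / p) ∂ν
      ≤ (∫⁻ x, w x ^ s' ∂ν) ^ (1 / s') * (∫⁻ x, (max T (g x) ^ (1 / p)) ^ s ∂ν) ^ (1 / s) :=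
        ENNReal.lintegral_mul_le_Lp_mul_Lq ν hs hw
          ((aemeasurable_const.max hg).pow_const _)
    _ ≤ B ^ (1 / s') * ((1 + A) * T ^ (s / p)) ^ (1 / s) := by gcongr
    _ = B ^ (1 / s') * (1 + A) ^ (1 / s) * T ^ (1 / p) := by
        rw [ENNReal.mul_rpow_of_nonneg _ _ (by positivity), ← ENNReal.rpow_mul, mul_assoc]
        congr 3
        field_simp

end Probability

theorem abs_sub_le_inv_mul_exp_mul_exp {ε : ℝ} (hε : 0 < ε) (u v m : ℝ) :
    |u - v| ≤ ε⁻¹ * (Real.exp (ε * |u - m|) * Real.exp (ε * |v - m|)) := by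
  rw [← Real.exp_add, ← mul_add, inv_mul_eq_div, le_div_iff₀' hε]
  calc ε * |u - v| ≤ ε * (|u - m| + |v - m|) := by
        gcongr
        rw [abs_sub_comm v m]
        exact abs_sub_le u m v
    _ ≤ Real.exp (ε * (|u - m| + |v - m|)) :=
        (le_add_of_nonneg_right zero_le_one).trans (Real.add_one_le_exp _)

variable {φ ψ : RSp n → ℝ≥0 → ℝ≥0∞} {a p k K ε t : ℝ} {b f h : RSp n → ℝ} {g : RSp n → ℝ≥0∞}
  {c : ℝ≥0} {x : RSp n} {Q : Cube n}

/-- A function `g` that dominates both the modular density `φ(·,|f|)` and the error term `h`, with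
integral at most `c⁻¹`. It takes the place of the modular density in all averages. -/
structure IsDensityMajorant (φ : RSp n → ℝ≥0 → ℝ≥0∞) (f h : RSp n → ℝ) (c : ℝ≥0)
    (g : RSp n → ℝ≥0∞) : Prop where
  measurable : Measurable g
  phi_lt : ∀ᵐ y, φ y ‖f y‖₊ < g y
  ofReal_le : ∀ y, ENNReal.ofReal (h y) ≤ g y
  mul_lintegral_le_one : c * ∫⁻ y, g y ≤ 1

theorem IsDensityMajorant.lintegral_ne_top (hg : IsDensityMajorant φ f h c g) (hc : c ≠ 0) :
    ∫⁻ y, g y ≠ ∞ := fun hg_top => by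
  simpa [hg_top, ENNReal.mul_top, hc] using hg.mul_lintegral_le_one

theorem IsWeakPhi.exists_isDensityMajorant (hφ : IsWeakPhi univ φ) (hh : Measurable h)
    (hh₀ : ∀ y, 0 < h y) (hf : AEMeasurable f) (hf₁ : ∫⁻ y, φ y ‖f y‖₊ ≤ 1)
    (hc : c * (1 + ∫⁻ y, ENNReal.ofReal (h y)) ≤ 1) : ∃ g, IsDensityMajorant φ f h c g := by
  have hφf : AEMeasurable fun y => φ y ‖f y‖₊ := by
    have hφf' := hφ.meas _ hf.measurable_mk.nnnorm
    rw [Measure.restrict_univ] at hφf'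
    exact hφf'.congr (hf.ae_eq_mk.mono fun y hy => by simp only [hy])
  refine ⟨fun y => hφf.mk _ y + ENNReal.ofReal (h y),
    hφf.measurable_mk.add hh.ennreal_ofReal, ?_, fun y => le_add_self, ?_⟩
  · filter_upwards [hφf.ae_eq_mk, ae_lt_top' hφf (ne_top_of_le_ne_top ENNReal.one_ne_top hf₁)]
      with y hy hy_top
    rw [← hy]
    exact ENNReal.lt_add_right hy_top.ne (ENNReal.ofReal_pos.2 (hh₀ y)).ne'
  · rw [lintegral_add_left hφf.measurable_mk, ← lintegral_congr_ae hφf.ae_eq_mk]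
    exact (mul_le_mul_right (add_le_add_left hf₁ _) _).trans hc

theorem ScaledInvLE.ae_enorm_mul_enorm_le (hQ : ScaledInvLE φ ψ a (1 / p) k K h x Q)
    (hφ : IsWeakPhi univ φ) (hε : 0 < ε) (ht : 0 < t) (htQ : ENNReal.ofReal t ≤ (volume Q.set)⁻¹)
    (hg : IsDensityMajorant φ f h c g) (hc : c ≠ 0) (m : ℝ) :
    ∀ᵐ y ∂volume.restrict Q.set, ‖b x - b y‖ₑ * ‖f y‖ₑ ≤
      ENNReal.ofReal (ε⁻¹ * K * t ^ (a - 1 / p) *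
        realInv ψ x (max (Real.exp (ε * |b x - m|) ^ k * t) (h x))) *
          (eexp (ε * |b y - m|) * max (ENNReal.ofReal t) (g y) ^ (1 / p)) := by
  filter_upwards [hQ, ae_restrict_of_ae hg.phi_lt, ae_restrict_of_ae
    (ae_lt_top hg.measurable (hg.lintegral_ne_top hc))] with y hy hfy hgy
  set Ψ := realInv ψ x (max (Real.exp (ε * |b x - m|) ^ k * t) (h x))
  set σ := max t (g y).toReal
  have hσ : 0 < σ := lt_max_of_lt_left ht
  have hσg : ENNReal.ofReal σ = max (ENNReal.ofReal t) (g y) := by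
    rw [ENNReal.ofReal_max, ENNReal.ofReal_toReal hgy.ne]
  have hgσ : g y ≤ ENNReal.ofReal σ := hσg ▸ le_max_right _ _
  have hf : ‖f y‖ ≤ realInv φ y σ := hφ.le_realInv (hfy.trans_le hgσ)
  have hl := hy σ t (Real.exp (ε * |b x - m|)) ht htQ (le_max_left _ _)
    ((ENNReal.ofReal_le_ofReal_iff hσ.le).1 ((hg.ofReal_le y).trans hgσ))
    (Real.one_le_exp (by positivity))
  have hreal : |b x - b y| * ‖f y‖ ≤
      ε⁻¹ * K * t ^ (a - 1 / p) * Ψ * (Real.exp (ε * |b y - m|) * σ ^ (1 / p)) := by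
    calc |b x - b y| * ‖f y‖ ≤ ε⁻¹ * (Real.exp (ε * |b x - m|) * Real.exp (ε * |b y - m|)) *
          realInv φ y σ := by
          gcongr
          exact abs_sub_le_inv_mul_exp_mul_exp hε _ _ m
      _ = ε⁻¹ * Real.exp (ε * |b y - m|) * (Real.exp (ε * |b x - m|) * realInv φ y σ) := by ring
      _ ≤ ε⁻¹ * Real.exp (ε * |b y - m|) * (K * (t ^ a * (σ / t) ^ (1 / p)) * Ψ) := by gcongr
      _ = ε⁻¹ * K * t ^ (a - 1 / p) * Ψ * (Real.exp (ε * |b y - m|) * σ ^ (1 / p)) := by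
          rw [Real.div_rpow hσ.le ht.le, Real.rpow_sub ht]
          field_simp
  rw [← hσg, ENNReal.ofReal_rpow_of_pos hσ, eexp, ← ENNReal.ofReal_mul (Real.exp_pos _).le,
    ← ENNReal.ofReal_mul' (by positivity), ← ofReal_norm, ← ofReal_norm,
    ← ENNReal.ofReal_mul (norm_nonneg _)]
  exact ENNReal.ofReal_le_ofReal hreal

theorem ScaledInvLE.rpow_mul_setLIntegral_le (hQ : ScaledInvLE φ ψ a (1 / p) k K h x Q)
    (hφ : IsWeakPhi univ φ) (hε : 0 < ε) (hK : 0 ≤ K) (ha : 0 ≤ a) (ht : 0 < t)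
    (htQ : ENNReal.ofReal t ≤ (volume Q.set)⁻¹) (hg : IsDensityMajorant φ f h c g)
    (hc : c ≠ 0) {m : ℝ} {W : ℝ≥0∞}
    (hW : ⨍⁻ y in Q.set, eexp (ε * |b y - m|) * max (ENNReal.ofReal t) (g y) ^ (1 / p) ∂volume ≤
      W * ENNReal.ofReal t ^ (1 / p)) :
    volume Q.set ^ (a - 1) * ∫⁻ y in Q.set, ‖b x - b y‖ₑ * ‖f y‖ₑ ≤ ENNReal.ofReal (ε⁻¹ * K) * W *
      ENNReal.ofReal (realInv ψ x (max (Real.exp (ε * |b x - m|) ^ k * t) (h x))) := by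
  have hV₀ := Q.volume_set_ne_zero
  have hV := Q.volume_set_ne_top
  set V := volume Q.set
  set Ψ := realInv ψ x (max (Real.exp (ε * |b x - m|) ^ k * t) (h x))
  have hT₀ : ENNReal.ofReal t ≠ 0 := (ENNReal.ofReal_pos.2 ht).ne'
  have havg : ⨍⁻ y in Q.set, ‖b x - b y‖ₑ * ‖f y‖ₑ ∂volume ≤
      ENNReal.ofReal (ε⁻¹ * K * t ^ (a - 1 / p) * Ψ) * (W * ENNReal.ofReal t ^ (1 / p)) := by
    refine (lintegral_mono_ae (Measure.ae_smul_measure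
      (hQ.ae_enorm_mul_enorm_le hφ hε ht htQ hg hc m) _)).trans ?_
    rw [lintegral_const_mul' _ _ ENNReal.ofReal_ne_top, Measure.restrict_apply_univ,
      ← setLAverage_eq']
    gcongr
  have hVt : (V * ENNReal.ofReal t) ^ a ≤ 1 :=
    ENNReal.rpow_le_one ((mul_le_mul_right htQ V).trans (ENNReal.mul_inv_le_one V)) ha
  calc V ^ (a - 1) * ∫⁻ y in Q.set, ‖b x - b y‖ₑ * ‖f y‖ₑ
      = V ^ a * ⨍⁻ y in Q.set, ‖b x - b y‖ₑ * ‖f y‖ₑ ∂volume := by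
        rw [setLAverage_eq, ENNReal.rpow_sub _ _ hV₀ hV, ENNReal.rpow_one, ENNReal.div_eq_inv_mul,
          ENNReal.div_eq_inv_mul]
        ring
    _ ≤ V ^ a * (ENNReal.ofReal (ε⁻¹ * K * t ^ (a - 1 / p) * Ψ) *
          (W * ENNReal.ofReal t ^ (1 / p))) := by gcongr
    _ = ENNReal.ofReal (ε⁻¹ * K) * W * ENNReal.ofReal Ψ * (V * ENNReal.ofReal t) ^ a := by
        have hT : ENNReal.ofReal (t ^ (a - 1 / p)) * ENNReal.ofReal t ^ (1 / p) =
            ENNReal.ofReal t ^ a := by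
          rw [← ENNReal.ofReal_rpow_of_pos ht, ← ENNReal.rpow_add _ _ hT₀ ENNReal.ofReal_ne_top,
            sub_add_cancel]
        rw [ENNReal.ofReal_mul (by positivity), ENNReal.ofReal_mul (by positivity),
          ENNReal.mul_rpow_of_nonneg _ _ ha, ← hT]
        ring
    _ ≤ ENNReal.ofReal (ε⁻¹ * K) * W * ENNReal.ofReal Ψ := mul_le_of_le_one_right' hVt

theorem CubeExpOscLE.setLAverage_mul_max_rpow_le {ε₀ s s' : ℝ} {c T : ℝ≥0∞}
    (hb : CubeExpOscLE b ε₀) (hbm : Measurable b) (hp : 0 < p) (hs : s'.HolderConjugate s)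
    (hεs : ε * s' ≤ ε₀) (hg : AEMeasurable g) (hc₀ : c ≠ 0) (hc : c ≠ ∞) (Q : Cube n)
    (hT : T = c * (⨍⁻ y in Q.set, g y ^ (s / p) ∂volume) ^ (p / s)) :
    ⨍⁻ y in Q.set, eexp (ε * |b y - cubeAvg Q b|) * max T (g y) ^ (1 / p) ∂volume ≤
      4 ^ (1 / s') * (1 + c ^ (-(s / p))) ^ (1 / s) * T ^ (1 / p) := by
  have : NeZero (volume Q.set) := ⟨Q.volume_set_ne_zero⟩
  have hs₀ := hs.symm.pos
  have : IsProbabilityMeasure ((volume Q.set)⁻¹ • volume.restrict Q.set) :=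
    ⟨by simp [ENNReal.inv_mul_cancel Q.volume_set_ne_zero Q.volume_set_ne_top]⟩
  rw [setLAverage_eq']
  refine lintegral_mul_max_rpow_le hp hs (by fun_prop) (hg.restrict.smul_measure _) ?_ ?_
  · simp only [eexp_rpow]
    rw [← setLAverage_eq', setLAverage_eq]
    refine ENNReal.div_le_of_le_mul ((lintegral_mono fun y => eexp_le_eexp ?_).trans (hb Q))
    rw [mul_right_comm]
    gcongr
  · rw [← setLAverage_eq', hT, ENNReal.mul_rpow_of_nonneg _ _ (by positivity), ← mul_assoc,
      ← ENNReal.rpow_add _ _ hc₀ hc, neg_add_cancel, ENNReal.rpow_zero, one_mul,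
      ← ENNReal.rpow_mul, div_mul_div_cancel₀ hs₀.ne', div_self hp.ne', ENNReal.rpow_one]

theorem mul_setLAverage_rpow_rpow_le_inv_volume {q : ℝ} (hq₀ : 0 < q) (hq : q ≤ 1) {c : ℝ≥0∞}
    (hg : AEMeasurable g) (hcg : c * ∫⁻ y, g y ≤ 1) (Q : Cube n) :
    c * (⨍⁻ y in Q.set, g y ^ q ∂volume) ^ (1 / q) ≤ (volume Q.set)⁻¹ := by
  have : IsProbabilityMeasure ((volume Q.set)⁻¹ • volume.restrict Q.set) :=
    ⟨by simp [ENNReal.inv_mul_cancel Q.volume_set_ne_zero Q.volume_set_ne_top]⟩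
  calc c * (⨍⁻ y in Q.set, g y ^ q ∂volume) ^ (1 / q)
      ≤ c * ⨍⁻ y in Q.set, g y ∂volume := by
        rw [setLAverage_eq', setLAverage_eq']
        gcongr
        exact lintegral_rpow_rpow_le hq₀ hq (hg.restrict.smul_measure _)
    _ ≤ c * ((volume Q.set)⁻¹ * ∫⁻ y, g y) := by
        rw [setLAverage_eq, ENNReal.div_eq_inv_mul]
        gcongr
        exact Measure.restrict_le_self
    _ = (volume Q.set)⁻¹ * (c * ∫⁻ y, g y) := by ring
    _ ≤ (volume Q.set)⁻¹ := mul_le_of_le_one_right' hcg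

theorem ScaledInvLE.rpow_mul_setLIntegral_le_of_cubeExpOscLE {ε₀ s s' : ℝ}
    (hQ : ScaledInvLE φ ψ a (1 / p) k K h x Q) (hφ : IsWeakPhi univ φ) (hK : 0 ≤ K) (ha : 0 ≤ a)
    (hp : 0 < p) (hb : CubeExpOscLE b ε₀) (hbm : Measurable b) (hε : 0 < ε) (hεs : ε * s' ≤ ε₀)
    (hs : s'.HolderConjugate s) (hsp : s ≤ p)
    (hg : IsDensityMajorant φ f h c g) (hc : c ≠ 0) :
    volume Q.set ^ (a - 1) * ∫⁻ y in Q.set, ‖b x - b y‖ₑ * ‖f y‖ₑ ≤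
      ENNReal.ofReal (ε⁻¹ * K) * (4 ^ (1 / s') * (1 + (c : ℝ≥0∞) ^ (-(s / p))) ^ (1 / s)) *
        ENNReal.ofReal (realInv ψ x (max (Real.exp (ε * |b x - cubeAvg Q b|) ^ k *
          (c * (⨍⁻ y in Q.set, g y ^ (s / p) ∂volume) ^ (p / s)).toReal) (h x))) := by
  have hs₀ := hs.symm.pos
  have hTV := mul_setLAverage_rpow_rpow_le_inv_volume (q := s / p) (by positivity)
    ((div_le_one hp).2 hsp) hg.measurable.aemeasurable hg.mul_lintegral_le_one Q
  rw [one_div_div] at hTV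
  have hT₀ : c * (⨍⁻ y in Q.set, g y ^ (s / p) ∂volume) ^ (p / s) ≠ 0 := by
    have hgQ : ⨍⁻ y in Q.set, g y ^ (s / p) ∂volume ≠ 0 := by
      refine setLAverage_ne_zero Q.volume_set_ne_zero Q.volume_set_ne_top
        (hg.measurable.pow_const _).aemeasurable ?_
      filter_upwards [ae_restrict_of_ae hg.phi_lt] with y hy
      simp [ENNReal.rpow_eq_zero_iff_of_pos (div_pos hs₀ hp), (pos_of_gt hy).ne']
    exact mul_ne_zero (by simpa using hc)
      (by simp [ENNReal.rpow_eq_zero_iff_of_pos (div_pos hp hs₀), hgQ])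
  have hT := ENNReal.ofReal_toReal
    (ne_top_of_le_ne_top (ENNReal.inv_ne_top.2 Q.volume_set_ne_zero) hTV)
  refine hQ.rpow_mul_setLIntegral_le hφ hε hK ha
    (ENNReal.ofReal_pos.1 (hT.symm ▸ hT₀.bot_lt)) (hT.symm ▸ hTV) hg hc ?_
  rw [hT]
  exact hb.setLAverage_mul_max_rpow_le hbm hp hs hεs hg.measurable.aemeasurable (by simpa using hc)
    ENNReal.coe_ne_top Q rfl

end CubeEstimate

/-! ### From the modular to the norm -/

section NormBound

variable {φ ψ : RSp n → ℝ≥0 → ℝ≥0∞} {α p r : ℝ} {b f h : RSp n → ℝ} {g : RSp n → ℝ≥0∞}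
  {x : RSp n}

theorem max_exp_rpow_mul_toReal_le {ε δ k P A H : ℝ} {c v S : ℝ≥0∞} (hP : 0 ≤ P)
    (hδ : δ * P = ε * k) (hS_top : S ≠ ∞) (hS : c * (eexp (δ * A) * v) ^ P ≤ S)
    (hH : ENNReal.ofReal H ≤ S) :
    max (Real.exp (ε * A) ^ k * (c * v ^ P).toReal) H ≤ S.toReal := by
  refine max_le ((ENNReal.ofReal_le_iff_le_toReal hS_top).1 ?_)
    ((ENNReal.ofReal_le_iff_le_toReal hS_top).1 hH)
  calc ENNReal.ofReal (Real.exp (ε * A) ^ k * (c * v ^ P).toReal)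
      = eexp (ε * A) ^ k * ENNReal.ofReal (c * v ^ P).toReal := by
        rw [ENNReal.ofReal_mul (by positivity), eexp,
          ENNReal.ofReal_rpow_of_pos (Real.exp_pos _)]
    _ ≤ eexp (δ * A) ^ P * (c * v ^ P) := by
        rw [eexp_rpow, eexp_rpow, mul_right_comm, mul_right_comm δ, hδ]
        exact mul_le_mul_right ENNReal.ofReal_toReal_le _
    _ = c * (eexp (δ * A) * v) ^ P := by
        rw [ENNReal.mul_rpow_of_nonneg _ _ hP]
        ring
    _ ≤ S := hS

theorem CubeExpOscLE.fracMaximalComm_le {ε₀ ε δ s s' k K : ℝ} {c : ℝ≥0} {S : ℝ≥0∞}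
    (hb : CubeExpOscLE b ε₀) (hbm : Measurable b) (hφ : IsWeakPhi univ φ) (hψ : IsWeakPhi univ ψ)
    (hx : ∀ i, x ∈ (ratCube i).set → ScaledInvLE φ ψ (α / n) (1 / p) k K h x (ratCube i))
    (hK : 0 ≤ K) (hα₀ : 0 ≤ α / n) (hα : α / n ≤ 1) (hp : 0 < p) (hε : 0 < ε) (hεs : ε * s' ≤ ε₀)
    (hs : s'.HolderConjugate s) (hsp : s ≤ p) (hg : IsDensityMajorant φ f h c g) (hc : c ≠ 0)
    (hδ : δ * (p / s) = ε * k) (hS_top : S ≠ ∞) (hhS : ENNReal.ofReal (h x) ≤ S)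
    (hS : ∀ i, x ∈ (ratCube i).set → c * (eexp (δ * |b x - cubeAvg (ratCube i) b|) *
      ⨍⁻ y in (ratCube i).set, g y ^ (s / p) ∂volume) ^ (p / s) ≤ S) :
    fracMaximalComm α b f x ≤ (2 ^ n) ^ (1 - α / n) * (ENNReal.ofReal (ε⁻¹ * K) *
      (4 ^ (1 / s') * (1 + (c : ℝ≥0∞) ^ (-(s / p))) ^ (1 / s)) *
        ENNReal.ofReal (realInv ψ x S.toReal)) := by
  refine fracMaximalComm_le_of_forall_ratCube hα fun i hi =>
    ((hx i hi).rpow_mul_setLIntegral_le_of_cubeExpOscLE hφ hK hα₀ hp hb hbm hε hεs hs hsp hg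
      hc).trans ?_
  gcongr
  exact hψ.realInv_mono x
    (max_exp_rpow_mul_toReal_le (div_pos hp hs.symm.pos).le hδ hS_top (hS i hi) hhS)

/-- `F` is dominated by `κ ψ⁻¹(·,S)` for some `S` whose integral is at most `R`. This
expresses a modular bound for `F` without evaluating `ψ` at `F`, which may take the value `∞`. -/
def HasInvMajorant (ψ : RSp n → ℝ≥0 → ℝ≥0∞) (κ R : ℝ≥0) (F : RSp n → ℝ≥0∞) : Prop :=
  ∃ S : RSp n → ℝ≥0∞, ∫⁻ x, S x ≤ R ∧
    ∀ᵐ x, S x ≠ ∞ ∧ F x ≤ κ * ENNReal.ofReal (realInv ψ x (S x).toReal)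

theorem CubeExpOscLE.hasInvMajorant_fracMaximalComm {ε₀ ε δ s s' k K : ℝ} {c CU I κ : ℝ≥0}
    {U : RSp n → ℝ≥0∞} (hb : CubeExpOscLE b ε₀) (hbm : Measurable b) (hφ : IsWeakPhi univ φ)
    (hψ : IsWeakPhi univ ψ) (hscaled : ∀ᵐ x, ∀ i, x ∈ (ratCube i).set →
      ScaledInvLE φ ψ (α / n) (1 / p) k K h x (ratCube i))
    (hK : 0 ≤ K) (hα₀ : 0 ≤ α / n) (hα : α / n ≤ 1) (hp : 0 < p) (hε : 0 < ε) (hεs : ε * s' ≤ ε₀)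
    (hs : s'.HolderConjugate s) (hsp : s ≤ p) (hg : IsDensityMajorant φ f h c g) (hc : c ≠ 0)
    (hδ : δ * (p / s) = ε * k) (hh : Measurable h) (hI : ∫⁻ y, ENNReal.ofReal (h y) ≤ I)
    (hU : Measurable U) (hUg : ∫⁻ x, U x ^ (p / s) ≤ CU * ∫⁻ x, g x)
    (hUQ : ∀ i, ∀ x ∈ (ratCube i).set, eexp (δ * |b x - cubeAvg (ratCube i) b|) *
      ⨍⁻ y in (ratCube i).set, g y ^ (s / p) ∂volume ≤ U x)
    (hκ : (2 ^ n) ^ (1 - α / n) * (ENNReal.ofReal (ε⁻¹ * K) *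
      (4 ^ (1 / s') * (1 + (c : ℝ≥0∞) ^ (-(s / p))) ^ (1 / s))) ≤ κ) :
    HasInvMajorant ψ κ (CU + I) (fracMaximalComm α b f) := by
  have hP : 0 < p / s := div_pos hp hs.symm.pos
  have hU_top : ∀ᵐ x, U x ^ (p / s) < ∞ := ae_lt_top (hU.pow_const _) <|
    ne_top_of_le_ne_top (ENNReal.mul_ne_top ENNReal.coe_ne_top (hg.lintegral_ne_top hc)) hUg
  refine ⟨fun x => c * U x ^ (p / s) + ENNReal.ofReal (h x), ?_, ?_⟩
  · rw [lintegral_add_right _ hh.ennreal_ofReal, lintegral_const_mul' _ _ ENNReal.coe_ne_top]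
    calc c * (∫⁻ x, U x ^ (p / s)) + ∫⁻ x, ENNReal.ofReal (h x)
        ≤ c * (CU * ∫⁻ x, g x) + I := by gcongr
      _ = CU * (c * ∫⁻ x, g x) + I := by ring
      _ ≤ CU + I := by
          gcongr
          exact mul_le_of_le_one_right' hg.mul_lintegral_le_one
  · filter_upwards [hU_top, hscaled] with x hUx hx
    have hS_top : c * U x ^ (p / s) + ENNReal.ofReal (h x) ≠ ∞ := by finiteness
    refine ⟨hS_top, (hb.fracMaximalComm_le hbm hφ hψ hx hK hα₀ hα hp hε hεs hs hsp hg hc hδ hS_top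
      le_add_self fun i hi => le_add_right ?_).trans ?_⟩
    · gcongr
      exact hUQ i x hi
    · rw [← mul_assoc]
      gcongr

theorem exists_holderConjugate_and_exponents {k ε₀ : ℝ} (hp : 1 < p) (hk : 0 < k) (hε₀ : 0 < ε₀) :
    ∃ s s' ε δ : ℝ, s'.HolderConjugate s ∧ s < p ∧ 0 < ε ∧ ε * s' ≤ ε₀ ∧ δ * (p / s) = ε * k ∧
      ε * k ≤ ε₀ := by
  have hs : 1 < (1 + p) / 2 := by linarith
  have hss' := (Real.HolderConjugate.conjExponent hs).symm
  set s := (1 + p) / 2 with hs_def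
  have : 0 < s := one_pos.trans hs
  have hs'₀ : 0 < s.conjExponent := hss'.pos
  have hle : ∀ v ≤ k + s.conjExponent, ε₀ / (k + s.conjExponent) * v ≤ ε₀ := fun v hv => by
    rw [div_mul_eq_mul_div, div_le_iff₀ (by positivity)]
    gcongr
  refine ⟨s, s.conjExponent, ε₀ / (k + s.conjExponent), ε₀ / (k + s.conjExponent) * k / (p / s),
    hss', by linarith, by positivity, hle _ (by linarith), ?_, hle _ (by linarith)⟩
  exact div_mul_cancel₀ _ (by positivity)

theorem FracInvRel.exists_hasInvMajorant_of_measurable (h : FracInvRel α φ ψ)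
    (hφ : IsWeakPhi univ φ) (hψ : IsWeakPhi univ ψ) (hα : 0 ≤ α) (hp : 1 < p) (hαr : α / n < r)
    (hrp : r ≤ 1 / p) (h₀ : A0 univ φ) (h₁ : A1 φ) (h₂ : A2 φ) (hinc : AInc p univ φ)
    (hdec : ADec (1 / r) univ φ) (hb : IsBMO b) (hbm : Measurable b) :
    ∃ κ R : ℝ≥0, ∀ f, AEMeasurable f → ∫⁻ y, φ y ‖f y‖₊ ≤ 1 →
      HasInvMajorant ψ κ R (fracMaximalComm α b f) := by
  have hα₀ : 0 ≤ α / n := by positivity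
  have hα₁ : α / n ≤ 1 :=
    (hαr.trans_le (hrp.trans ((div_le_one (by positivity)).2 hp.le))).le
  obtain ⟨K, hK, d, hd, hd₀, hd_top, hscaled⟩ := h.exists_scaledInvLE hφ hψ (by positivity)
    (hα₀.trans_lt hαr) hαr h₀ h₁ h₂ hinc hdec ratCube
  obtain ⟨ε₀, hε₀, hexp⟩ := hb.exists_cubeExpOscLE hbm
  have hk : 0 < 1 / (r - α / n) := one_div_pos.2 (sub_pos.2 hαr)
  obtain ⟨s, s', ε, δ, hs, hsp, hε, hεs, hδ, hεk⟩ :=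
    exists_holderConjugate_and_exponents hp hk hε₀
  have hs₀ := hs.symm.pos
  obtain ⟨CU, hCU⟩ := hexp.exists_majorant hb hbm ((one_lt_div hs₀).2 hsp)
    (by rwa [hδ, abs_of_pos (by positivity)]) ratCube
  lift ∫⁻ y, ENNReal.ofReal (d y) to ℝ≥0 using hd_top with I hI
  set c : ℝ≥0 := (1 + I)⁻¹
  have hc : c ≠ 0 := by positivity
  have hc_top : (1 + (c : ℝ≥0∞) ^ (-(s / p))) ≠ ∞ := by
    simp [ENNReal.rpow_eq_top_iff, hc]
  lift (2 ^ n) ^ (1 - α / n) * (ENNReal.ofReal (ε⁻¹ * K) *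
      (4 ^ (1 / s') * (1 + (c : ℝ≥0∞) ^ (-(s / p))) ^ (1 / s))) to ℝ≥0 using (by
        have := hs.pos
        have : 0 ≤ 1 - α / n := sub_nonneg.2 hα₁
        finiteness) with κ hκ
  refine ⟨κ, CU + I, fun f hf hf₁ => ?_⟩
  obtain ⟨g, hg⟩ := hφ.exists_isDensityMajorant (c := c) hd hd₀ hf hf₁ (by
    rw [← hI, ← ENNReal.coe_one, ← ENNReal.coe_add, ← ENNReal.coe_mul,
      inv_mul_cancel₀ (by positivity)])
  obtain ⟨U, hU, hUg, hUQ⟩ := hCU (hg.measurable.pow_const (s / p))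
  simp only [← ENNReal.rpow_mul, div_mul_div_cancel₀ (zero_lt_one.trans hp).ne', div_self hs₀.ne',
    ENNReal.rpow_one] at hUg
  exact hexp.hasInvMajorant_fracMaximalComm hbm hφ hψ hscaled hK hα₀ hα₁ (by positivity) hε hεs hs
    hsp.le hg hc hδ hd hI.ge hU hUg hUQ hκ.ge

theorem HasInvMajorant.exists_lintegral_le_one (hψ : IsWeakPhi univ ψ) (κ R : ℝ≥0) :
    ∃ C : ℝ≥0, 0 < C ∧ ∀ (F : RSp n → ℝ≥0∞) (u : RSp n → ℝ), HasInvMajorant ψ κ R F →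
      (∀ᵐ x, ‖u x‖ₑ ≤ F x) → ∫⁻ x, ψ x (‖u x‖₊ / C) ≤ 1 := by
  obtain ⟨L, -, hL⟩ := hψ.aInc_one.exists_rpow_mul_le hψ one_pos
  simp only [ENNReal.rpow_one] at hL
  set ρ : ℝ≥0 := max 1 (L * R)
  have hρ : 0 < ρ := lt_max_of_lt_left one_pos
  refine ⟨(κ + 1) * ρ, by positivity, fun F u ⟨S, hSR, hS⟩ hu => ?_⟩
  have hψS : ∀ᵐ x, ψ x (‖u x‖₊ / (κ + 1)) ≤ S x := by
    filter_upwards [hS, hu] with x ⟨hS_top, hFx⟩ hux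
    rcases eq_or_ne (u x) 0 with hu₀ | hu₀
    · simp [hu₀, hψ.zero x trivial]
    have hle : ‖u x‖ ≤ κ * realInv ψ x (S x).toReal := by
      have hle' := hux.trans hFx
      rw [← ofReal_norm, ← ENNReal.ofReal_coe_nnreal, ← ENNReal.ofReal_mul κ.coe_nonneg,
        ENNReal.ofReal_le_ofReal_iff'] at hle'
      exact hle'.resolve_right (norm_pos_iff.2 hu₀).not_ge
    have hlt : ((‖u x‖₊ / (κ + 1) : ℝ≥0) : ℝ) < realInv ψ x (S x).toReal := by
      have hu_pos : 0 < ‖u x‖ := norm_pos_iff.2 hu₀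
      push_cast
      rw [div_lt_iff₀ (by positivity)]
      have := pos_of_mul_pos_right (hu_pos.trans_le hle) κ.coe_nonneg
      linarith
    exact ENNReal.ofReal_toReal hS_top ▸ (hψ.lt_of_lt_realInv hlt).le
  have hint : ρ * ∫⁻ x, ψ x (‖u x‖₊ / ((κ + 1) * ρ)) ≤ ρ * 1 := by
    calc (ρ : ℝ≥0∞) * ∫⁻ x, ψ x (‖u x‖₊ / ((κ + 1) * ρ))
        = ∫⁻ x, ρ * ψ x (‖u x‖₊ / ((κ + 1) * ρ)) :=
          (lintegral_const_mul' _ _ ENNReal.coe_ne_top).symm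
      _ ≤ ∫⁻ x, L * S x := by
          refine lintegral_mono_ae (hψS.mono fun x hx => ?_)
          refine (hL x _ ρ (le_max_left _ _)).trans (mul_le_mul_right ?_ _)
          rwa [← div_div, mul_div_cancel₀ _ hρ.ne']
      _ ≤ L * R := by
          rw [lintegral_const_mul' _ _ ENNReal.coe_ne_top]
          gcongr
      _ ≤ ρ * 1 := by
          rw [mul_one, ← ENNReal.coe_mul]
          exact ENNReal.coe_le_coe.2 (le_max_right _ _)
  exact (ENNReal.mul_le_mul_iff_right (by simpa using hρ.ne') ENNReal.coe_ne_top).1 hint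

theorem fracMaximalComm_const_mul (α l : ℝ) (b f : RSp n → ℝ) (x : RSp n) :
    fracMaximalComm α b (fun y => l * f y) x = ‖l‖ₑ * fracMaximalComm α b f x := by
  have hl : ∀ y, ‖b x - b y‖ₑ * ‖l * f y‖ₑ = ‖l‖ₑ * (‖b x - b y‖ₑ * ‖f y‖ₑ) := fun y => by
    rw [enorm_mul, mul_left_comm]
  simp only [fracMaximalComm, ENNReal.mul_iSup, ← enorm_eq_nnnorm, hl,
    lintegral_const_mul' _ _ enorm_ne_top, mul_left_comm]

theorem orliczNorm_le_mul_orliczNorm {Ω : Set (RSp n)} {C : ℝ≥0} (hC : 0 < C)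
    {u f : RSp n → ℝ} (h : ∀ l : ℝ≥0, 0 < l → ∫⁻ x in Ω, φ x (‖f x‖₊ / l) ≤ 1 →
      ∫⁻ x in Ω, ψ x (‖u x‖₊ / (C * l)) ≤ 1) :
    orliczNorm ψ Ω u ≤ C * orliczNorm φ Ω f := by
  have hC₀ : (C : ℝ≥0∞) ≠ 0 := by simpa using hC.ne'
  rw [← ENNReal.div_le_iff' hC₀ ENNReal.coe_ne_top]
  refine le_sInf ?_
  rintro _ ⟨l, ⟨hl, hfl⟩, rfl⟩
  rw [ENNReal.div_le_iff' hC₀ ENNReal.coe_ne_top]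
  exact sInf_le ⟨C * l, ⟨by positivity, h l hl hfl⟩, ENNReal.coe_mul _ _⟩

theorem fracMaximalComm_congr_ae (α : ℝ) {b b' : RSp n → ℝ} (h : b =ᵐ[volume] b')
    (f : RSp n → ℝ) : fracMaximalComm α b f =ᵐ[volume] fracMaximalComm α b' f := by
  filter_upwards [h] with x hx
  simp only [fracMaximalComm, hx]
  refine iSup_congr fun Q => iSup_congr fun _ => congrArg _ (lintegral_congr_ae ?_)
  filter_upwards [ae_restrict_of_ae h] with y hy
  rw [hy]

theorem FracInvRel.exists_hasInvMajorant (h : FracInvRel α φ ψ)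
    (hφ : IsWeakPhi univ φ) (hψ : IsWeakPhi univ ψ) (hα : 0 ≤ α) (hp : 1 < p) (hαr : α / n < r)
    (hrp : r ≤ 1 / p) (h₀ : A0 univ φ) (h₁ : A1 φ) (h₂ : A2 φ) (hinc : AInc p univ φ)
    (hdec : ADec (1 / r) univ φ) (hb : IsBMO b) :
    ∃ κ R : ℝ≥0, ∀ f, AEMeasurable f → ∫⁻ y, φ y ‖f y‖₊ ≤ 1 →
      HasInvMajorant ψ κ R (fracMaximalComm α b f) := by
  have hbm : AEMeasurable b := hb.1.aestronglyMeasurable.aemeasurable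
  obtain ⟨κ, R, H⟩ := h.exists_hasInvMajorant_of_measurable hφ hψ hα hp hαr hrp h₀ h₁ h₂ hinc hdec
    (hb.congr_ae hbm.ae_eq_mk) hbm.measurable_mk
  refine ⟨κ, R, fun f hf hf₁ => ?_⟩
  obtain ⟨S, hSR, hS⟩ := H f hf hf₁
  refine ⟨S, hSR, ?_⟩
  filter_upwards [hS, fracMaximalComm_congr_ae α hbm.ae_eq_mk f] with x hx hbx
  rwa [hbx]

theorem FracInvRel.exists_orliczNorm_le (h : FracInvRel α φ ψ)
    (hφ : IsWeakPhi univ φ) (hψ : IsWeakPhi univ ψ) (hα : 0 ≤ α) (hp : 1 < p) (hαr : α / n < r)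
    (hrp : r ≤ 1 / p) (h₀ : A0 univ φ) (h₁ : A1 φ) (h₂ : A2 φ) (hinc : AInc p univ φ)
    (hdec : ADec (1 / r) univ φ) (hb : IsBMO b) :
    ∃ C : ℝ≥0, ∀ f, AEMeasurable f → ∀ u : RSp n → ℝ,
      (∀ᵐ x, ‖u x‖ₑ ≤ fracMaximalComm α b f x) →
        orliczNorm ψ univ u ≤ C * orliczNorm φ univ f := by
  obtain ⟨κ, R, hmod⟩ :=
    h.exists_hasInvMajorant hφ hψ hα hp hαr hrp h₀ h₁ h₂ hinc hdec hb
  obtain ⟨C, hC, hψC⟩ := HasInvMajorant.exists_lintegral_le_one hψ κ R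
  refine ⟨C, fun f hf u hu => orliczNorm_le_mul_orliczNorm hC fun l _ hfl => ?_⟩
  have hdiv : ∀ z : ℝ, ‖(l : ℝ)⁻¹ * z‖₊ = ‖z‖₊ / l := fun z => by
    rw [nnnorm_mul, nnnorm_inv, NNReal.nnnorm_eq, inv_mul_eq_div]
  rw [Measure.restrict_univ] at hfl ⊢
  have hul : ∀ᵐ x, ‖(l : ℝ)⁻¹ * u x‖ₑ ≤ fracMaximalComm α b (fun y => (l : ℝ)⁻¹ * f y) x := by
    filter_upwards [hu] with x hx
    rw [fracMaximalComm_const_mul, enorm_mul]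
    gcongr
  have hone := hψC _ _ (hmod _ (hf.const_mul _) (by simpa only [hdiv] using hfl)) hul
  simpa only [hdiv, div_div, mul_comm C l] using hone

end NormBound

theorem statement14_general {α : ℝ} {b : RSp n → ℝ} (hb : AEMeasurable b) (hb₀ : ∀ x, 0 ≤ b x) :
    (∀ f : RSp n → ℝ, AEMeasurable f → ∀ x,
      ENNReal.ofReal |fracMaximalCommutator α b f x| ≤ fracMaximalComm α b f x) ∧
    (0 ≤ α → ∀ p r : ℝ, ∀ φ ψ : RSp n → ℝ≥0 → ℝ≥0∞, 1 < p →
      IsWeakPhi univ φ → IsWeakPhi univ ψ → FracInvRel α φ ψ → α < n * r → r ≤ 1 / p →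
      A0 univ φ → A1 φ → A2 φ → AInc p univ φ → ADec (1 / r) univ φ → IsBMO b →
      ∃ C : ℝ≥0, ∀ f : RSp n → ℝ, AEMeasurable f →
        orliczNorm ψ univ (fracMaximalCommutator α b f) ≤ C * orliczNorm φ univ f) := by
  have hle : ∀ f : RSp n → ℝ, AEMeasurable f → ∀ x,
      ENNReal.ofReal |fracMaximalCommutator α b f x| ≤ fracMaximalComm α b f x :=
    fun f hf x => ofReal_abs_fracMaximalCommutator_le α hb hf (hb₀ x)
  refine ⟨hle, fun hα p r φ ψ hp hφ hψ hrel hαr hrp h₀ h₁ h₂ hinc hdec hbmo => ?_⟩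
  have hn : (0 : ℝ) < n := n.cast_nonneg.lt_of_ne' fun h => hα.not_gt (by simpa [h] using hαr)
  obtain ⟨C, hC⟩ := hrel.exists_orliczNorm_le hφ hψ hα hp ((div_lt_iff₀' hn).2 hαr) hrp h₀ h₁ h₂
    hinc hdec hbmo
  exact ⟨C, fun f hf => hC f hf _ <| ae_of_all _ fun x => by
    simpa only [Real.enorm_eq_ofReal_abs] using hle f hf x⟩

/-- for non-negative `b`, the pointwise bound
`|[M_α,b]f(x)| ≤ M_{b,α}f(x)`, and consequently boundedness of `[M_α,b]` from
`L^φ(ℝⁿ)` to `L^ψ(ℝⁿ)` under the fractional assumptions when `0 ≤ b ∈ BMO(ℝⁿ)`. -/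
theorem statement14 {n : ℕ} (hn : 0 < n) (α : ℝ) (hα0 : 0 < α) (hαn : α < n)
    (b : RSp n → ℝ) (hb : LocallyIntegrable b volume) (hbpos : ∀ x, 0 ≤ b x) :
    (∀ f : RSp n → ℝ, Measurable f → ∀ x : RSp n,
      ENNReal.ofReal |fracMaximalCommutator α b f x| ≤ fracMaximalComm α b f x) ∧
    (∀ p q r : ℝ, ∀ φ ψ : RSp n → ℝ≥0 → ℝ≥0∞,
      1 < p → p ≤ q → α / (n : ℝ) = 1 / p - 1 / q →
      IsWeakPhi Set.univ φ → IsWeakPhi Set.univ ψ → FracInvRel α φ ψ →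
      α / (n : ℝ) < r → r ≤ 1 / p →
      A0 Set.univ φ → A1 φ → A2 φ →
      AInc p Set.univ φ → ADec (1 / r) Set.univ φ →
      IsBMO b →
      ∃ C : ℝ≥0, ∀ f : RSp n → ℝ, MemOrlicz φ Set.univ f →
        orliczNorm ψ Set.univ (fracMaximalCommutator α b f) ≤
          (C : ℝ≥0∞) * orliczNorm φ Set.univ f) := by
  obtain ⟨hle, hnorm⟩ := statement14_general (α := α) hb.aestronglyMeasurable.aemeasurable hbpos
  refine ⟨fun f hf => hle f hf.aemeasurable,
    fun p _ r φ ψ hp _ _ hφ hψ hrel hαr hrp h₀ h₁ h₂ hinc hdec hbmo => ?_⟩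
  obtain ⟨C, hC⟩ := hnorm hα0.le p r φ ψ hp hφ hψ hrel
    ((div_lt_iff₀' (by exact_mod_cast hn)).1 hαr) hrp h₀ h₁ h₂ hinc hdec hbmo
  exact ⟨C, fun f hf => hC f (by simpa only [Measure.restrict_univ] using hf.1)⟩
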